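/- Suppose r ∈ {0, 1, 2, …, 24} and l is a positive integer with 24 | r(l−1); if r is odd, suppose additionally that l is a perfect square. Then for every integer n, R(n; r, l) = R(r; r, l)·P_r((n−r)/24), where R(n; r, l) is defined as follows (with d = l/a throughout). If r is even: R(n; r, l) = ∑_{0<a|l} a^{r/2}·(−1)^{r(d−1)/4}·∑_{0<t|gcd(a,d), 24a | gcd(24a, n−rl)·t} μ(t)·(d/t)·P_r((nl/a²−r)/24). If r is odd: R(n; r, l) = ∑_{0<a|l, 24a | rad(gcd(a,d))·(n−rl)} (2·(−1)^{(r−1)/2} | d)·(rad_E(gcd(a,d)) | rad_O(gcd(a,d)))·(d·a^{r/2}/√(rad′(gcd(a,d))))·P_r((nl/a²−r)/24)·(rad(gcd(a,d))·(n−rl)/(24a) | rad_O(gcd(a,d)))·∏_{p | rad_E(gcd(a,d))}(p − 1 − p·((rad(gcd(a,d))·(n−rl)/(24a)) | p)²). -/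

import Mathlib

/-!
The proof runs through a Hecke-type operator acting on `η ^ r`. For a primitive matrix
`(a b; 0 d)` of determinant `l`, put
`heckeTerm = a ^ (r / 2) ζ ^ (3 r (d - 1)) (b | gcd (a, d)) ^ r ζ ^ (-r d b) η((a τ + b) / d) ^ r`
with `ζ = exp (2 π i / 24)`, and let `heckeSum` be the sum over `a d = l` and over the `b` modulo
`d` with `gcd (a, b, d) = 1`. The factors in front are chosen so that the sum transforms like
`η ^ r`.

* Transformation. The explicit multiplier of `η` for a matrix with odd lower left entry `c > 0`
  (`EtaF_all`), and the multiplier of `η ^ 8` for arbitrary `c > 0` (`EtaE_all`), follow from the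
  behaviour of `η` under `τ ↦ τ + 1` and `τ ↦ -1 / τ` by a Euclidean algorithm on the lower row.
  They cover all that is needed, because `24 ∣ r (l - 1)` forces the relevant `c ∣ l` to be odd
  unless `8 ∣ r`. By `heckeTerm_S`, the substitution `τ ↦ -1 / τ` sends the term of the matrix
  `(a₁, A a₂; 0, C a₂)` to that of `(a₂, -A⁻¹ a₁; 0, C a₁)`; for odd `r` the Jacobi symbols match
  by quadratic reciprocity, which is where `l` has to be a square. Hence `heckeSum` satisfies the
  same inversion formula as `η ^ r` (`heckeSum_S`).

* Constancy. The exponents in the Fourier expansion of `heckeSum` are the `(r + 24 m) / 24` with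
  `m ≥ 0` (`hasSum_heckeSum`; this uses `r ≤ 24`). Thus `heckeSum / η ^ r` is a modular function
  of level one, holomorphic also at the cusp, hence constant (`heckeSum_eq`). Comparing
  coefficients gives `totalCoef (r + 24 m) = totalCoef r * P m` (`totalCoef_eq`), where
  `totalCoef n` is the coefficient of `q ^ (n / 24)` in `heckeSum`.

* Evaluation. The coefficient is a sum over `a d = l` of twisted Ramanujan sums `expSum`, and it
  remains to see that it equals `R(n; r, l)` (`Rquantity_eq`). For even `r` the twist is trivial
  and Möbius inversion applies (`expSum_even`). For odd `r` the character `(· | gcd (a, d))` is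
  induced from the modulus `rad (gcd (a, d))`, and the sum factors into a Gauss sum modulo `rad_O`
  and a Ramanujan sum modulo `rad_E` (`expSum_odd_eq`).

* Sign of the Gauss sum. This comes from the previous steps as well: for `r = 1`, `l = p ^ 2` the
  relation `totalCoef_eq` at the exponents `1` and `p ^ 2`, with the coefficients of `η` supplied
  by Euler's pentagonal number theorem, is a linear equation for the Gauss sum modulo `p`
  (`gs_prime_aux`).
-/

set_option maxHeartbeats 1000000
set_option synthInstance.maxHeartbeats 200000

noncomputable section

open Complex UpperHalfPlane

namespace Paper

/-- `e2 z = e^{2πiz}`. -/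
def e2 (z : ℂ) : ℂ := Complex.exp (2 * Real.pi * Complex.I * z)

/-- `e^{2πix}` for rational `x` -/
def eQ (x : ℚ) : ℂ := e2 (x : ℂ)

open scoped Classical in
/-- Kronecker–Jacobi symbol at a prime (including `p = 2`) -/
def kronP (m : ℤ) (p : ℕ) : ℤ :=
  if p = 2 then (if 2 ∣ m then 0 else if m % 8 = 1 ∨ m % 8 = 7 then 1 else -1)
  else if hp : p.Prime then @legendreSym p ⟨hp⟩ m else 0

open scoped Classical in
/-- the Kronecker–Jacobi symbol `(m | n)`, extended to all integers `n` -/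
def kron (m n : ℤ) : ℤ :=
  if n = 0 then (if m = 1 ∨ m = -1 then 1 else 0)
  else (if n < 0 ∧ m < 0 then -1 else 1) *
    (n.natAbs.factorization.prod fun p e => kronP m p ^ e)

/-- product of primes appearing to an even power in `m` -/
def radE (m : ℕ) : ℕ := ∏ p ∈ m.primeFactors.filter (fun p => Even (m.factorization p)), p

/-- product of primes appearing to an odd power in `m` -/
def radO (m : ℕ) : ℕ := ∏ p ∈ m.primeFactors.filter (fun p => Odd (m.factorization p)), p

def rad (m : ℕ) : ℕ := radE m * radO m

def radP (m : ℕ) : ℕ := radE m ^ 2 * radO m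

def irad (m : ℕ) : ℕ := m / rad m

def iradP (m : ℕ) : ℕ := m / radP m

/-- the Dedekind eta function (as a total function on `ℂ`; the defining product
converges on the upper half plane) -/
def dedekindEta (z : ℂ) : ℂ := e2 (z / 24) * ∏' n : ℕ, (1 - e2 ((n + 1) * z))

/-- `P` records the Fourier coefficients of `η^r`:
`η^r(τ) = q^{r/24} ∑_{n ≥ 0} P(n) qⁿ`, with `P` vanishing off nonnegative integers. -/
def IsEtaPowerCoeffs (r : ℤ) (P : ℚ → ℂ) : Prop :=
  (∀ x : ℚ, (¬ ∃ n : ℕ, x = n) → P x = 0) ∧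
    ∀ τ : ℍ, HasSum (fun n : ℕ => P n * e2 (((r : ℂ) / 24 + n) * τ)) (dedekindEta τ ^ r)

end Paper

namespace Paper

/-- `R(n; r, l)` for even `r` -/
def Reven (P : ℚ → ℂ) (n r : ℤ) (l : ℕ) : ℂ :=
  ∑ a ∈ l.divisors,
    (a : ℂ) ^ (r / 2 : ℤ) * (-1 : ℂ) ^ (r * (((l / a : ℕ) : ℤ) - 1) / 4) *
      ∑ t ∈ ((Nat.gcd a (l / a)).divisors).filter
          (fun t => 24 * a ∣ Int.gcd ((24 * a : ℕ) : ℤ) (n - r * l) * t),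
        (ArithmeticFunction.moebius t : ℂ) * ((l / a : ℕ) : ℂ) / (t : ℂ) *
          P (((n : ℚ) * (l : ℚ) / (a : ℚ) ^ 2 - (r : ℚ)) / 24)

/-- `R(n; r, l)` for odd `r` -/
def Rodd (P : ℚ → ℂ) (n r : ℤ) (l : ℕ) : ℂ :=
  ∑ a ∈ l.divisors.filter
      (fun a => ((24 * a : ℕ) : ℤ) ∣ (rad (Nat.gcd a (l / a)) : ℤ) * (n - r * l)),
    (kron (2 * (((-1 : ℤˣ) ^ ((r - 1) / 2) : ℤˣ) : ℤ)) ((l / a : ℕ) : ℤ) : ℂ) *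
      (kron (radE (Nat.gcd a (l / a)) : ℤ) (radO (Nat.gcd a (l / a)) : ℤ) : ℂ) *
      (((l / a : ℕ) : ℂ) * (a : ℂ) ^ (((r : ℝ) / 2 : ℝ) : ℂ) /
        ((Real.sqrt (radP (Nat.gcd a (l / a))) : ℝ) : ℂ)) *
      P (((n : ℚ) * (l : ℚ) / (a : ℚ) ^ 2 - (r : ℚ)) / 24) *
      (kron ((rad (Nat.gcd a (l / a)) : ℤ) * (n - r * l) / (24 * a)) (radO (Nat.gcd a (l / a)) : ℤ) : ℂ) *
      ∏ p ∈ (radE (Nat.gcd a (l / a))).primeFactors,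
        ((p : ℂ) - 1 -
          (p : ℂ) * (kron ((rad (Nat.gcd a (l / a)) : ℤ) * (n - r * l) / (24 * a)) (p : ℤ) : ℂ) ^ 2)

open scoped Classical in
/-- `R(n; r, l)` -/
def Rquantity (P : ℚ → ℂ) (n r : ℤ) (l : ℕ) : ℂ :=
  if Even r then Reven P n r l else Rodd P n r l

end Paper

namespace Paper

/-! ### Roots of unity -/

/-- The root of unity `e^{2πin/24}`. -/
def ze (n : ℤ) : ℂ := e2 ((n : ℂ) / 24)

lemma e2_add (x y : ℂ) : e2 (x + y) = e2 x * e2 y := by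
  simp only [e2, ← Complex.exp_add]; ring_nf

lemma e2_ne_zero (x : ℂ) : e2 x ≠ 0 := Complex.exp_ne_zero _

lemma e2_int (n : ℤ) : e2 n = 1 := by
  simp only [e2]; rw [mul_comm]; exact Complex.exp_int_mul_two_pi_mul_I n

lemma e2_zero : e2 0 = 1 := by simp [e2]

lemma e2_nat_mul (n : ℕ) (x : ℂ) : e2 (n * x) = e2 x ^ n := by
  simp only [e2, ← Complex.exp_nat_mul]; ring_nf

lemma e2_add_int (x : ℂ) (n : ℤ) : e2 (x + n) = e2 x := by rw [e2_add, e2_int, mul_one]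

lemma norm_e2 (z : ℂ) : ‖e2 z‖ = Real.exp (-2 * Real.pi * z.im) := by
  rw [e2, Complex.norm_exp]; simp

/-- `e(x) = 1` only for integers `x`. -/
lemma e2_eq_one_iff (x : ℂ) : e2 x = 1 ↔ ∃ n : ℤ, x = n := by
  rw [e2, Complex.exp_eq_one_iff]
  have h : (2 * Real.pi * Complex.I : ℂ) ≠ 0 := Complex.two_pi_I_ne_zero
  constructor
  · rintro ⟨n, hn⟩
    refine ⟨n, mul_left_cancel₀ h ?_⟩
    rw [hn]; ring
  · rintro ⟨n, rfl⟩; exact ⟨n, by ring⟩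

lemma ze_add (m n : ℤ) : ze (m + n) = ze m * ze n := by
  simp only [ze, ← e2_add]; push_cast; ring_nf

lemma ze_zero : ze 0 = 1 := by simp [ze, e2_zero]

lemma ze_ne_zero (n : ℤ) : ze n ≠ 0 := e2_ne_zero _

lemma ze_eq_one {n : ℤ} (h : (24 : ℤ) ∣ n) : ze n = 1 := by
  obtain ⟨k, rfl⟩ := h
  rw [ze, show (((24 * k : ℤ) : ℂ) / 24) = (k : ℤ) by push_cast; field_simp, e2_int]

lemma ze_congr {m n : ℤ} (h : (24 : ℤ) ∣ m - n) : ze m = ze n := by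
  rw [show m = (m - n) + n by ring, ze_add, ze_eq_one h, one_mul]

lemma ze_pow (n : ℤ) (k : ℕ) : ze n ^ k = ze (k * n) := by
  simp only [ze, ← e2_nat_mul]; push_cast; ring_nf

lemma ze_twelve : ze 12 = -1 := by
  rw [ze, e2, show (2 * Real.pi * Complex.I * (((12 : ℤ) : ℂ) / 24)) = Real.pi * Complex.I by
    push_cast; ring, Complex.exp_pi_mul_I]

lemma ze_twelve_mul (k : ℕ) : ze (12 * k) = (-1) ^ k := by
  rw [← ze_twelve, ze_pow]; ring_nf

lemma ze_neg (n : ℤ) : ze (-n) = (ze n)⁻¹ := by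
  apply eq_inv_of_mul_eq_one_left; rw [← ze_add, neg_add_cancel, ze_zero]

lemma ze_six_mul (n : ℤ) : ze (6 * n) = Complex.I ^ n := by
  rw [ze, e2, show (2 * Real.pi * Complex.I * (((6 * n : ℤ) : ℂ) / 24)) =
    n * (Real.pi / 2 * Complex.I) by push_cast; ring, Complex.exp_int_mul,
    Complex.exp_pi_div_two_mul_I]

lemma ze_three_sq : ze 3 ^ 2 = Complex.I := by
  rw [ze_pow, show ((2 : ℕ) : ℤ) * 3 = 6 * 1 by norm_num, ze_six_mul, zpow_one]

lemma re_ze_three_mul (w : ℂ) : (w * ze 3).re = (w.re - w.im) * (√2 / 2) := by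
  have : ze 3 = ((√2 / 2 : ℝ) : ℂ) + ((√2 / 2 : ℝ) : ℂ) * Complex.I := by
    rw [ze, e2, show (2 * Real.pi * Complex.I * (((3 : ℤ) : ℂ) / 24)) =
      ((Real.pi / 4 : ℝ) : ℂ) * Complex.I by push_cast; ring, Complex.exp_mul_I,
      ← Complex.ofReal_cos, ← Complex.ofReal_sin, Real.cos_pi_div_four, Real.sin_pi_div_four]
  rw [this]; simp; ring

lemma re_ze_neg_three_mul (w : ℂ) : (w * ze (-3)).re = (w.re + w.im) * (√2 / 2) := by
  have : ze (-3) = ((√2 / 2 : ℝ) : ℂ) - ((√2 / 2 : ℝ) : ℂ) * Complex.I := by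
    rw [ze, e2, show (2 * Real.pi * Complex.I * (((-3 : ℤ) : ℂ) / 24)) =
      ((-(Real.pi / 4) : ℝ) : ℂ) * Complex.I by push_cast; ring, Complex.exp_mul_I,
      ← Complex.ofReal_cos, ← Complex.ofReal_sin, Real.cos_neg, Real.sin_neg,
      Real.cos_pi_div_four, Real.sin_pi_div_four]
    push_cast; ring
  rw [this]; simp; ring

/-! ### The principal square root on the right half-plane -/

lemma sqrt_sq' (z : ℂ) : Complex.sqrt z ^ 2 = z := by
  rw [Complex.sqrt, ← Complex.cpow_nat_mul]; simp

lemma sqrt_re_nonneg (z : ℂ) : 0 ≤ (Complex.sqrt z).re := by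
  rw [Complex.sqrt, Complex.cpow_inv_two_re]; positivity

lemma sqrt_cone {z : ℂ} (hz : 0 < z.re) : |(Complex.sqrt z).im| < (Complex.sqrt z).re := by
  have h := congrArg Complex.re (sqrt_sq' z)
  rw [sq, Complex.mul_re] at h
  have h0 := sqrt_re_nonneg z
  apply abs_lt_of_sq_lt_sq _ h0
  nlinarith

lemma eq_of_sq_eq_of_re_pos {u v : ℂ} (hu : 0 < u.re) (hv : 0 < v.re) (h : u ^ 2 = v ^ 2) :
    u = v := by
  rcases sq_eq_sq_iff_eq_or_eq_neg.mp h with h | h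
  · exact h
  · rw [h] at hu; simp at hu; linarith

lemma sqrt_mul_re_pos {x y : ℂ} (hx : 0 < x.re) (hy : 0 < y.re) :
    0 < (Complex.sqrt x * Complex.sqrt y).re := by
  have h1 := abs_lt.mp (sqrt_cone hx)
  have h2 := abs_lt.mp (sqrt_cone hy)
  rw [Complex.mul_re]; nlinarith

/-- The argument of `√x √y` has absolute value less than `π / 2`, which singles it out among the two
square roots of `x y`. -/
lemma sqrt_mul_sqrt_neg {x y z : ℂ} (hx : 0 < x.re) (hy : 0 < y.re) (hz : 0 < z.re)
    (h : x * y = -Complex.I * z) : Complex.sqrt x * Complex.sqrt y = Complex.sqrt z * ze (-3) := by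
  apply eq_of_sq_eq_of_re_pos (sqrt_mul_re_pos hx hy)
  · rw [re_ze_neg_three_mul]
    have h1 := abs_lt.mp (sqrt_cone hz)
    have : 0 < (Complex.sqrt z).re + (Complex.sqrt z).im := by linarith
    positivity
  · rw [mul_pow, mul_pow, sqrt_sq', sqrt_sq', sqrt_sq', ze_neg, inv_pow, ze_three_sq, h]
    simp; ring

lemma sqrt_mul_sqrt_pos {x y z : ℂ} (hx : 0 < x.re) (hy : 0 < y.re) (hz : 0 < z.re)
    (h : x * y = Complex.I * z) : Complex.sqrt x * Complex.sqrt y = Complex.sqrt z * ze 3 := by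
  apply eq_of_sq_eq_of_re_pos (sqrt_mul_re_pos hx hy)
  · rw [re_ze_three_mul]
    have h1 := abs_lt.mp (sqrt_cone hz)
    have : 0 < (Complex.sqrt z).re - (Complex.sqrt z).im := by linarith
    positivity
  · rw [mul_pow, mul_pow, sqrt_sq', sqrt_sq', sqrt_sq', ze_three_sq, h]
    ring

lemma sqrt_real_mul {x : ℝ} (hx : 0 < x) {z : ℂ} (hz : 0 < z.re) :
    Complex.sqrt (x * z) = (√x : ℝ) * Complex.sqrt z := by
  have h1 := sqrt_cone hz
  have h0 := abs_nonneg (Complex.sqrt z).im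
  have h2 : 0 < ((x : ℂ) * z).re := by simp; positivity
  have h3 := sqrt_cone h2
  have h4 := abs_nonneg (Complex.sqrt (x * z)).im
  apply eq_of_sq_eq_of_re_pos (by linarith)
  · rw [Complex.re_ofReal_mul]
    have := Real.sqrt_pos.mpr hx
    have : 0 < (Complex.sqrt z).re := by linarith
    positivity
  · rw [mul_pow, sqrt_sq', sqrt_sq', ← Complex.ofReal_pow, Real.sq_sqrt hx.le]

lemma div_I_re (z : ℂ) : (z / Complex.I).re = z.im := by simp

/-! ### Jacobi symbols as roots of unity -/

/-- Quadratic reciprocity; the exponent `3 (m - 1) (n - 1)` is `12` times `(m - 1) (n - 1) / 4`. -/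
lemma jac_recip {m n : ℕ} (hm : Odd m) (hn : Odd n) (h : Nat.Coprime m n) :
    ((jacobiSym m n : ℤ) : ℂ) * (jacobiSym n m : ℤ) = ze (3 * ((m : ℤ) - 1) * ((n : ℤ) - 1)) := by
  rw [jacobiSym.quadratic_reciprocity hm hn]
  have h2 := jacobiSym.sq_one (a := (n : ℤ)) (b := m)
    (by rw [Int.gcd_natCast_natCast]; exact h.symm)
  push_cast
  rw [mul_assoc, ← sq]
  have h3 : ((jacobiSym n m : ℤ) : ℂ) ^ 2 = 1 := by exact_mod_cast h2
  rw [h3, mul_one, ← ze_twelve_mul]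
  obtain ⟨s, rfl⟩ := hm
  obtain ⟨t, rfl⟩ := hn
  congr 1
  rw [show (2 * s + 1) / 2 = s by lia, show (2 * t + 1) / 2 = t by lia]
  push_cast; ring

lemma jac_neg_one {n : ℕ} (hn : Odd n) :
    ((jacobiSym (-1) n : ℤ) : ℂ) = ze (6 * ((n : ℤ) - 1)) := by
  rw [jacobiSym.at_neg_one hn, ZMod.χ₄_eq_neg_one_pow (Nat.odd_iff.mp hn)]
  obtain ⟨s, rfl⟩ := hn
  rw [show (2 * s + 1) / 2 = s by lia]
  push_cast
  rw [← ze_twelve_mul]; congr 1; ring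

lemma jac_sq_one {a : ℤ} {n : ℕ} (h : IsCoprime a (n : ℤ)) :
    ((jacobiSym a n : ℤ) : ℂ) ^ 2 = 1 := by
  exact_mod_cast jacobiSym.sq_one (a := a) (b := n) (Int.isCoprime_iff_gcd_eq_one.mp h)

/-! ### The eta function -/

lemma dedekindEta_eq (z : ℂ) : dedekindEta z = ModularForm.eta z := by
  rw [dedekindEta, ModularForm.eta]
  congr 1
  · simp only [e2, Function.Periodic.qParam]; congr 1; push_cast; ring
  · congr 1; ext n; rw [ModularForm.eta_q_eq_cexp, e2]; congr 2; ring

lemma eta_ne {z : ℂ} (hz : 0 < z.im) : dedekindEta z ≠ 0 := by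
  rw [dedekindEta_eq]; exact ModularForm.eta_ne_zero hz

lemma eta_add_int (z : ℂ) (k : ℤ) : dedekindEta (z + k) = ze k * dedekindEta z := by
  rw [dedekindEta, dedekindEta, add_div, e2_add, ze]
  have : ∀ n : ℕ, e2 ((n + 1) * (z + k)) = e2 ((n + 1) * z) := fun n => by
    rw [mul_add, show ((n : ℂ) + 1) * (k : ℂ) = (((n + 1) * k : ℤ) : ℂ) by push_cast; ring,
      e2_add_int]
  simp only [this]; ring

lemma eta_S {z : ℂ} (hz : 0 < z.im) :
    dedekindEta (-1 / z) = Complex.sqrt (z / Complex.I) * dedekindEta z := by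
  have h := ModularForm.eta_comp_eq_csqrt_I_inv hz
  simp only [Function.comp, Pi.smul_apply, Pi.mul_apply, smul_eq_mul] at h
  rw [dedekindEta_eq, dedekindEta_eq, h, ← mul_assoc]
  congr 1
  have hzi : 0 < (z / Complex.I).re := by rw [div_I_re]; exact hz
  have hI : Complex.sqrt Complex.I = ze 3 := by
    have h3 : ze 3 = Complex.sqrt 1 * ze 3 := by simp [Complex.sqrt]
    apply eq_of_sq_eq_of_re_pos
    · rw [Complex.sqrt, Complex.cpow_inv_two_re]; simp
    · have := re_ze_three_mul 1
      rw [one_mul] at this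
      rw [this]; simp
    · rw [sqrt_sq', ze_three_sq]
  rw [hI, inv_mul_eq_iff_eq_mul₀ (ze_ne_zero 3), mul_comm]
  have hcz := sqrt_cone hzi
  have h0 := abs_nonneg (Complex.sqrt (z / Complex.I)).im
  apply eq_of_sq_eq_of_re_pos
  · rw [Complex.sqrt, Complex.cpow_inv_two_re]
    apply Real.sqrt_pos.mpr
    have : |z.re| < ‖z‖ := by
      rw [Complex.abs_re_lt_norm]; exact hz.ne'
    have := abs_lt.mp this
    linarith
  · rw [re_ze_three_mul]
    have := abs_lt.mp hcz
    have : 0 < (Complex.sqrt (z / Complex.I)).re - (Complex.sqrt (z / Complex.I)).im := by linarith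
    positivity
  · rw [mul_pow, sqrt_sq', sqrt_sq', ze_three_sq]; field_simp

/-! ### Transformation of eta under the modular group -/

/-- Divisibility by `24` may be tested modulo `8` and modulo `3`. -/
lemma dvd24 {x : ℤ} (h8 : ((x : ℤ) : ZMod 8) = 0) (h3 : ((x : ℤ) : ZMod 3) = 0) : (24 : ℤ) ∣ x := by
  have h8' := (ZMod.intCast_zmod_eq_zero_iff_dvd x 8).mp h8
  have h3' := (ZMod.intCast_zmod_eq_zero_iff_dvd x 3).mp h3
  push_cast at h8' h3'
  lia

lemma odd_sq_zmod8 {c : ℤ} (hc : Odd c) : ((c : ℤ) : ZMod 8) ^ 2 = 1 := by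
  have h := Int.sq_mod_four_eq_one_of_odd hc
  have : (8 : ℤ) ∣ c ^ 2 - 1 := by
    obtain ⟨k, rfl⟩ := hc
    obtain ⟨m, hm⟩ := Int.even_mul_succ_self k
    exact ⟨m, by linear_combination 4 * hm⟩
  have h2 := (ZMod.intCast_zmod_eq_zero_iff_dvd (c ^ 2 - 1) 8).mpr (by exact_mod_cast this)
  push_cast at h2
  exact sub_eq_zero.mp h2

/-- The transformation formula of `η` under `(a b; c d)`. It is the correct one when `c > 0` is odd
and `a d - b c = 1`, which the definition itself does not require. -/
def EtaF (a b c d : ℤ) : Prop :=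
  ∀ τ : ℂ, 0 < τ.im → dedekindEta ((a * τ + b) / (c * τ + d)) =
    (jacobiSym d c.natAbs : ℤ) * ze ((a + d) * c - b * d * (c ^ 2 - 1) - 3 * c + 3) *
      Complex.sqrt ((c * τ + d) / Complex.I) * dedekindEta τ

lemma odd_mul_sq_sub_one {c : ℤ} (hc : Odd c) : (24 : ℤ) ∣ c * (c ^ 2 - 1) := by
  apply dvd24
  · push_cast; rw [odd_sq_zmod8 hc]; simp
  · push_cast; generalize (c : ZMod 3) = x; revert x; decide

lemma EtaF.add {a b c d : ℤ} (hc : Odd c) (hdet : a * d - b * c = 1) (h : EtaF a b c d) (k : ℤ) :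
    EtaF a (b + k * a) c (d + k * c) := by
  intro τ hτ
  have h1 := h (τ + k) (by simpa using hτ)
  rw [eta_add_int] at h1
  have e1 : ((a : ℂ) * (τ + k) + b) / (c * (τ + k) + d) =
      (a * τ + (b + k * a : ℤ)) / (c * τ + (d + k * c : ℤ)) := by push_cast; ring_nf
  have e2 : ((c : ℂ) * (τ + k) + d) = c * τ + (d + k * c : ℤ) := by push_cast; ring
  have e3 : jacobiSym (d + k * c) c.natAbs = jacobiSym d c.natAbs := by
    apply jacobiSym.mod_left'
    rw [Int.emod_eq_emod_iff_emod_sub_eq_zero, ← Int.dvd_iff_emod_eq_zero]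
    exact (Int.natAbs_dvd).mpr ⟨k, by ring⟩
  rw [← e1, h1, e2, e3]
  have e4 : ze ((a + (d + k * c)) * c - (b + k * a) * (d + k * c) * (c ^ 2 - 1) - 3 * c + 3) =
      ze ((a + d) * c - b * d * (c ^ 2 - 1) - 3 * c + 3) * ze k := by
    rw [← ze_add]; apply ze_congr
    have := (odd_mul_sq_sub_one hc).mul_left (-(2 * b * k + k ^ 2 * a))
    obtain ⟨m, hm⟩ := this
    exact ⟨m, by linear_combination hm + (-k * (c ^ 2 - 1)) * hdet⟩
  rw [e4]; ring

lemma cast_im_pos {c d : ℤ} (hc : 0 < c) {τ : ℂ} (hτ : 0 < τ.im) : 0 < ((c : ℂ) * τ + d).im := by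
  have : (0 : ℝ) < c := by exact_mod_cast hc
  simp; positivity

lemma neg_one_div_im {τ : ℂ} (hτ : 0 < τ.im) : 0 < (-1 / τ).im := by
  have h0 : τ ≠ 0 := by rintro rfl; simp at hτ
  rw [neg_div, one_div, Complex.neg_im, Complex.inv_im, neg_div, neg_neg]
  exact div_pos hτ (Complex.normSq_pos.mpr h0)

/-- Composition with inversion on the right, for `d > 0`. The Jacobi symbols match by quadratic
reciprocity, which needs both `c` and `d` odd. -/
lemma EtaF.step_pos {a b c d : ℤ} (hc : 0 < c) (hd : 0 < d) (hco : Odd c) (hdo : Odd d)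
    (hdet : a * d - b * c = 1) (h : EtaF a b c d) : EtaF b (-a) d (-c) := by
  intro τ hτ
  have hτ' := neg_one_div_im hτ
  have h0 : τ ≠ 0 := by rintro rfl; simp at hτ
  have h1 := h _ hτ'
  have hne : ((d : ℂ) * τ + (-c : ℤ)) ≠ 0 := fun h0 => by
    have := cast_im_pos (d := -c) hd hτ
    rw [h0] at this; simp at this
  have e1 : ((a : ℂ) * (-1 / τ) + b) / (c * (-1 / τ) + d) =
      (b * τ + (-a : ℤ)) / (d * τ + (-c : ℤ)) := by
    have : (c : ℂ) * (-1 / τ) + d = (d * τ + (-c : ℤ)) / τ := by push_cast; field_simp; ring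
    rw [this]; push_cast at hne ⊢; field_simp; ring
  rw [← e1, h1, eta_S hτ]
  have e2 := sqrt_mul_sqrt_neg (x := (c * (-1 / τ) + d) / Complex.I) (y := τ / Complex.I)
    (z := (d * τ + (-c : ℤ)) / Complex.I)
    (by rw [div_I_re]; exact cast_im_pos hc hτ') (by rw [div_I_re]; exact hτ)
    (by rw [div_I_re]; exact cast_im_pos hd hτ)
    (by push_cast; field_simp; ring_nf; simp)
  lift c to ℕ using hc.le
  lift d to ℕ using hd.le
  have hcop : Nat.Coprime c d := by
    apply Nat.isCoprime_iff_coprime.mp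
    exact ⟨-b, a, by linear_combination hdet⟩
  simp only [Int.natAbs_natCast]
  have hsq : ((jacobiSym d c : ℤ) : ℂ) ^ 2 = 1 :=
    jac_sq_one (Nat.isCoprime_iff_coprime.mpr hcop.symm)
  have e3 : ((jacobiSym (-c) d : ℤ) : ℂ) =
      (jacobiSym d c : ℤ) * ze (6 * ((d : ℤ) - 1)) * ze (3 * ((c : ℤ) - 1) * ((d : ℤ) - 1)) := by
    rw [← jac_recip (by exact_mod_cast hco) (by exact_mod_cast hdo) hcop,
      ← jac_neg_one (by exact_mod_cast hdo), show (-(c : ℤ)) = (-1) * c by ring,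
      jacobiSym.mul_left]
    push_cast
    linear_combination (-((jacobiSym (-1) d : ℤ) : ℂ) * (jacobiSym c d : ℤ)) * hsq
  have e4 : ze ((a + d) * c - b * d * (c ^ 2 - 1) - 3 * c + 3) * ze (-3) =
      ze (6 * ((d : ℤ) - 1)) * ze (3 * ((c : ℤ) - 1) * ((d : ℤ) - 1)) *
      ze ((b + (-c)) * d - (-a) * (-c) * (d ^ 2 - 1) - 3 * d + 3) := by
    rw [← ze_add, ← ze_add, ← ze_add]
    apply ze_congr
    have hdet3 := congrArg (fun x : ℤ => (x : ZMod 3)) hdet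
    have hdet8 := congrArg (fun x : ℤ => (x : ZMod 8)) hdet
    have hc8 := odd_sq_zmod8 hco
    have hd8 := odd_sq_zmod8 hdo
    apply dvd24
    · push_cast at hdet8 hc8 hd8 ⊢
      generalize (a : ZMod 8) = a at *
      generalize (b : ZMod 8) = b at *
      generalize (c : ZMod 8) = c at *
      generalize (d : ZMod 8) = d at *
      clear * - hdet8 hc8 hd8
      rw [hc8, hd8]
      linear_combination (c * d) * hdet8 - a * c * hd8 + b * d * hc8
    · push_cast at hdet3 ⊢
      generalize (a : ZMod 3) = a at *
      generalize (b : ZMod 3) = b at *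
      generalize (c : ZMod 3) = c at *
      generalize (d : ZMod 3) = d at *
      clear * - hdet3
      revert a b c d
      decide
  rw [show ((jacobiSym d c : ℤ) : ℂ) * ze ((a + d) * c - b * d * (c ^ 2 - 1) - 3 * c + 3) *
      Complex.sqrt (((c : ℤ) * (-1 / τ) + (d : ℤ)) / Complex.I) *
        (Complex.sqrt (τ / Complex.I) * dedekindEta τ) =
      ((jacobiSym d c : ℤ) : ℂ) * ze ((a + d) * c - b * d * (c ^ 2 - 1) - 3 * c + 3) *
      (Complex.sqrt (((c : ℤ) * (-1 / τ) + (d : ℤ)) / Complex.I) *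
        Complex.sqrt (τ / Complex.I)) * dedekindEta τ by ring, e2, e3]
  linear_combination (((jacobiSym d c : ℤ) : ℂ) *
    Complex.sqrt (((d : ℤ) * τ + (-c : ℤ)) / Complex.I) * dedekindEta τ) * e4

/-- Composition with inversion on the right, for `d < 0`; the matrix is negated to keep the lower
left entry positive. -/
lemma EtaF.step_neg {a b c d : ℤ} (hc : 0 < c) (hd : d < 0) (hco : Odd c) (hdo : Odd d)
    (hdet : a * d - b * c = 1) (h : EtaF a b c d) : EtaF (-b) a (-d) c := by
  intro τ hτ
  have hτ' := neg_one_div_im hτ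
  have h0 : τ ≠ 0 := by rintro rfl; simp at hτ
  have h1 := h _ hτ'
  obtain ⟨e, rfl⟩ : ∃ e, d = -e := ⟨-d, by ring⟩
  rw [neg_neg]
  have he : 0 < e := by linarith
  have hne : ((e : ℂ) * τ + (c : ℤ)) ≠ 0 := fun h0 => by
    have := cast_im_pos (d := c) he hτ
    rw [h0] at this; simp at this
  have e1 : ((a : ℂ) * (-1 / τ) + b) / (c * (-1 / τ) + (-e : ℤ)) =
      ((-b : ℤ) * τ + a) / (e * τ + c) := by
    have : (c : ℂ) * (-1 / τ) + (-e : ℤ) = -(e * τ + c) / τ := by push_cast; field_simp; ring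
    rw [this]; push_cast at hne ⊢; field_simp; ring
  rw [← e1, h1, eta_S hτ]
  have e2 := sqrt_mul_sqrt_pos (x := (c * (-1 / τ) + (-e : ℤ)) / Complex.I) (y := τ / Complex.I)
    (z := (e * τ + c) / Complex.I)
    (by rw [div_I_re]; exact cast_im_pos hc hτ') (by rw [div_I_re]; exact hτ)
    (by rw [div_I_re]; exact cast_im_pos he hτ)
    (by push_cast; field_simp; ring_nf; simp; ring)
  have heo : Odd e := by simpa using hdo
  lift c to ℕ using hc.le
  lift e to ℕ using he.le
  have hcop : Nat.Coprime c e := by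
    apply Nat.isCoprime_iff_coprime.mp
    exact ⟨-b, -a, by linear_combination hdet⟩
  simp only [Int.natAbs_natCast]
  have hsq : ((jacobiSym e c : ℤ) : ℂ) ^ 2 = 1 :=
    jac_sq_one (Nat.isCoprime_iff_coprime.mpr hcop.symm)
  have hJ := jac_recip (by exact_mod_cast hco) (by exact_mod_cast heo) hcop
  have e3 : ((jacobiSym c e : ℤ) : ℂ) =
      (jacobiSym e c : ℤ) * ze (3 * ((c : ℤ) - 1) * ((e : ℤ) - 1)) := by
    rw [← hJ]
    linear_combination (-((jacobiSym c e : ℤ) : ℂ)) * hsq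
  have e3' : ((jacobiSym (-e) c : ℤ) : ℂ) = ze (6 * ((c : ℤ) - 1)) * (jacobiSym e c : ℤ) := by
    rw [show (-(e : ℤ)) = (-1) * e by ring, jacobiSym.mul_left,
      ← jac_neg_one (by exact_mod_cast hco)]
    push_cast; ring
  have e4 : ze (6 * ((c : ℤ) - 1)) *
      ze ((a + -(e : ℤ)) * c - b * -(e : ℤ) * (c ^ 2 - 1) - 3 * c + 3) * ze 3 =
      ze (3 * ((c : ℤ) - 1) * ((e : ℤ) - 1)) *
      ze ((-b + c) * e - a * c * (e ^ 2 - 1) - 3 * e + 3) := by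
    rw [← ze_add, ← ze_add, ← ze_add]
    apply ze_congr
    have hdet3 := congrArg (fun x : ℤ => (x : ZMod 3)) hdet
    have hdet8 := congrArg (fun x : ℤ => (x : ZMod 8)) hdet
    have hc8 := odd_sq_zmod8 hco
    have he8 := odd_sq_zmod8 heo
    apply dvd24
    · push_cast at hdet8 hc8 he8 ⊢
      generalize (a : ZMod 8) = a at *
      generalize (b : ZMod 8) = b at *
      generalize (c : ZMod 8) = c at *
      generalize (e : ZMod 8) = e at *
      clear * - hdet8 hc8 he8
      revert a b c e
      decide
    · push_cast at hdet3 ⊢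
      generalize (a : ZMod 3) = a at *
      generalize (b : ZMod 3) = b at *
      generalize (c : ZMod 3) = c at *
      generalize (e : ZMod 3) = e at *
      clear * - hdet3
      revert a b c e
      decide
  rw [show ((jacobiSym (-e) c : ℤ) : ℂ) *
      ze ((a + -(e : ℤ)) * c - b * -(e : ℤ) * (c ^ 2 - 1) - 3 * c + 3) *
      Complex.sqrt (((c : ℤ) * (-1 / τ) + (-e : ℤ)) / Complex.I) *
        (Complex.sqrt (τ / Complex.I) * dedekindEta τ) =
      ((jacobiSym (-e) c : ℤ) : ℂ) *
      ze ((a + -(e : ℤ)) * c - b * -(e : ℤ) * (c ^ 2 - 1) - 3 * c + 3) *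
      (Complex.sqrt (((c : ℤ) * (-1 / τ) + (-e : ℤ)) / Complex.I) *
        Complex.sqrt (τ / Complex.I)) * dedekindEta τ by ring, e2, e3, e3']
  linear_combination (((jacobiSym e c : ℤ) : ℂ) *
    Complex.sqrt (((e : ℤ) * τ + (c : ℤ)) / Complex.I) * dedekindEta τ) * e4

lemma EtaF_base (a d : ℤ) : EtaF a (-1 + d * a) 1 (0 + d * 1) := by
  refine EtaF.add odd_one (by ring) ?_ d
  intro τ hτ
  have h0 : τ ≠ 0 := by rintro rfl; simp at hτ
  have e1 : ((a : ℂ) * τ + (-1 : ℤ)) / ((1 : ℤ) * τ + (0 : ℤ)) = -1 / τ + a := by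
    push_cast; rw [one_mul, add_zero]; field_simp; ring
  rw [e1, eta_add_int, eta_S hτ]
  simp [mul_assoc]

/-- The transformation formula holds for all unimodular matrices with `c > 0` odd: a Euclidean
algorithm on the lower row in which all the lower left entries stay odd. -/
lemma EtaF_all {a b c d : ℤ} (hc : 0 < c) (hco : Odd c) (hdet : a * d - b * c = 1) :
    EtaF a b c d := by
  obtain ⟨n, hn⟩ : ∃ n : ℕ, c.natAbs = n := ⟨_, rfl⟩
  induction n using Nat.strong_induction_on generalizing a b c d with
  | _ n ih =>
    rcases eq_or_ne c 1 with rfl | hc1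
    · have := EtaF_base a d
      rwa [show -1 + d * a = b by linear_combination hdet, show 0 + d * 1 = d by ring] at this
    have hc2 : 1 < c := by lia
    -- it suffices to treat an odd `d₁ ≡ d (mod c)` with `0 < |d₁| < c`
    suffices H : ∃ k : ℤ, EtaF a (b + k * a) c (d + k * c) by
      obtain ⟨k, hk⟩ := H
      have := EtaF.add hco (by linear_combination hdet) hk (-k)
      rwa [show b + k * a + -k * a = b by ring, show d + k * c + -k * c = d by ring] at this
    have hmod := Int.emod_add_mul_ediv d c
    have hpos : 0 < d % c := by
      rcases (Int.emod_nonneg d hc.ne').lt_or_eq with h | h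
      · exact h
      · exfalso
        have hdv : c ∣ 1 := by
          rw [← h] at hmod
          exact ⟨a * (d / c) - b, by rw [← hdet]; nth_rewrite 1 [← hmod]; ring⟩
        have := Int.le_of_dvd one_pos hdv
        lia
    have hlt := Int.emod_lt_of_pos d hc
    rcases Int.even_or_odd (d % c) with he | ho
    · refine ⟨-(d / c) - 1, ?_⟩
      have hd1 : d + (-(d / c) - 1) * c = d % c - c := by linear_combination -hmod
      set b1 := b + (-(d / c) - 1) * a with hb1
      rw [hd1]
      have hdet1 : a * (d % c - c) - b1 * c = 1 := by
        rw [hb1]; linear_combination hdet + a * hmod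
      have h1 : EtaF (-b1) a (-(d % c - c)) c :=
        ih (-(d % c - c)).natAbs (by lia) (by lia) (by
          rw [neg_sub]; exact hco.sub_even he) (by linear_combination hdet1) rfl
      have := EtaF.step_pos (by lia) hc (by rw [neg_sub]; exact hco.sub_even he) hco
        (by linear_combination hdet1) h1
      simpa using this
    · refine ⟨-(d / c), ?_⟩
      have hd1 : d + (-(d / c)) * c = d % c := by linear_combination -hmod
      set b1 := b + (-(d / c)) * a with hb1
      rw [hd1]
      have hdet1 : a * (d % c) - b1 * c = 1 := by
        rw [hb1]; linear_combination hdet + a * hmod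
      have h1 : EtaF b1 (-a) (d % c) (-c) :=
        ih (d % c).natAbs (by lia) hpos ho (by linear_combination hdet1) rfl
      have := EtaF.step_neg hpos (by lia) ho (by simpa using hco)
        (by linear_combination hdet1) h1
      simpa using this

/-- The transformation formula of `η^8` under `(a b; c d)`, for `c > 0` and `a d - b c = 1`. The
multiplier is a character of order three, so no condition on the parity of `c` is needed. -/
def EtaE (a b c d : ℤ) : Prop :=
  ∀ τ : ℂ, 0 < τ.im → dedekindEta ((a * τ + b) / (c * τ + d)) ^ 8 =
    ze (8 * ((a + d) * c - b * d * (c ^ 2 - 1))) * (c * τ + d) ^ 4 * dedekindEta τ ^ 8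

lemma mul_sq_sub_one_dvd (c : ℤ) : (24 : ℤ) ∣ 8 * (c * (c ^ 2 - 1)) := by
  apply dvd24
  · push_cast; rw [show (8 : ZMod 8) = 0 by decide]; simp
  · push_cast; generalize (c : ZMod 3) = x; revert x; decide

lemma EtaE.add {a b c d : ℤ} (hdet : a * d - b * c = 1) (h : EtaE a b c d) (k : ℤ) :
    EtaE a (b + k * a) c (d + k * c) := by
  intro τ hτ
  have h1 := h (τ + k) (by simpa using hτ)
  rw [eta_add_int, mul_pow] at h1
  have e1 : ((a : ℂ) * (τ + k) + b) / (c * (τ + k) + d) =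
      (a * τ + (b + k * a : ℤ)) / (c * τ + (d + k * c : ℤ)) := by push_cast; ring_nf
  have e2 : ((c : ℂ) * (τ + k) + d) = c * τ + (d + k * c : ℤ) := by push_cast; ring
  rw [← e1, h1, e2]
  have e4 : ze (8 * ((a + (d + k * c)) * c - (b + k * a) * (d + k * c) * (c ^ 2 - 1))) =
      ze (8 * ((a + d) * c - b * d * (c ^ 2 - 1))) * ze k ^ 8 := by
    rw [ze_pow, ← ze_add]; apply ze_congr
    obtain ⟨m, hm⟩ := (mul_sq_sub_one_dvd c).mul_left (-(2 * b * k + k ^ 2 * a))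
    refine ⟨m, ?_⟩
    push_cast
    linear_combination hm + (-8 * k * (c ^ 2 - 1)) * hdet
  rw [e4]; ring

lemma EtaE.step {a b c d : ℤ} (hd : d < 0)
    (hdet : a * d - b * c = 1) (h : EtaE a b c d) : EtaE (-b) a (-d) c := by
  intro τ hτ
  have hτ' := neg_one_div_im hτ
  have h0 : τ ≠ 0 := by rintro rfl; simp at hτ
  have h1 := h _ hτ'
  obtain ⟨e, rfl⟩ : ∃ e, d = -e := ⟨-d, by ring⟩
  rw [neg_neg]
  have he : 0 < e := by linarith
  have hne : ((e : ℂ) * τ + (c : ℤ)) ≠ 0 := fun h0 => by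
    have := cast_im_pos (d := c) he hτ
    rw [h0] at this; simp at this
  have e1 : ((a : ℂ) * (-1 / τ) + b) / (c * (-1 / τ) + (-e : ℤ)) =
      ((-b : ℤ) * τ + a) / (e * τ + c) := by
    have : (c : ℂ) * (-1 / τ) + (-e : ℤ) = -(e * τ + c) / τ := by push_cast; field_simp; ring
    rw [this]; push_cast at hne ⊢; field_simp; ring
  have e5 : Complex.sqrt (τ / Complex.I) ^ 8 = τ ^ 4 := by
    rw [show 8 = 2 * 4 by rfl, pow_mul, sqrt_sq', div_pow, Complex.I_pow_four, div_one]
  rw [← e1, h1, eta_S hτ, mul_pow, e5]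
  have e4 : ze (8 * ((a + -e) * c - b * -e * (c ^ 2 - 1))) =
      ze (8 * ((-b + c) * e - a * c * (e ^ 2 - 1))) := by
    apply ze_congr
    have hdet3 := congrArg (fun x : ℤ => (x : ZMod 3)) hdet
    apply dvd24
    · push_cast; rw [show (8 : ZMod 8) = 0 by decide]; simp
    · push_cast at hdet3 ⊢
      generalize (a : ZMod 3) = a at *
      generalize (b : ZMod 3) = b at *
      generalize (c : ZMod 3) = c at *
      generalize (e : ZMod 3) = e at *
      clear * - hdet3
      revert a b c e
      decide
  rw [e4]
  have e6 : ((c : ℂ) * (-1 / τ) + (-e : ℤ)) ^ 4 * τ ^ 4 = (e * τ + c) ^ 4 := by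
    rw [← mul_pow, show ((c : ℂ) * (-1 / τ) + (-e : ℤ)) * τ = -(e * τ + c) by
      push_cast; field_simp; ring]
    ring
  rw [← e6]; ring

lemma EtaE_base (a d : ℤ) : EtaE a (-1 + d * a) 1 (0 + d * 1) := by
  refine EtaE.add (by ring) ?_ d
  intro τ hτ
  have h0 : τ ≠ 0 := by rintro rfl; simp at hτ
  have e1 : ((a : ℂ) * τ + (-1 : ℤ)) / ((1 : ℤ) * τ + (0 : ℤ)) = -1 / τ + a := by
    push_cast; rw [one_mul, add_zero]; field_simp; ring
  have e5 : Complex.sqrt (τ / Complex.I) ^ 8 = τ ^ 4 := by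
    rw [show 8 = 2 * 4 by rfl, pow_mul, sqrt_sq', div_pow, Complex.I_pow_four, div_one]
  rw [e1, eta_add_int, eta_S hτ, mul_pow, mul_pow, e5, ze_pow]
  simp [mul_assoc]

lemma EtaE_all {a b c d : ℤ} (hc : 0 < c) (hdet : a * d - b * c = 1) :
    EtaE a b c d := by
  obtain ⟨n, hn⟩ : ∃ n : ℕ, c.natAbs = n := ⟨_, rfl⟩
  induction n using Nat.strong_induction_on generalizing a b c d with
  | _ n ih =>
    rcases eq_or_ne c 1 with rfl | hc1
    · have := EtaE_base a d
      rwa [show -1 + d * a = b by linear_combination hdet, show 0 + d * 1 = d by ring] at this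
    have hc2 : 1 < c := by lia
    suffices H : ∃ k : ℤ, EtaE a (b + k * a) c (d + k * c) by
      obtain ⟨k, hk⟩ := H
      have := EtaE.add (by linear_combination hdet) hk (-k)
      rwa [show b + k * a + -k * a = b by ring, show d + k * c + -k * c = d by ring] at this
    have hmod := Int.emod_add_mul_ediv d c
    have hpos : 0 < d % c := by
      rcases (Int.emod_nonneg d hc.ne').lt_or_eq with h | h
      · exact h
      · exfalso
        have hdv : c ∣ 1 := by
          rw [← h] at hmod
          exact ⟨a * (d / c) - b, by rw [← hdet]; nth_rewrite 1 [← hmod]; ring⟩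
        have := Int.le_of_dvd one_pos hdv
        lia
    have hlt := Int.emod_lt_of_pos d hc
    refine ⟨-(d / c), ?_⟩
    have hd1 : d + (-(d / c)) * c = d % c := by linear_combination -hmod
    set b1 := b + (-(d / c)) * a with hb1
    rw [hd1]
    have hdet1 : a * (d % c) - b1 * c = 1 := by
      rw [hb1]; linear_combination hdet + a * hmod
    have h1 : EtaE b1 (-a) (d % c) (-c) :=
      ih (d % c).natAbs (by lia) hpos (by linear_combination hdet1) rfl
    have := EtaE.step (by lia) (by linear_combination hdet1) h1
    simpa using this

/-- The transformation of `η^r`, whenever `c` is odd or `8 ∣ r`. -/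
lemma eta_pow_trans {a b c d : ℤ} (hc : 0 < c) (hdet : a * d - b * c = 1) (r : ℕ)
    (h : Odd c ∨ 8 ∣ r) {τ : ℂ} (hτ : 0 < τ.im) :
    dedekindEta ((a * τ + b) / (c * τ + d)) ^ r =
      (jacobiSym d c.natAbs : ℂ) ^ r *
        ze (r * ((a + d) * c - b * d * (c ^ 2 - 1) - 3 * c + 3)) *
        Complex.sqrt ((c * τ + d) / Complex.I) ^ r * dedekindEta τ ^ r := by
  rcases h with h | ⟨s, rfl⟩
  · rw [EtaF_all hc h hdet τ hτ, mul_pow, mul_pow, mul_pow, ze_pow]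
  · rw [pow_mul, EtaE_all hc hdet τ hτ]
    have h1 : (jacobiSym d c.natAbs : ℂ) ^ 2 = 1 := by
      apply jac_sq_one
      have : IsCoprime d c := ⟨a, -b, by linear_combination hdet⟩
      rw [Int.isCoprime_iff_gcd_eq_one] at this ⊢
      simpa [Int.gcd, Int.natAbs_abs] using this
    have h2 : Complex.sqrt ((c * τ + d) / Complex.I) ^ 8 = (c * τ + d) ^ 4 := by
      rw [show 8 = 2 * 4 by rfl, pow_mul, sqrt_sq', div_pow, Complex.I_pow_four, div_one]
    rw [show 8 * s = 2 * (4 * s) by ring, pow_mul (jacobiSym d c.natAbs : ℂ), h1, one_pow,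
      show 2 * (4 * s) = 8 * s by ring, pow_mul (Complex.sqrt _), h2, pow_mul (dedekindEta τ),
      mul_pow, mul_pow, ze_pow]
    congr 2
    rw [one_mul]
    apply ze_congr
    exact ⟨s * (c - 1), by push_cast; ring⟩

/-! ### The summands of the Hecke-type operator -/

/-- If `24 ∣ r (x y - 1)` then also `24 ∣ r (x² - 1)`, since every unit modulo a divisor of `24`
squares to one. -/
lemma dvd_sq_sub_one {r x y : ℤ} (h : (24 : ℤ) ∣ r * (x * y - 1)) : (24 : ℤ) ∣ r * (x ^ 2 - 1) := by
  obtain ⟨k, hk⟩ := h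
  have h8 := congrArg (fun x : ℤ => (x : ZMod 8)) hk
  have h3 := congrArg (fun x : ℤ => (x : ZMod 3)) hk
  apply dvd24
  · push_cast at h8 ⊢
    rw [show (24 : ZMod 8) = 0 by decide, zero_mul] at h8
    generalize (r : ZMod 8) = r at *
    generalize (x : ZMod 8) = x at *
    generalize (y : ZMod 8) = y at *
    clear * - h8
    revert r x y; decide
  · push_cast at h3 ⊢
    rw [show (24 : ZMod 3) = 0 by decide, zero_mul] at h3
    generalize (r : ZMod 3) = r at *
    generalize (x : ZMod 3) = x at *
    generalize (y : ZMod 3) = y at *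
    clear * - h3
    revert r x y; decide

/-- The summand of the Hecke-type operator attached to the upper triangular matrix
`(a b; 0 d)`. The factor `a ^ (r / 2)` is written as a power of the real square root of `a`. -/
def heckeTerm (r a d : ℕ) (b : ℤ) (τ : ℂ) : ℂ :=
  ((√a : ℝ) : ℂ) ^ r * ze (3 * r * ((d : ℤ) - 1)) * (jacobiSym b (Nat.gcd a d) : ℂ) ^ r *
    ze (-(r * d * b)) * dedekindEta ((a * τ + b) / d) ^ r

lemma sq_of_coprime_mul {x y t : ℕ} (h : Nat.Coprime x y) (hxy : x * y = t ^ 2) :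
    (∃ u, x = u ^ 2) ∧ ∃ v, y = v ^ 2 := by
  constructor
  · exact exists_eq_pow_of_mul_eq_pow (Nat.isUnit_iff.mpr h) hxy
  · exact exists_eq_pow_of_mul_eq_pow (Nat.isUnit_iff.mpr h.symm) (by rw [mul_comm]; exact hxy)

/-- In a factorization of a square as `C a₁ a₂` with `a₁`, `a₂` coprime, the cofactors of the
greatest common divisors are squares. -/
lemma square_factors {a₁ a₂ C : ℕ} (h1 : 0 < a₁) (h2 : 0 < a₂) (hco : Nat.Coprime a₁ a₂)
    (hsq : IsSquare (C * a₁ * a₂)) : ∃ g₁ g₂ u v w : ℕ, Nat.gcd a₁ C = g₁ ∧ Nat.gcd a₂ C = g₂ ∧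
      a₁ = g₁ * u ^ 2 ∧ a₂ = g₂ * v ^ 2 ∧ C = g₁ * g₂ * w ^ 2 ∧ Nat.Coprime g₁ g₂ := by
  obtain ⟨x, hx⟩ := Nat.gcd_dvd_left a₁ C
  obtain ⟨y, hy⟩ := Nat.gcd_dvd_left a₂ C
  have hg : Nat.Coprime (Nat.gcd a₁ C) (Nat.gcd a₂ C) :=
    Nat.Coprime.coprime_dvd_left (Nat.gcd_dvd_left a₁ C)
      (Nat.Coprime.coprime_dvd_right (Nat.gcd_dvd_left a₂ C) hco)
  obtain ⟨z, hz⟩ := hg.mul_dvd_of_dvd_of_dvd (Nat.gcd_dvd_right a₁ C) (Nat.gcd_dvd_right a₂ C)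
  have hg1 : 0 < Nat.gcd a₁ C := Nat.gcd_pos_of_pos_left _ h1
  have hg2 : 0 < Nat.gcd a₂ C := Nat.gcd_pos_of_pos_left _ h2
  have hxz : Nat.Coprime x (Nat.gcd a₂ C * z) := by
    have h := Nat.gcd_mul_left (Nat.gcd a₁ C) x (Nat.gcd a₂ C * z)
    rw [← mul_assoc, ← hx, ← hz] at h
    exact Nat.eq_of_mul_eq_mul_left hg1 (by rw [← h, mul_one])
  have hyz : Nat.Coprime y (Nat.gcd a₁ C * z) := by
    have h := Nat.gcd_mul_left (Nat.gcd a₂ C) y (Nat.gcd a₁ C * z)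
    rw [← mul_assoc, mul_comm (Nat.gcd a₂ C) (Nat.gcd a₁ C), ← hy, ← hz] at h
    exact Nat.eq_of_mul_eq_mul_left hg2 (by rw [← h, mul_one])
  have hxz' := Nat.Coprime.coprime_mul_left_right hxz
  have hyz' := Nat.Coprime.coprime_mul_left_right hyz
  have hxy : Nat.Coprime x y :=
    Nat.Coprime.coprime_dvd_left ⟨_, by rw [mul_comm]; exact hx⟩
      (Nat.Coprime.coprime_dvd_right ⟨_, by rw [mul_comm]; exact hy⟩ hco)
  set g₁ := Nat.gcd a₁ C
  set g₂ := Nat.gcd a₂ C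
  obtain ⟨s, hs⟩ := hsq
  have hs1 : (g₁ * g₂) ^ 2 * (x * (y * z)) = s ^ 2 := by
    rw [sq s, ← hs]
    conv_rhs => rw [hx, hy, hz]
    ring
  have hdv : g₁ * g₂ ∣ s := (Nat.pow_dvd_pow_iff two_ne_zero).mp ⟨_, hs1.symm⟩
  obtain ⟨t, rfl⟩ := hdv
  have ht : x * (y * z) = t ^ 2 := by
    rw [mul_pow _ t] at hs1
    exact Nat.eq_of_mul_eq_mul_left (by positivity) hs1
  obtain ⟨⟨u, hu⟩, w', hw'⟩ := sq_of_coprime_mul (Nat.Coprime.mul_right hxy hxz') ht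
  obtain ⟨⟨v, hv⟩, w, hw⟩ := sq_of_coprime_mul hyz' hw'
  exact ⟨g₁, g₂, u, v, w, rfl, rfl, by rw [← hu]; exact hx, by rw [← hv]; exact hy,
    by rw [← hw]; exact hz, hg⟩

lemma jac_mul_sq {a b : ℤ} {n : ℕ} (h : IsCoprime b (n : ℤ)) :
    jacobiSym (a * b ^ 2) n = jacobiSym a n := by
  rw [jacobiSym.mul_left, jacobiSym.sq_one' (Int.isCoprime_iff_gcd_eq_one.mp h), mul_one]

/-- The Jacobi symbols in the inversion formula for `heckeTerm` combine to a root of unity. -/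
lemma jac_product {g₁ g₂ u v w : ℕ} {A B D : ℤ} (h1 : 0 < g₁) (h2 : 0 < g₂) (hw : 0 < w)
    (hco : Nat.Coprime (g₁ * u ^ 2) (g₂ * v ^ 2)) (ho1 : Odd g₁) (ho2 : Odd g₂)
    (hdet : A * D - B * (g₁ * g₂ * w ^ 2 : ℕ) = 1) :
    (jacobiSym (A * (g₂ * v ^ 2 : ℕ)) g₁ : ℂ) * (jacobiSym D (g₁ * g₂ * w ^ 2) : ℂ) *
      (jacobiSym (-(D * (g₁ * u ^ 2 : ℕ))) g₂ : ℂ) = ze (3 * ((g₁ : ℤ) + 1) * ((g₂ : ℤ) - 1)) := by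
  have hg : Nat.Coprime g₁ g₂ := hco.coprime_dvd_left ⟨_, rfl⟩ |>.coprime_dvd_right ⟨_, rfl⟩
  have hDC : IsCoprime D ((g₁ * g₂ * w ^ 2 : ℕ) : ℤ) := ⟨A, -B, by linear_combination hdet⟩
  have hD1 : IsCoprime D (g₁ : ℤ) := hDC.of_isCoprime_of_dvd_right ⟨g₂ * w ^ 2, by push_cast; ring⟩
  have hD2 : IsCoprime D (g₂ : ℤ) := hDC.of_isCoprime_of_dvd_right ⟨g₁ * w ^ 2, by push_cast; ring⟩
  have hDw : IsCoprime D (w : ℤ) := hDC.of_isCoprime_of_dvd_right ⟨g₁ * g₂ * w, by push_cast; ring⟩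
  have hv1 : IsCoprime (v : ℤ) (g₁ : ℤ) := Nat.isCoprime_iff_coprime.mpr
    (hco.coprime_dvd_left ⟨_, rfl⟩ |>.coprime_dvd_right ⟨g₂ * v, by ring⟩).symm
  have hu2 : IsCoprime (u : ℤ) (g₂ : ℤ) := Nat.isCoprime_iff_coprime.mpr
    (hco.coprime_dvd_right ⟨_, rfl⟩ |>.coprime_dvd_left ⟨g₁ * u, by ring⟩)
  have q1 := jacobiSym.sq_one (Int.isCoprime_iff_gcd_eq_one.mp hD1)
  have q2 := jacobiSym.sq_one (Int.isCoprime_iff_gcd_eq_one.mp hD2)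
  have q3 := jacobiSym.sq_one (Int.isCoprime_iff_gcd_eq_one.mp hDw)
  have hA : jacobiSym A g₁ = jacobiSym D g₁ := by
    have h : jacobiSym (A * D) g₁ = 1 := by
      rw [show A * D = 1 + g₁ * (B * g₂ * w ^ 2) by push_cast at hdet; linear_combination hdet,
        jacobiSym.mod_left, Int.add_mul_emod_self_left, ← jacobiSym.mod_left, jacobiSym.one_left]
    rw [jacobiSym.mul_left] at h
    linear_combination (jacobiSym D g₁) * h - jacobiSym A g₁ * q1
  have e1 : jacobiSym (A * (g₂ * v ^ 2 : ℕ)) g₁ = jacobiSym D g₁ * jacobiSym g₂ g₁ := by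
    push_cast
    rw [← mul_assoc, jac_mul_sq hv1, jacobiSym.mul_left, hA]
  have e2 : jacobiSym (-(D * (g₁ * u ^ 2 : ℕ))) g₂ =
      jacobiSym (-1) g₂ * jacobiSym D g₂ * jacobiSym g₁ g₂ := by
    push_cast
    rw [show (-(D * (g₁ * (u : ℤ) ^ 2))) = -1 * D * g₁ * u ^ 2 by ring, jac_mul_sq hu2,
      jacobiSym.mul_left, jacobiSym.mul_left]
  have e3 : jacobiSym D (g₁ * g₂ * w ^ 2) = jacobiSym D g₁ * jacobiSym D g₂ := by
    rw [jacobiSym.mul_right' _ (by positivity) (by positivity),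
      jacobiSym.mul_right' _ (by positivity) (by positivity), jacobiSym.pow_right, q3, mul_one]
  rw [e1, e2, e3]
  have r1 := jac_recip ho1 ho2 hg
  have r2 := jac_neg_one ho2
  have r3 : ze (3 * ((g₁ : ℤ) + 1) * ((g₂ : ℤ) - 1)) =
      ze (3 * ((g₁ : ℤ) - 1) * ((g₂ : ℤ) - 1)) * ze (6 * ((g₂ : ℤ) - 1)) := by
    rw [← ze_add]; ring_nf
  rw [r3, ← r1, ← r2]
  have q1' : (jacobiSym D g₁ : ℂ) ^ 2 = 1 := by exact_mod_cast q1
  have q2' : (jacobiSym D g₂ : ℂ) ^ 2 = 1 := by exact_mod_cast q2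
  push_cast
  linear_combination ((jacobiSym g₂ g₁ : ℂ) * (jacobiSym (-1) g₂) * (jacobiSym g₁ g₂)) *
    ((jacobiSym D g₂ : ℂ) ^ 2 * q1' + q2')

/-- The dichotomy behind the use of `eta_pow_trans`. -/
lemma odd_or_eight_dvd {r : ℕ} {C x : ℤ} (h : (24 : ℤ) ∣ r * (C * x - 1)) : Odd C ∨ 8 ∣ r := by
  by_cases hC : Odd C
  · exact Or.inl hC
  · right
    obtain ⟨k, rfl⟩ := Int.not_odd_iff_even.mp hC
    have h1 : (8 : ℤ) ∣ r * ((k + k) * x - 1) := dvd_trans (by norm_num) h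
    have h2 : IsCoprime (8 : ℤ) ((k + k) * x - 1) := by
      have : IsCoprime ((2 : ℤ) ^ 3) ((k + k) * x - 1) :=
        IsCoprime.pow_left ⟨k * x, -1, by ring⟩
      simpa using this
    exact_mod_cast h2.dvd_of_dvd_mul_right h1

/-- The phase identity behind the inversion formula, for even `r`. -/
lemma phase_even {r a₁ a₂ C A B D : ℤ} (hr : Even r) (h : (24 : ℤ) ∣ r * (C * a₁ * a₂ - 1)) :
    (24 : ℤ) ∣ 3 * r * (C * a₂ - 1) + -(r * (C * a₂) * (A * a₂)) +
      r * ((A + D) * C - B * D * (C ^ 2 - 1) - 3 * C + 3) -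
      (3 * r * (C * a₁ - 1) + -(r * (C * a₁) * -(D * a₁))) := by
  have q1 : (24 : ℤ) ∣ r * (a₁ ^ 2 - 1) := dvd_sq_sub_one (y := C * a₂) (by convert h using 3; ring)
  have q2 : (24 : ℤ) ∣ r * (a₂ ^ 2 - 1) := dvd_sq_sub_one (y := C * a₁) (by convert h using 3; ring)
  have q3 : (24 : ℤ) ∣ r * (C ^ 2 - 1) := dvd_sq_sub_one (y := a₁ * a₂) (by convert h using 3; ring)
  have q4 : (24 : ℤ) ∣ 3 * r * (C * a₂ - C * a₁ - C + 1) := by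
    obtain ⟨s, rfl⟩ := hr
    obtain ⟨k, hk⟩ := h
    have h8 := congrArg (fun x : ℤ => (x : ZMod 8)) hk
    apply dvd24
    · push_cast at h8 ⊢
      rw [show (24 : ZMod 8) = 0 by decide, zero_mul] at h8
      generalize (s : ZMod 8) = s at *
      generalize (C : ZMod 8) = C at *
      generalize (a₁ : ZMod 8) = a₁ at *
      generalize (a₂ : ZMod 8) = a₂ at *
      clear * - h8
      revert s C a₁ a₂; decide
    · push_cast; rw [show (3 : ZMod 3) = 0 by decide]; simp
  obtain ⟨k1, h1⟩ := q1
  obtain ⟨k2, h2⟩ := q2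
  obtain ⟨k3, h3⟩ := q3
  obtain ⟨k4, h4⟩ := q4
  exact ⟨k4 - A * C * k2 - C * D * k1 - B * D * k3, by
    linear_combination h4 - A * C * h2 - C * D * h1 - B * D * h3⟩

/-- The phase identity behind the inversion formula, for odd `r`. -/
lemma phase_odd {r g₁ g₂ u v w A B D : ℤ}
    (h : (24 : ℤ) ∣ r * ((g₁ * g₂ * w ^ 2) * (g₁ * u ^ 2) * (g₂ * v ^ 2) - 1))
    (hg₁ : Odd g₁) (hg₂ : Odd g₂) (hu : Odd u) (hv : Odd v) (hw : Odd w) :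
    (24 : ℤ) ∣ 3 * r * ((g₁ * g₂ * w ^ 2) * (g₂ * v ^ 2) - 1) +
        -(r * ((g₁ * g₂ * w ^ 2) * (g₂ * v ^ 2)) * (A * (g₂ * v ^ 2))) +
      r * ((A + D) * (g₁ * g₂ * w ^ 2) - B * D * ((g₁ * g₂ * w ^ 2) ^ 2 - 1) -
        3 * (g₁ * g₂ * w ^ 2) + 3) -
      (3 * r * ((g₁ * g₂ * w ^ 2) * (g₁ * u ^ 2) - 1) +
        -(r * ((g₁ * g₂ * w ^ 2) * (g₁ * u ^ 2)) * -(D * (g₁ * u ^ 2)))) +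
      r * (3 * (g₁ + 1) * (g₂ - 1)) := by
  set C := g₁ * g₂ * w ^ 2 with hC
  set a₁ := g₁ * u ^ 2 with ha₁
  set a₂ := g₂ * v ^ 2 with ha₂
  have q1 : (24 : ℤ) ∣ r * (a₁ ^ 2 - 1) := dvd_sq_sub_one (y := C * a₂) (by convert h using 3; ring)
  have q2 : (24 : ℤ) ∣ r * (a₂ ^ 2 - 1) := dvd_sq_sub_one (y := C * a₁) (by convert h using 3; ring)
  have q3 : (24 : ℤ) ∣ r * (C ^ 2 - 1) := dvd_sq_sub_one (y := a₁ * a₂) (by convert h using 3; ring)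
  have q4 : (24 : ℤ) ∣ 3 * (C * a₂ - C * a₁ - C + 1 + (g₁ + 1) * (g₂ - 1)) := by
    rw [hC, ha₁, ha₂]
    apply dvd24
    · push_cast
      have e1 := odd_sq_zmod8 hg₁
      have e2 := odd_sq_zmod8 hg₂
      rw [odd_sq_zmod8 hu, odd_sq_zmod8 hv, odd_sq_zmod8 hw]
      linear_combination (3 * (g₁ : ZMod 8)) * e2 - 3 * (g₂ : ZMod 8) * e1
    · push_cast; rw [show (3 : ZMod 3) = 0 by decide]; simp
  obtain ⟨k1, h1⟩ := q1
  obtain ⟨k2, h2⟩ := q2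
  obtain ⟨k3, h3⟩ := q3
  obtain ⟨k4, h4⟩ := q4
  exact ⟨r * k4 - A * C * k2 - C * D * k1 - B * D * k3, by
    linear_combination r * h4 - A * C * h2 - C * D * h1 - B * D * h3⟩

/-- The combination of multipliers occurring in `heckeTerm_S`. -/
lemma phase {r a₁ a₂ C : ℕ} (h1 : 0 < a₁) (h2 : 0 < a₂)
    (hco : Nat.Coprime a₁ a₂) (h24 : (24 : ℤ) ∣ r * ((C : ℤ) * a₁ * a₂ - 1))
    (hsq : Odd r → IsSquare (C * a₁ * a₂)) {A B D : ℤ} (hdet : A * D - B * C = 1) :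
    ze (3 * r * ((C : ℤ) * a₂ - 1)) * (jacobiSym (A * a₂) (Nat.gcd a₁ C) : ℂ) ^ r *
      ze (-(r * (C * a₂) * (A * a₂))) * ((jacobiSym D C : ℂ) ^ r *
        ze (r * ((A + D) * C - B * D * (C ^ 2 - 1) - 3 * C + 3))) =
    ze (3 * r * ((C : ℤ) * a₁ - 1)) * (jacobiSym (-(D * a₁)) (Nat.gcd a₂ C) : ℂ) ^ r *
      ze (-(r * (C * a₁) * -(D * a₁))) := by
  have hDC : IsCoprime D (C : ℤ) := ⟨A, -B, by linear_combination hdet⟩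
  have hAC : IsCoprime A (C : ℤ) := ⟨D, -B, by linear_combination hdet⟩
  have cC1 : ((Nat.gcd a₁ C : ℕ) : ℤ) ∣ (C : ℤ) := by exact_mod_cast Nat.gcd_dvd_right a₁ C
  have cC2 : ((Nat.gcd a₂ C : ℕ) : ℤ) ∣ (C : ℤ) := by exact_mod_cast Nat.gcd_dvd_right a₂ C
  have s1 : (jacobiSym (A * a₂) (Nat.gcd a₁ C) : ℂ) ^ 2 = 1 := jac_sq_one
    (IsCoprime.mul_left (hAC.of_isCoprime_of_dvd_right cC1)
      (Nat.isCoprime_iff_coprime.mpr (hco.coprime_dvd_left (Nat.gcd_dvd_left _ _)).symm))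
  have s2 : (jacobiSym (-(D * a₁)) (Nat.gcd a₂ C) : ℂ) ^ 2 = 1 := jac_sq_one
    (IsCoprime.neg_left (IsCoprime.mul_left (hDC.of_isCoprime_of_dvd_right cC2)
      (Nat.isCoprime_iff_coprime.mpr (hco.coprime_dvd_right (Nat.gcd_dvd_left _ _)))))
  have s3 : (jacobiSym D C : ℂ) ^ 2 = 1 := jac_sq_one hDC
  rcases Nat.even_or_odd r with hr | hr
  · obtain ⟨k, hk⟩ := phase_even (A := A) (B := B) (D := D) (by exact_mod_cast hr) h24
    obtain ⟨s, rfl⟩ := even_iff_two_dvd.mp hr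
    rw [pow_mul, pow_mul, pow_mul, s1, s2, s3, one_pow, one_mul, mul_one, mul_one,
      ← ze_add, ← ze_add, ← ze_add]
    exact ze_congr ⟨k, hk⟩
  · have hodd : Odd (C * a₁ * a₂) := by
      have h8 : ¬ 8 ∣ r := fun h => by
        have := (Nat.odd_iff.mp hr); lia
      have := (odd_or_eight_dvd (C := (C : ℤ) * a₁ * a₂) (x := 1) (by simpa using h24)).resolve_right h8
      exact_mod_cast this
    obtain ⟨g₁, g₂, u, v, w, e1, e2, e3, e4, e5, hg⟩ := square_factors h1 h2 hco (hsq hr)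
    rw [e1] at s1 ⊢
    rw [e2] at s2 ⊢
    rw [Nat.odd_mul, Nat.odd_mul] at hodd
    obtain ⟨⟨oC, o1⟩, o2⟩ := hodd
    rw [e3, Nat.odd_mul] at o1
    rw [e4, Nat.odd_mul] at o2
    rw [e5, Nat.odd_mul] at oC
    have pw := jac_product (u := u) (v := v) (w := w) (Odd.pos o1.1) (Odd.pos o2.1)
      (Nat.pos_of_ne_zero (by rintro rfl; simp at oC)) (by rwa [← e3, ← e4]) o1.1 o2.1
      (by rw [← e5]; exact hdet)
    rw [← e3, ← e4, ← e5] at pw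
    have two : (2 : ℕ) ≠ 0 := two_ne_zero
    rw [Nat.odd_pow_iff two] at o1 o2 oC
    have hp := phase_odd (r := r) (g₁ := g₁) (g₂ := g₂) (u := u) (v := v) (w := w) (A := A) (B := B)
      (D := D) (by rw [e3, e4, e5] at h24; push_cast at h24; exact h24)
      (by exact_mod_cast o1.1) (by exact_mod_cast o2.1) (by exact_mod_cast o1.2)
      (by exact_mod_cast o2.2) (by exact_mod_cast oC.2)
    have f3 : (g₁ : ℤ) * u ^ 2 = a₁ := by rw [e3]; push_cast; rfl
    have f4 : (g₂ : ℤ) * v ^ 2 = a₂ := by rw [e4]; push_cast; rfl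
    have f5 : (g₁ : ℤ) * g₂ * w ^ 2 = C := by rw [e5]; push_cast; rfl
    rw [f3, f4, f5] at hp
    have pw' := congrArg (· ^ r) pw
    simp only [mul_pow, ze_pow] at pw'
    have s2' : (jacobiSym (-(D * a₁)) g₂ : ℂ) ^ r * (jacobiSym (-(D * a₁)) g₂ : ℂ) ^ r = 1 := by
      rw [← mul_pow, ← sq, s2, one_pow]
    have z := ze_eq_one hp
    rw [ze_add, sub_eq_add_neg, ze_add, ze_neg, ze_add, ze_add, ze_add] at z
    have n1 := ze_ne_zero (3 * r * ((C : ℤ) * a₁ - 1))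
    have n2 := ze_ne_zero (-(r * ((C : ℤ) * a₁) * -(D * a₁)))
    rw [← pw'] at z
    field_simp at z
    linear_combination (jacobiSym (-(D * a₁)) g₂ : ℂ) ^ r * z - 
      (ze (3 * r * ((C : ℤ) * a₂ - 1)) * (jacobiSym (A * a₂) g₁ : ℂ) ^ r *
      ze (-(r * (C * a₂) * (A * a₂))) * ((jacobiSym D C : ℂ) ^ r *
        ze (r * ((A + D) * C - B * D * (C ^ 2 - 1) - 3 * C + 3)))) * s2'

/-- Inversion maps the summand of one primitive matrix to the summand of another one. -/
lemma heckeTerm_S {r a₁ a₂ C : ℕ} (h1 : 0 < a₁) (h2 : 0 < a₂) (hC : 0 < C)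
    (hco : Nat.Coprime a₁ a₂) (h24 : (24 : ℤ) ∣ r * ((C : ℤ) * a₁ * a₂ - 1))
    (hsq : Odd r → IsSquare (C * a₁ * a₂)) {A B D : ℤ} (hdet : A * D - B * C = 1)
    {τ : ℂ} (hτ : 0 < τ.im) :
    heckeTerm r a₁ (C * a₂) (A * a₂) (-1 / τ) =
      Complex.sqrt (τ / Complex.I) ^ r * heckeTerm r a₂ (C * a₁) (-(D * a₁)) τ := by
  have hg1 : Nat.gcd a₁ (C * a₂) = Nat.gcd a₁ C := Nat.Coprime.gcd_mul_right_cancel_right C hco.symm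
  have hg2 : Nat.gcd a₂ (C * a₁) = Nat.gcd a₂ C := Nat.Coprime.gcd_mul_right_cancel_right C hco
  have n1 : (a₁ : ℂ) ≠ 0 := by exact_mod_cast h1.ne'
  have n2 : (a₂ : ℂ) ≠ 0 := by exact_mod_cast h2.ne'
  have nC : (C : ℂ) ≠ 0 := by exact_mod_cast hC.ne'
  have h0 : τ ≠ 0 := by rintro rfl; simp at hτ
  -- the point at which `η` is evaluated after the inversion
  set σ : ℂ := (a₂ * τ + (-(D * a₁) : ℤ)) / ((C * a₁ : ℕ) : ℂ) with hσ
  have hσim : 0 < σ.im := by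
    have : σ = ((a₂ / (C * a₁) : ℝ) : ℂ) * τ - ((D / C : ℝ) : ℂ) := by
      rw [hσ]; push_cast; field_simp; ring
    rw [this, Complex.sub_im, Complex.im_ofReal_mul, Complex.ofReal_im, sub_zero]
    positivity
  have eden : (C : ℂ) * σ + D = a₂ * τ / a₁ := by
    rw [hσ]; push_cast; field_simp; ring
  have enum : (a₁ * (-1 / τ) + ((A * a₂ : ℤ) : ℂ)) / ((C * a₂ : ℕ) : ℂ) =
      ((A : ℂ) * σ + B) / ((C : ℤ) * σ + D) := by
    have hd : (A : ℂ) * D - B * C = 1 := by exact_mod_cast hdet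
    have : (A : ℂ) * σ + B = (A * a₂ * τ - a₁) / (C * a₁) := by
      rw [hσ]; push_cast; field_simp; linear_combination (-(a₁ : ℂ)) * hd
    rw [this, Int.cast_natCast, eden]
    push_cast; field_simp; ring
  have tr := eta_pow_trans (c := C) (by exact_mod_cast hC) hdet r
    (odd_or_eight_dvd (x := a₁ * a₂) (by rw [← mul_assoc]; exact h24)) hσim
  rw [← enum, Int.cast_natCast, eden, Int.natAbs_natCast] at tr
  have hs : ((√a₁ : ℝ) : ℂ) * Complex.sqrt (a₂ * τ / a₁ / Complex.I) =
      ((√a₂ : ℝ) : ℂ) * Complex.sqrt (τ / Complex.I) := by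
    have hre : 0 < (τ / Complex.I).re := by rw [div_I_re]; exact hτ
    have p1 : (0 : ℝ) < a₁ := by exact_mod_cast h1
    have p2 : (0 : ℝ) < a₂ := by exact_mod_cast h2
    have : (a₂ : ℂ) * τ / a₁ / Complex.I = ((a₂ / a₁ : ℝ) : ℂ) * (τ / Complex.I) := by
      push_cast; field_simp
    rw [this, sqrt_real_mul (by positivity) hre, ← mul_assoc, ← Complex.ofReal_mul,
      ← Real.sqrt_mul p1.le]
    congr 4; field_simp
  have ph := phase h1 h2 hco h24 hsq hdet
  rw [heckeTerm, heckeTerm, tr, hg1, hg2, ← hσ]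
  push_cast at ph ⊢
  have hs' := congrArg (· ^ r) hs
  simp only [mul_pow] at hs'
  linear_combination (((√a₁ : ℝ) : ℂ) ^ r * Complex.sqrt (a₂ * τ / a₁ / Complex.I) ^ r *
    dedekindEta σ ^ r) * ph + (ze (3 * r * ((C : ℤ) * a₁ - 1)) *
      (jacobiSym (-(D * a₁)) (Nat.gcd a₂ C) : ℂ) ^ r *
      ze (-(r * (C * a₁) * -(D * a₁))) * dedekindEta σ ^ r) * hs'

/-- The representative in `[0, C)` of `-A⁻¹` modulo `C`, for `A` prime to `C > 0`. -/
def negInv (C A : ℕ) : ℕ := (-((A : ZMod C))⁻¹).val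

lemma negInv_lt {C : ℕ} (hC : 0 < C) (A : ℕ) : negInv C A < C := by
  have : NeZero C := ⟨hC.ne'⟩
  exact ZMod.val_lt _

lemma negInv_dvd {C A : ℕ} (hC : 0 < C) (h : Nat.Coprime A C) : C ∣ A * negInv C A + 1 := by
  have : NeZero C := ⟨hC.ne'⟩
  rw [← ZMod.natCast_eq_zero_iff]
  push_cast
  rw [negInv, ZMod.natCast_val, ZMod.cast_id, mul_neg, ZMod.coe_mul_inv_eq_one A h]
  ring

lemma negInv_coprime {C A : ℕ} (hC : 0 < C) (h : Nat.Coprime A C) : Nat.Coprime (negInv C A) C := by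
  obtain ⟨k, hk⟩ := negInv_dvd hC h
  apply Nat.isCoprime_iff_coprime.mp
  refine ⟨-A, k, ?_⟩
  have : (A : ℤ) * negInv C A + 1 = C * k := by exact_mod_cast hk
  linear_combination -this

lemma negInv_negInv {C A : ℕ} (hA : A < C) (h : Nat.Coprime A C) : negInv C (negInv C A) = A := by
  have hC : 0 < C := by lia
  have : NeZero C := ⟨hC.ne'⟩
  have h1 := ZMod.coe_mul_inv_eq_one A h
  have h2 := ZMod.coe_mul_inv_eq_one _ (negInv_coprime hC h)
  have h3 : ((negInv C A : ℕ) : ZMod C) = -((A : ZMod C))⁻¹ := by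
    rw [negInv, ZMod.natCast_val, ZMod.cast_id]
  have h4 : -(((negInv C A : ℕ) : ZMod C))⁻¹ = A := by
    rw [h3] at h2 ⊢
    linear_combination (A : ZMod C) * h2 + (-(A : ZMod C)⁻¹)⁻¹ * h1
  rw [negInv, h4, ZMod.val_natCast, Nat.mod_eq_of_lt hA]

/-- Representatives `(a, b)` of the primitive integral matrices `(a b; 0 l/a)` of determinant `l`,
modulo translations. -/
def primPairs (l : ℕ) : Finset (Σ _ : ℕ, ℕ) :=
  l.divisors.sigma fun a => (Finset.range (l / a)).filter fun b => Nat.gcd (Nat.gcd a (l / a)) b = 1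

/-- The involution of `primPairs l` induced by right multiplication by `(0 -1; 1 0)`; in the
parametrization of `exists_params` it exchanges `a₁` and `a₂` and replaces `A` by `-A⁻¹`. -/
def pairInv (l : ℕ) (x : Σ _ : ℕ, ℕ) : Σ _ : ℕ, ℕ :=
  ⟨Nat.gcd x.2 (l / x.1),
    negInv (l / x.1 / Nat.gcd x.2 (l / x.1)) (x.2 / Nat.gcd x.2 (l / x.1)) * x.1⟩

/-- Every primitive matrix is `(a₁, A a₂; 0, C a₂)` with `A` prime to `C` and `a₁` prime to `a₂`:
take `a₂ = gcd (b, d)`. -/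
lemma exists_params {l : ℕ} (hl : 0 < l) {x : Σ _ : ℕ, ℕ} (hx : x ∈ primPairs l) :
    ∃ a₁ a₂ C A : ℕ, 0 < a₁ ∧ 0 < a₂ ∧ 0 < C ∧ A < C ∧ Nat.Coprime A C ∧ Nat.Coprime a₁ a₂ ∧
      l = C * a₁ * a₂ ∧ x = ⟨a₁, A * a₂⟩ := by
  obtain ⟨a, b⟩ := x
  simp only [primPairs, Finset.mem_sigma, Nat.mem_divisors, Finset.mem_filter,
    Finset.mem_range] at hx
  obtain ⟨⟨⟨d, rfl⟩, -⟩, hb, hg⟩ := hx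
  have ha : 0 < a := Nat.pos_of_mul_pos_right hl
  rw [Nat.mul_div_cancel_left d ha] at hb hg
  have hd : 0 < d := by lia
  obtain ⟨C, hC⟩ := Nat.gcd_dvd_right b d
  obtain ⟨A, hA⟩ := Nat.gcd_dvd_left b d
  have hpos : 0 < Nat.gcd b d := Nat.gcd_pos_of_pos_right _ hd
  refine ⟨a, Nat.gcd b d, C, A, ha, hpos, ?_, ?_, ?_, ?_, ?_, ?_⟩
  · apply Nat.pos_of_ne_zero; rintro rfl; simp at hC; lia
  · exact Nat.lt_of_mul_lt_mul_left (a := Nat.gcd b d) (by rw [← hA, ← hC]; exact hb)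
  · have h := Nat.gcd_mul_left (Nat.gcd b d) A C
    rw [← hA, ← hC] at h
    exact Nat.eq_of_mul_eq_mul_left hpos (by rw [← h, mul_one])
  · rw [Nat.Coprime, Nat.gcd_comm b d, ← Nat.gcd_assoc]; exact hg
  · conv_lhs => rw [hC]
    ring
  · conv_lhs => rw [hA]
    rw [mul_comm]

lemma params_mem {a₁ a₂ C A : ℕ} (h1 : 0 < a₁) (h2 : 0 < a₂) (hA : A < C) (hAC : Nat.Coprime A C)
    (hco : Nat.Coprime a₁ a₂) : (⟨a₁, A * a₂⟩ : Σ _ : ℕ, ℕ) ∈ primPairs (C * a₁ * a₂) := by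
  have hd : C * a₁ * a₂ / a₁ = C * a₂ := by
    rw [show C * a₁ * a₂ = a₁ * (C * a₂) by ring, Nat.mul_div_cancel_left _ h1]
  simp only [primPairs, Finset.mem_sigma, Nat.mem_divisors, Finset.mem_filter,
    Finset.mem_range, hd]
  refine ⟨⟨⟨C * a₂, by ring⟩, ?_⟩, Nat.mul_lt_mul_of_pos_right hA h2, ?_⟩
  · have : 0 < C := by lia
    positivity
  · rw [Nat.gcd_assoc, Nat.gcd_mul_right, Nat.gcd_comm C A, hAC, one_mul]; exact hco

lemma pairInv_params {a₁ a₂ C A : ℕ} (h1 : 0 < a₁) (h2 : 0 < a₂) (hAC : Nat.Coprime A C) :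
    pairInv (C * a₁ * a₂) ⟨a₁, A * a₂⟩ = ⟨a₂, negInv C A * a₁⟩ := by
  have hd : C * a₁ * a₂ / a₁ = C * a₂ := by
    rw [show C * a₁ * a₂ = a₁ * (C * a₂) by ring, Nat.mul_div_cancel_left _ h1]
  simp only [pairInv, hd]
  rw [Nat.gcd_mul_right, hAC, one_mul, Nat.mul_div_cancel _ h2, Nat.mul_div_cancel _ h2]

/-- The Hecke-type operator applied to `η^r`: the sum of `heckeTerm` over primitive matrices. -/
def heckeSum (r l : ℕ) (τ : ℂ) : ℂ :=
  ∑ x ∈ primPairs l, heckeTerm r x.1 (l / x.1) x.2 τ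

lemma heckeSum_S {r l : ℕ} (hl : 0 < l) (h24 : (24 : ℤ) ∣ r * ((l : ℤ) - 1))
    (hsq : Odd r → IsSquare l) {τ : ℂ} (hτ : 0 < τ.im) :
    heckeSum r l (-1 / τ) = Complex.sqrt (τ / Complex.I) ^ r * heckeSum r l τ := by
  rw [heckeSum, heckeSum, Finset.mul_sum]
  apply Finset.sum_nbij' (pairInv l) (pairInv l)
  · intro x hx
    obtain ⟨a₁, a₂, C, A, h1, h2, hC, hA, hAC, hco, rfl, rfl⟩ := exists_params hl hx
    rw [pairInv_params h1 h2 hAC, mul_right_comm C]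
    exact params_mem h2 h1 (negInv_lt hC A) (negInv_coprime hC hAC) hco.symm
  · intro x hx
    obtain ⟨a₁, a₂, C, A, h1, h2, hC, hA, hAC, hco, rfl, rfl⟩ := exists_params hl hx
    rw [pairInv_params h1 h2 hAC, mul_right_comm C]
    exact params_mem h2 h1 (negInv_lt hC A) (negInv_coprime hC hAC) hco.symm
  · intro x hx
    obtain ⟨a₁, a₂, C, A, h1, h2, hC, hA, hAC, hco, rfl, rfl⟩ := exists_params hl hx
    rw [pairInv_params h1 h2 hAC, mul_right_comm C, pairInv_params h2 h1 (negInv_coprime hC hAC),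
      negInv_negInv hA hAC]
  · intro x hx
    obtain ⟨a₁, a₂, C, A, h1, h2, hC, hA, hAC, hco, rfl, rfl⟩ := exists_params hl hx
    rw [pairInv_params h1 h2 hAC, mul_right_comm C, pairInv_params h2 h1 (negInv_coprime hC hAC),
      negInv_negInv hA hAC]
  · intro x hx
    obtain ⟨a₁, a₂, C, A, h1, h2, hC, hA, hAC, hco, rfl, rfl⟩ := exists_params hl hx
    rw [pairInv_params h1 h2 hAC]
    have hd1 : C * a₁ * a₂ / a₁ = C * a₂ := by
      rw [show C * a₁ * a₂ = a₁ * (C * a₂) by ring, Nat.mul_div_cancel_left _ h1]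
    have hd2 : C * a₁ * a₂ / a₂ = C * a₁ := Nat.mul_div_cancel _ h2
    obtain ⟨k, hk⟩ := negInv_dvd hC hAC
    have hk' : (A : ℤ) * negInv C A + 1 = C * k := by exact_mod_cast hk
    have := heckeTerm_S h1 h2 hC hco (by push_cast at h24; exact h24) hsq (A := A) (B := -k)
      (D := -(negInv C A : ℤ)) (by linear_combination -hk') hτ
    simp only [hd1, hd2]
    push_cast
    rw [this]
    congr 2
    ring

/-! ### The Fourier expansion of the Hecke-type sum -/

/-- The residues `b` modulo `d` for which the matrix `(a b; 0 d)` is primitive. -/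
def cop (a d : ℕ) : Finset ℕ := (Finset.range d).filter fun b => Nat.gcd (Nat.gcd a d) b = 1

/-- The twisted Ramanujan sum `∑ (b | g)^r e(b j / d)` over `b` modulo `d` prime to
`g = gcd (a, d)`. -/
def expSum (r a d : ℕ) (j : ℤ) : ℂ :=
  ∑ b ∈ cop a d, (jacobiSym b (Nat.gcd a d) : ℂ) ^ r * e2 ((b : ℂ) * j / d)

/-- The contribution of the matrices `(a *; 0 d)` to the coefficient of `q^{n/24}`, where `P` holds
the coefficients of `η^r`. Since `P` vanishes off the natural numbers, only those `n` matter for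
which `k = (n d / a - r) / 24` is a natural number; the sum is then an `expSum`, see `hCoef_eq`. -/
def hCoef (P : ℚ → ℂ) (r a d : ℕ) (n : ℤ) : ℂ :=
  ((√a : ℝ) : ℂ) ^ r * ze (3 * r * ((d : ℤ) - 1)) *
    (∑ b ∈ cop a d, (jacobiSym b (Nat.gcd a d) : ℂ) ^ r * e2 ((b : ℂ) * (n - r * (a * d)) / (24 * a))) *
    P (((n : ℚ) * d / a - r) / 24)

/-- A sum over residues modulo `d` may be shifted by a multiple of `gcd (a, d)`. -/
lemma sum_cop_shift {a d : ℕ} (hd : 0 < d) (s : ℕ) (hs : Nat.gcd a d ∣ s) (f : ℕ → ℂ)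
    (hf : ∀ b, f (b + d) = f b) : ∑ b ∈ cop a d, f (b + s) = ∑ b ∈ cop a d, f b := by
  have hfm : ∀ b, f (b % d) = f b := fun b => by
    have hp : Function.Periodic f d := hf
    exact hp.map_mod_nat b
  have hg : ∀ b, Nat.gcd (Nat.gcd a d) (b % d) = Nat.gcd (Nat.gcd a d) b := fun b => by
    obtain ⟨k, hk⟩ := Nat.gcd_dvd_right a d
    conv_rhs => rw [← Nat.mod_add_div b d]
    conv_rhs => enter [2, 2]; rw [hk, mul_assoc]
    rw [Nat.gcd_add_mul_left_right]
  have hgs : ∀ b, Nat.gcd (Nat.gcd a d) (b + s) = Nat.gcd (Nat.gcd a d) b := fun b => by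
    obtain ⟨k, rfl⟩ := hs
    rw [Nat.gcd_add_mul_left_right]
  have hinj : Set.InjOn (fun b => (b + s) % d) (cop a d : Set ℕ) := by
    intro x hx y hy hxy
    simp only [cop, Finset.coe_filter, Finset.mem_range, Set.mem_ofPred_eq] at hx hy
    have h : x ≡ y [MOD d] := Nat.ModEq.add_right_cancel' s hxy
    exact Nat.ModEq.eq_of_lt_of_lt h hx.1 hy.1
  have hmaps : ∀ b ∈ cop a d, (b + s) % d ∈ cop a d := by
    intro b hb
    simp only [cop, Finset.mem_filter, Finset.mem_range] at hb ⊢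
    exact ⟨Nat.mod_lt _ hd, by rw [hg, hgs]; exact hb.2⟩
  have himg : (cop a d).image (fun b => (b + s) % d) = cop a d :=
    Finset.eq_of_subset_of_card_le (Finset.image_subset_iff.mpr hmaps)
      (by rw [Finset.card_image_of_injOn hinj])
  conv_rhs => rw [← himg, Finset.sum_image hinj]
  exact Finset.sum_congr rfl fun b _ => (hfm _).symm

lemma jac_add_mul (b : ℕ) (g k : ℕ) : jacobiSym ((b + g * k : ℕ) : ℤ) g = jacobiSym b g := by
  apply jacobiSym.mod_left'
  push_cast
  exact Int.add_mul_emod_self_left ..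

/-- Shifting `b` by `gcd (a, d)` multiplies the sum by a root of unity, which has to be `1`. -/
lemma expSum_ne_zero {r a d : ℕ} (hd : 0 < d) {j : ℤ} (h : expSum r a d j ≠ 0) :
    (d : ℤ) ∣ Nat.gcd a d * j := by
  have hd' : (d : ℂ) ≠ 0 := by exact_mod_cast hd.ne'
  have hsh := sum_cop_shift (a := a) hd (Nat.gcd a d) dvd_rfl
    (fun b => (jacobiSym b (Nat.gcd a d) : ℂ) ^ r * e2 ((b : ℂ) * j / d)) (fun b => by
      obtain ⟨k, hk⟩ := Nat.gcd_dvd_right a d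
      have h1 : jacobiSym ((b + d : ℕ) : ℤ) (Nat.gcd a d) = jacobiSym b (Nat.gcd a d) := by
        conv_lhs => enter [1, 1, 2]; rw [hk]
        exact jac_add_mul ..
      rw [h1, show (((b + d : ℕ) : ℂ) * j / d) = b * j / d + j by push_cast; field_simp,
        e2_add_int])
  have e1 : ∀ b : ℕ, (jacobiSym ((b + Nat.gcd a d : ℕ) : ℤ) (Nat.gcd a d) : ℂ) ^ r *
      e2 (((b + Nat.gcd a d : ℕ) : ℂ) * j / d) = e2 (((Nat.gcd a d : ℕ) : ℂ) * j / d) *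
        ((jacobiSym b (Nat.gcd a d) : ℂ) ^ r * e2 ((b : ℂ) * j / d)) := fun b => by
    have := jac_add_mul b (Nat.gcd a d) 1
    rw [mul_one] at this
    rw [this, Nat.cast_add, add_mul, add_div, e2_add]; ring
  simp only [e1, ← Finset.mul_sum] at hsh
  change e2 _ * expSum r a d j = expSum r a d j at hsh
  have h2 : e2 (((Nat.gcd a d : ℕ) : ℂ) * j / d) = 1 := by
    apply mul_right_cancel₀ h; rw [hsh, one_mul]
  obtain ⟨n, hn⟩ := (e2_eq_one_iff _).mp h2
  rw [div_eq_iff hd'] at hn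
  have hn' : ((Nat.gcd a d : ℕ) : ℤ) * j = n * d := by exact_mod_cast hn
  exact ⟨n, by rw [hn', mul_comm]⟩

/-- For a coefficient index `k` of `η^r` contributing to the Hecke sum, the resulting exponent
has the form `r + 24 m`. -/
lemma exists_index {r a d k : ℕ} (hr : r ≤ 24) (ha : 0 < a) (hd : 0 < d)
    (h24 : (24 : ℤ) ∣ r * ((a : ℤ) * d - 1)) {j : ℤ}
    (hj : 24 * j = 24 * (k : ℤ) - r * ((d : ℤ) ^ 2 - 1)) (h : expSum r a d j ≠ 0) :
    ∃ m : ℕ, (r + 24 * k) * a = (r + 24 * m) * d := by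
  have h1 := expSum_ne_zero hd h
  have h2 : (d : ℤ) ∣ a * j := by
    obtain ⟨u, hu⟩ := Nat.gcd_dvd_left a d
    have : (a : ℤ) = Nat.gcd a d * u := by exact_mod_cast hu
    rw [this, mul_right_comm]
    exact h1.mul_right _
  obtain ⟨v, hv⟩ := h2
  obtain ⟨w, hw⟩ := h24
  -- the exponent is `x = r a d + 24 v`
  have hx : ((r : ℤ) + 24 * k) * a = (r + 24 * (w + v)) * d := by
    linear_combination (-(a : ℤ)) * hj + 24 * hv + d * hw
  have hpos : 0 ≤ w + v := by
    by_contra hneg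
    have hneg' : (r : ℤ) + 24 * (w + v) ≤ 0 := by lia
    have h3 : ((r : ℤ) + 24 * k) * a ≤ 0 := by
      rw [hx]; exact mul_nonpos_of_nonpos_of_nonneg hneg' (by positivity)
    have h4 : (0 : ℤ) < a := by exact_mod_cast ha
    have h5 : (r : ℤ) + 24 * k ≤ 0 := by
      by_contra h6
      have : 0 < ((r : ℤ) + 24 * k) * a := mul_pos (by lia) h4
      lia
    have hr0 : r = 0 := by lia
    have hk0 : k = 0 := by lia
    subst hr0; subst hk0
    simp at hx
    lia
  lift w + v to ℕ using hpos with m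
  exact ⟨m, by exact_mod_cast hx⟩

/-- Coefficients of `η^r`, as a series at arbitrary points of the upper half-plane. -/
lemma hasSum_eta {r : ℕ} {P : ℚ → ℂ} (hP : IsEtaPowerCoeffs r P) {τ : ℂ} (hτ : 0 < τ.im) :
    HasSum (fun n : ℕ => P n * e2 (((r : ℂ) / 24 + n) * τ)) (dedekindEta τ ^ r) := by
  have := hP.2 ⟨τ, hτ⟩
  simpa using this

lemma hasSum_of_eq {f g : ℕ → ℂ} {s : ℂ} (h : HasSum f s) (hfg : ∀ k, g k = f k) :
    HasSum g s := by
  rwa [funext hfg]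

/-- Rewriting of `hCoef` when the index `k` of the coefficient of `η^r` is a natural number. -/
lemma hCoef_eq {P : ℚ → ℂ} {r a d k : ℕ} {n j : ℤ} (ha : 0 < a) (hd : 0 < d)
    (hj : 24 * j = 24 * (k : ℤ) - r * ((d : ℤ) ^ 2 - 1)) (hn : ((r : ℤ) + 24 * k) * a = n * d) :
    hCoef P r a d n =
      ((√a : ℝ) : ℂ) ^ r * ze (3 * r * ((d : ℤ) - 1)) * expSum r a d j * P k := by
  have ha' : (a : ℂ) ≠ 0 := by exact_mod_cast ha.ne'
  have hd' : (d : ℂ) ≠ 0 := by exact_mod_cast hd.ne'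
  have h1 : ((n : ℚ) * d / a - r) / 24 = k := by
    have : (a : ℚ) ≠ 0 := by exact_mod_cast ha.ne'
    have hn' : ((r : ℚ) + 24 * k) * a = n * d := by exact_mod_cast hn
    rw [← hn']; field_simp; ring
  have h2 : ((n : ℂ) - r * (a * d)) / (24 * a) = j / d := by
    have hn' : ((r : ℂ) + 24 * k) * a = n * d := by exact_mod_cast hn
    have hj' : 24 * (j : ℂ) = 24 * k - r * ((d : ℂ) ^ 2 - 1) := by exact_mod_cast hj
    field_simp
    linear_combination -hn' - a * hj'
  rw [hCoef, h1, expSum]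
  simp only [mul_div_assoc, h2]

/-- The argument of `expSum` in `hCoef_eq` is integral. -/
lemma exists_j {r a d : ℕ} (h24 : (24 : ℤ) ∣ r * ((a : ℤ) * d - 1)) (k : ℕ) :
    ∃ j : ℤ, 24 * j = 24 * (k : ℤ) - r * ((d : ℤ) ^ 2 - 1) := by
  obtain ⟨m, hm⟩ := dvd_sq_sub_one (r := r) (x := d) (y := a)
    (by rw [mul_comm (d : ℤ) a]; exact h24)
  exact ⟨k - m, by rw [hm]; ring⟩

/-- The coefficients are supported on the exponents `r + 24 m`. -/
lemma hCoef_ne_zero {P : ℚ → ℂ} {r a d : ℕ} {n : ℤ} (hP : IsEtaPowerCoeffs r P) (hr : r ≤ 24)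
    (ha : 0 < a) (hd : 0 < d) (h24 : (24 : ℤ) ∣ r * ((a : ℤ) * d - 1))
    (h : hCoef P r a d n ≠ 0) : ∃ m k : ℕ, n = r + 24 * m ∧ (r + 24 * k) * a = (r + 24 * m) * d := by
  have hPn : P (((n : ℚ) * d / a - r) / 24) ≠ 0 := right_ne_zero_of_mul h
  obtain ⟨k, hk⟩ : ∃ k : ℕ, ((n : ℚ) * d / a - r) / 24 = k := by
    by_contra h0; exact hPn (hP.1 _ h0)
  have hn : ((r : ℤ) + 24 * k) * a = n * d := by
    have : (a : ℚ) ≠ 0 := by exact_mod_cast ha.ne'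
    have h1 : ((r : ℚ) + 24 * k) * a = n * d := by
      rw [← hk]; field_simp; ring
    exact_mod_cast h1
  obtain ⟨j, hj⟩ := exists_j h24 k
  rw [hCoef_eq ha hd hj hn] at h
  obtain ⟨m, hm⟩ := exists_index hr ha hd h24 hj (right_ne_zero_of_mul (left_ne_zero_of_mul h))
  refine ⟨m, k, ?_, hm⟩
  have hd' : (d : ℤ) ≠ 0 := by exact_mod_cast hd.ne'
  apply mul_right_cancel₀ hd'
  rw [← hn]; exact_mod_cast hm

/-- The contribution of all `(a b; 0 d)` with fixed `a`, `d`, as a Fourier series. -/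
lemma hasSum_heckeTerm {P : ℚ → ℂ} {r a d : ℕ} (hP : IsEtaPowerCoeffs r P) (hr : r ≤ 24)
    (ha : 0 < a) (hd : 0 < d) (h24 : (24 : ℤ) ∣ r * ((a : ℤ) * d - 1)) {τ : ℂ} (hτ : 0 < τ.im) :
    HasSum (fun m : ℕ => hCoef P r a d (r + 24 * m) * e2 (((r : ℂ) / 24 + m) * τ))
      (∑ b ∈ cop a d, heckeTerm r a d b τ) := by
  have ha' : (a : ℂ) ≠ 0 := by exact_mod_cast ha.ne'
  have hd' : (d : ℂ) ≠ 0 := by exact_mod_cast hd.ne'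
  choose j hj using exists_j h24
  -- expansion indexed by the exponents of `η^r`
  have h1 : HasSum (fun k : ℕ => ((√a : ℝ) : ℂ) ^ r * ze (3 * r * ((d : ℤ) - 1)) *
      expSum r a d (j k) * P k * e2 (((r : ℂ) / 24 + k) * (a * τ / d)))
      (∑ b ∈ cop a d, heckeTerm r a d b τ) := by
    have h2 : ∀ b ∈ cop a d, HasSum (fun k : ℕ => ((√a : ℝ) : ℂ) ^ r * ze (3 * r * ((d : ℤ) - 1)) *
        ((jacobiSym b (Nat.gcd a d) : ℂ) ^ r * e2 ((b : ℂ) * j k / d)) * P k *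
        e2 (((r : ℂ) / 24 + k) * (a * τ / d))) (heckeTerm r a d b τ) := by
      intro b _
      have him : 0 < ((a * τ + b) / d).im := by
        have : ((a : ℂ) * τ + b) / d = ((a / d : ℝ) : ℂ) * τ + ((b / d : ℝ) : ℂ) := by
          push_cast; field_simp
        rw [this, Complex.add_im, Complex.im_ofReal_mul, Complex.ofReal_im, add_zero]
        have : (0 : ℝ) < a := by exact_mod_cast ha
        have : (0 : ℝ) < d := by exact_mod_cast hd
        positivity
      have := (hasSum_eta hP him).mul_left (((√a : ℝ) : ℂ) ^ r * ze (3 * r * ((d : ℤ) - 1)) *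
        (jacobiSym b (Nat.gcd a d) : ℂ) ^ r * ze (-(r * d * b)))
      have hval : heckeTerm r a d b τ = ((√a : ℝ) : ℂ) ^ r * ze (3 * r * ((d : ℤ) - 1)) *
          (jacobiSym b (Nat.gcd a d) : ℂ) ^ r * ze (-(r * d * b)) *
          dedekindEta ((a * τ + b) / d) ^ r := by
        rw [heckeTerm, Int.cast_natCast]
      rw [hval]
      refine hasSum_of_eq this fun k => ?_
      have hj' : 24 * (j k : ℂ) = 24 * k - r * ((d : ℂ) ^ 2 - 1) := by exact_mod_cast hj k
      have e : e2 ((b : ℂ) * j k / d) * e2 (((r : ℂ) / 24 + k) * (a * τ / d)) =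
          ze (-(r * d * b)) * e2 (((r : ℂ) / 24 + k) * ((a * τ + b) / d)) := by
        rw [ze, ← e2_add, ← e2_add]
        congr 1
        push_cast
        field_simp
        linear_combination (b : ℂ) * hj'
      linear_combination (((√a : ℝ) : ℂ) ^ r * ze (3 * r * ((d : ℤ) - 1)) *
        (jacobiSym b (Nat.gcd a d) : ℂ) ^ r * P k) * e
    have h3 := hasSum_sum h2
    refine hasSum_of_eq h3 fun k => ?_
    rw [expSum, Finset.mul_sum, Finset.sum_mul, Finset.sum_mul]
  have key : ∀ k m : ℕ, (r + 24 * k) * a = (r + 24 * m) * d →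
      hCoef P r a d (r + 24 * m) * e2 (((r : ℂ) / 24 + m) * τ) =
      ((√a : ℝ) : ℂ) ^ r * ze (3 * r * ((d : ℤ) - 1)) * expSum r a d (j k) * P k *
        e2 (((r : ℂ) / 24 + k) * (a * τ / d)) := by
    intro k m hkm
    rw [hCoef_eq ha hd (hj k) (by exact_mod_cast hkm)]
    congr 2
    have hkm' : ((r : ℂ) + 24 * k) * a = (r + 24 * m) * d := by exact_mod_cast hkm
    field_simp
    linear_combination -τ * hkm'
  set g : ℕ → ℂ := fun k => ((√a : ℝ) : ℂ) ^ r *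
      ze (3 * r * ((d : ℤ) - 1)) * expSum r a d (j k) * P k * e2 (((r : ℂ) / 24 + k) * (a * τ / d))
    with hg
  have hex : ∀ k : Function.support g, ∃ m : ℕ, (r + 24 * k) * a = (r + 24 * m) * d := by
    rintro ⟨k, hk⟩
    exact exists_index hr ha hd h24 (hj k)
      (right_ne_zero_of_mul (left_ne_zero_of_mul (left_ne_zero_of_mul hk)))
  choose i hi using hex
  refine (hasSum_iff_hasSum_of_ne_zero_bij (g := g) i ?_ ?_ ?_).mpr h1
  · rintro ⟨x, hx⟩ ⟨y, hy⟩ hxy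
    have h2 := hi ⟨x, hx⟩
    have h3 := hi ⟨y, hy⟩
    simp only at hxy h2 h3
    rw [hxy, ← h3] at h2
    have := Nat.eq_of_mul_eq_mul_right ha h2
    simp only [Subtype.mk.injEq]
    lia
  · intro m hm
    obtain ⟨m', k, h2, h3⟩ := hCoef_ne_zero hP hr ha hd h24 (left_ne_zero_of_mul hm)
    obtain rfl : m = m' := by lia
    have hk : k ∈ Function.support g := by
      rw [Function.mem_support, hg]
      simp only
      rw [← key k m h3]; exact hm
    refine ⟨⟨k, hk⟩, ?_⟩
    have h4 := hi ⟨k, hk⟩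
    simp only at h4
    rw [h3] at h4
    have := Nat.eq_of_mul_eq_mul_right hd h4
    lia
  · intro x
    exact key x (i x) (hi x)

/-- The Fourier coefficients of `heckeSum`. -/
def totalCoef (P : ℚ → ℂ) (r l : ℕ) (n : ℤ) : ℂ := ∑ a ∈ l.divisors, hCoef P r a (l / a) n

lemma hasSum_heckeSum {P : ℚ → ℂ} {r l : ℕ} (hP : IsEtaPowerCoeffs r P) (hr : r ≤ 24)
    (hl : 0 < l) (h24 : (24 : ℤ) ∣ r * ((l : ℤ) - 1)) {τ : ℂ} (hτ : 0 < τ.im) :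
    HasSum (fun m : ℕ => totalCoef P r l (r + 24 * m) * e2 (((r : ℂ) / 24 + m) * τ))
      (heckeSum r l τ) := by
  have h1 : ∀ a ∈ l.divisors, HasSum
      (fun m : ℕ => hCoef P r a (l / a) (r + 24 * m) * e2 (((r : ℂ) / 24 + m) * τ))
      (∑ b ∈ cop a (l / a), heckeTerm r a (l / a) b τ) := by
    intro a ha
    have hal := (Nat.mem_divisors.mp ha).1
    refine hasSum_heckeTerm hP hr (Nat.pos_of_dvd_of_pos hal hl)
      (Nat.div_pos (Nat.le_of_dvd hl hal) (Nat.pos_of_dvd_of_pos hal hl)) ?_ hτ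
    rw [← Nat.cast_mul, Nat.mul_div_cancel' hal]; exact h24
  have h2 := hasSum_sum h1
  rw [heckeSum, primPairs, Finset.sum_sigma]
  refine hasSum_of_eq h2 fun m => ?_
  rw [totalCoef, Finset.sum_mul]

lemma totalCoef_ne_zero {P : ℚ → ℂ} {r l : ℕ} {n : ℤ} (hP : IsEtaPowerCoeffs r P) (hr : r ≤ 24)
    (hl : 0 < l) (h24 : (24 : ℤ) ∣ r * ((l : ℤ) - 1)) (h : totalCoef P r l n ≠ 0) :
    ∃ m : ℕ, n = r + 24 * m := by
  obtain ⟨a, ha, hne⟩ := Finset.exists_ne_zero_of_sum_ne_zero h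
  have hal := (Nat.mem_divisors.mp ha).1
  obtain ⟨m, -, hm, -⟩ := hCoef_ne_zero hP hr (Nat.pos_of_dvd_of_pos hal hl)
      (Nat.div_pos (Nat.le_of_dvd hl hal) (Nat.pos_of_dvd_of_pos hal hl)) (by
    rw [← Nat.cast_mul, Nat.mul_div_cancel' hal]; exact h24) hne
  exact ⟨m, hm⟩

/-! ### Constancy of the quotient by `η^r` -/

open Filter Topology in
lemma e2_tendsto : Tendsto (fun τ : ℍ => e2 τ) atImInfty (𝓝 0) := by
  have := UpperHalfPlane.qParam_tendsto_atImInfty (h := 1) zero_lt_one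
  refine this.congr fun τ => ?_
  simp [Function.Periodic.qParam, e2]

/-- A convergent `q`-series tends to its constant term at `i∞`. -/
lemma series_tendsto {A : ℕ → ℂ} (hA : Summable fun m : ℕ => A m * e2 (m * Complex.I)) :
    Filter.Tendsto (fun τ : ℍ => ∑' m : ℕ, A m * e2 (m * τ)) atImInfty (nhds (A 0)) := by
  have h0 : A 0 = ∑' m : ℕ, A m * (0 : ℂ) ^ m := by
    rw [tsum_eq_single 0 (fun m hm => by rw [zero_pow hm, mul_zero])]; simp
  rw [h0]
  refine tendsto_tsum_of_dominated_convergence (bound := fun m : ℕ => ‖A m * e2 (m * Complex.I)‖)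
    hA.norm (fun m => ?_) ?_
  · simp only [e2_nat_mul]
    exact (e2_tendsto.pow m).const_mul _
  · have : ∀ᶠ τ : ℍ in atImInfty, 1 ≤ τ.im := by
      rw [atImInfty]; exact Filter.tendsto_comap.eventually (Filter.eventually_ge_atTop 1)
    filter_upwards [this] with τ hτ m
    rw [norm_mul, norm_mul, norm_e2, norm_e2]
    gcongr 2
    simp only [Complex.mul_im, Complex.natCast_re, Complex.natCast_im, Complex.I_im, zero_mul,
      add_zero, mul_one]
    have : (m : ℝ) ≤ m * (τ : ℂ).im := le_mul_of_one_le_right (by positivity) hτ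
    nlinarith [Real.pi_pos]

/-- Uniqueness of `q`-expansions. -/
lemma series_unique (k : ℕ) : ∀ {A : ℕ → ℂ},
    (∀ τ : ℂ, 0 < τ.im → HasSum (fun m : ℕ => A m * e2 (m * τ)) 0) → A k = 0 := by
  have hzero : ∀ {A : ℕ → ℂ},
      (∀ τ : ℂ, 0 < τ.im → HasSum (fun m : ℕ => A m * e2 (m * τ)) 0) → A 0 = 0 := by
    intro A h
    have h1 := series_tendsto (h Complex.I (by simp)).summable
    refine tendsto_nhds_unique h1 (tendsto_const_nhds.congr fun τ => ?_)
    exact (h τ τ.2).tsum_eq.symm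
  induction k with
  | zero => exact hzero
  | succ k ih =>
    intro A h
    refine ih (A := fun m => A (m + 1)) fun τ hτ => ?_
    have h1 := (hasSum_nat_add_iff' 1).mpr (h τ hτ)
    simp only [Finset.sum_range_one, hzero h, zero_mul, sub_zero] at h1
    have h2 := h1.mul_left (e2 (-τ))
    rw [mul_zero] at h2
    refine hasSum_of_eq h2 fun m => ?_
    rw [mul_left_comm, ← e2_add]
    congr 2
    push_cast; ring

open Filter Topology in
lemma prod_tendsto :
    Tendsto (fun τ : ℍ => ∏' n : ℕ, (1 - e2 ((n + 1) * τ))) atImInfty (𝓝 1) := by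
  have htprod : Tendsto (fun q : ℂ ↦ ∏' (n : ℕ), (1 - q ^ (n + 1))) (𝓝 0) (𝓝 1) := by
    have := tendsto_tprod_one_add_of_dominated_convergence (𝓕 := 𝓝 0) (g := 0)
      (f := fun (q : ℂ) (n : ℕ) ↦ -q ^ (n + 1)) (bound := fun n ↦ (1 / 2 : ℝ) ^ (n + 1))
    simp only [Pi.zero_apply, norm_neg, norm_pow, add_zero, tprod_one] at this
    simp_rw [sub_eq_add_neg]
    refine this
      (by simpa only [pow_succ'] using (summable_geometric_of_abs_lt_one (by norm_num)).mul_left _)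
      (fun k ↦ by simpa using ((continuous_pow (M := ℂ) (k + 1)).tendsto 0).neg) ?_
    filter_upwards [Metric.ball_mem_nhds (0 : ℂ) (by norm_num : (0 : ℝ) < 1 / 2)] with q hq k
    exact pow_le_pow_left₀ (norm_nonneg _) (mem_ball_zero_iff.mp hq).le _
  refine (htprod.comp e2_tendsto).congr fun τ => ?_
  simp only [Function.comp]
  congr 1
  funext n
  rw [← e2_nat_mul]; push_cast; rfl

/-- The value of the quotient at the cusp. -/
lemma etaRatio_tendsto {P : ℚ → ℂ} {r l : ℕ} (hP : IsEtaPowerCoeffs r P) (hr : r ≤ 24)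
    (hl : 0 < l) (h24 : (24 : ℤ) ∣ r * ((l : ℤ) - 1)) :
    Filter.Tendsto (fun τ : ℍ => heckeSum r l τ / dedekindEta τ ^ r) atImInfty
      (nhds (totalCoef P r l r)) := by
  have h0 : ∀ τ : ℂ, 0 < τ.im → HasSum
      (fun m : ℕ => totalCoef P r l (r + 24 * m) * e2 (m * τ)) (e2 (-(r / 24 * τ)) * heckeSum r l τ) := by
    intro τ hτ
    refine hasSum_of_eq ((hasSum_heckeSum hP hr hl h24 hτ).mul_left (e2 (-(r / 24 * τ)))) fun m => ?_
    rw [mul_left_comm, ← e2_add]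
    congr 2; ring
  have h1 := series_tendsto (h0 Complex.I (by simp)).summable
  have h2 := (h1.div (prod_tendsto.pow r) (by simp))
  simp only [Nat.cast_zero, mul_zero, add_zero, one_pow, div_one] at h2
  refine h2.congr fun τ => ?_
  rw [Pi.div_apply, (h0 τ τ.2).tsum_eq, dedekindEta, mul_pow, ← e2_nat_mul]
  have : e2 (-(r / 24 * τ)) = (e2 (r * (τ / 24)))⁻¹ := by
    refine eq_inv_of_mul_eq_one_left ?_
    rw [← e2_add, ← e2_zero]; congr 1; ring
  rw [this]
  field_simp

lemma coeff_zero {P : ℚ → ℂ} {r : ℕ} (hP : IsEtaPowerCoeffs r P) : P 0 = 1 := by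
  have h0 : ∀ τ : ℂ, 0 < τ.im → HasSum
      (fun m : ℕ => P m * e2 (m * τ)) (e2 (-(r / 24 * τ)) * dedekindEta τ ^ r) := by
    intro τ hτ
    refine hasSum_of_eq ((hasSum_eta hP hτ).mul_left (e2 (-(r / 24 * τ)))) fun m => ?_
    rw [mul_left_comm, ← e2_add]
    congr 2; ring
  have h1 := series_tendsto (h0 Complex.I (by simp)).summable
  have h2 := prod_tendsto.pow r
  rw [one_pow] at h2
  rw [Nat.cast_zero] at h1
  refine tendsto_nhds_unique h1 (h2.congr fun τ => ?_)
  rw [(h0 τ τ.2).tsum_eq, dedekindEta, mul_pow, ← e2_nat_mul, ← mul_assoc, ← e2_add]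
  have : e2 (-(r / 24 * τ) + r * (τ / 24)) = 1 := by rw [← e2_zero]; congr 1; ring
  rw [this, one_mul]

/-- Read off from the exponents of the Fourier expansion. -/
lemma heckeSum_T {P : ℚ → ℂ} {r l : ℕ} (hP : IsEtaPowerCoeffs r P) (hr : r ≤ 24)
    (hl : 0 < l) (h24 : (24 : ℤ) ∣ r * ((l : ℤ) - 1)) {τ : ℂ} (hτ : 0 < τ.im) :
    heckeSum r l (τ + 1) = ze r * heckeSum r l τ := by
  have h1 := hasSum_heckeSum hP hr hl h24 (τ := τ + 1) (by simpa using hτ)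
  refine h1.unique (hasSum_of_eq ((hasSum_heckeSum hP hr hl h24 hτ).mul_left (ze r)) fun m => ?_)
  rw [mul_left_comm, ze, ← e2_add]
  congr 1
  rw [← e2_add_int (_ + _) m]
  congr 1
  push_cast; ring

lemma dedekindEta_differentiableAt {z : ℂ} (hz : 0 < z.im) :
    DifferentiableAt ℂ dedekindEta z := by
  rw [show dedekindEta = ModularForm.eta from funext dedekindEta_eq]
  exact ModularForm.differentiableAt_eta_of_mem_upperHalfPlaneSet hz

lemma heckeSum_differentiableAt {r l : ℕ} {z : ℂ} (hz : 0 < z.im) :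
    DifferentiableAt ℂ (heckeSum r l) z := by
  unfold heckeSum
  refine DifferentiableAt.fun_sum fun x hx => ?_
  obtain ⟨a, b⟩ := x
  simp only [primPairs, Finset.mem_sigma, Nat.mem_divisors] at hx
  have ha : 0 < a := Nat.pos_of_dvd_of_pos hx.1.1 (Nat.pos_of_ne_zero hx.1.2)
  have hd : 0 < l / a :=
    Nat.div_pos (Nat.le_of_dvd (Nat.pos_of_ne_zero hx.1.2) hx.1.1) ha
  unfold heckeTerm
  refine DifferentiableAt.const_mul (DifferentiableAt.pow ?_ r) _
  have him : 0 < (((a : ℂ) * z + ((b : ℕ) : ℤ)) / (l / a : ℕ)).im := by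
    have : ((a : ℂ) * z + ((b : ℕ) : ℤ)) / (l / a : ℕ) =
        ((a / (l / a : ℕ) : ℝ) : ℂ) * z + ((b / (l / a : ℕ) : ℝ) : ℂ) := by
      have : ((l / a : ℕ) : ℂ) ≠ 0 := by exact_mod_cast hd.ne'
      generalize l / a = d at *
      push_cast; field_simp
    rw [this, Complex.add_im, Complex.im_ofReal_mul, Complex.ofReal_im, add_zero]
    have : (0 : ℝ) < a := by exact_mod_cast ha
    have : (0 : ℝ) < (l / a : ℕ) := by exact_mod_cast hd
    positivity
  exact (dedekindEta_differentiableAt him).comp (f := fun z : ℂ =>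
    ((a : ℂ) * z + ((b : ℕ) : ℤ)) / (l / a : ℕ)) z (by fun_prop)

open ModularForm MatrixGroups in
/-- `heckeSum r l` is a constant multiple of `η^r`: the quotient is a modular function of level
one without poles. -/
lemma heckeSum_eq {P : ℚ → ℂ} {r l : ℕ} (hP : IsEtaPowerCoeffs r P) (hr : r ≤ 24)
    (hl : 0 < l) (h24 : (24 : ℤ) ∣ r * ((l : ℤ) - 1)) (hsq : Odd r → IsSquare l) {τ : ℂ}
    (hτ : 0 < τ.im) : heckeSum r l τ = totalCoef P r l r * dedekindEta τ ^ r := by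
  set φ : ℍ → ℂ := fun τ => heckeSum r l τ / dedekindEta τ ^ r with hφ
  have hlim := etaRatio_tendsto hP hr hl h24
  have hS : (φ ∣[(0 : ℤ)] ModularGroup.S) = φ := by
    ext z
    rw [SL_slash_apply, UpperHalfPlane.modular_S_smul]
    have e1 : (-(z : ℂ))⁻¹ = -1 / (z : ℂ) := by
      rw [neg_div, one_div, inv_neg]
    have e2 : Complex.sqrt ((z : ℂ) / Complex.I) ≠ 0 := by
      intro h0
      have := sqrt_sq' ((z : ℂ) / Complex.I)
      rw [h0] at this
      simp [z.ne_zero] at this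
    simp only [hφ, e1, heckeSum_S hl h24 hsq z.2, eta_S z.2, mul_pow, neg_zero, zpow_zero, mul_one]
    rw [mul_div_mul_left _ _ (pow_ne_zero _ e2)]
  have hT : (φ ∣[(0 : ℤ)] ModularGroup.T) = φ := by
    ext z
    rw [SL_slash_apply, UpperHalfPlane.modular_T_smul]
    have e1 : (((1 : ℝ) +ᵥ z : ℍ) : ℂ) = z + 1 := by
      rw [UpperHalfPlane.coe_vadd]; push_cast; ring
    have e2 := eta_add_int z 1
    rw [Int.cast_one] at e2
    simp only [hφ, e1, heckeSum_T hP hr hl h24 z.2, e2, mul_pow, neg_zero, zpow_zero, mul_one]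
    rw [ze_pow, mul_one, mul_div_mul_left _ _ (ze_ne_zero _)]
  have hbdd : IsBoundedAtImInfty φ := hlim.isBigO_one ℝ
  let F : ModularForm 𝒮ℒ 0 :=
    { toFun := φ
      slash_action_eq' := fun A hA => by
        obtain ⟨A, rfl⟩ := hA
        exact SlashInvariantForm.slash_action_generators_SL2Z hS hT A
      holo' := by
        rw [UpperHalfPlane.mdifferentiable_iff]
        refine DifferentiableOn.congr (f := fun z => heckeSum r l z / dedekindEta z ^ r)
          (fun z hz => ?_) fun z hz => ?_
        · exact ((heckeSum_differentiableAt hz).div ((dedekindEta_differentiableAt hz).pow r)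
            (pow_ne_zero _ (eta_ne hz))).differentiableWithinAt
        · simp [hφ, ofComplex_apply_of_im_pos hz]
      bdd_at_cusps' := fun hc => by
        rw [Subgroup.IsArithmetic.isCusp_iff_isCusp_SL2Z] at hc
        rw [OnePoint.isBoundedAt_iff_forall_SL2Z hc]
        intro γ _
        rw [SlashInvariantForm.slash_action_generators_SL2Z hS hT]
        exact hbdd }
  obtain ⟨c, hc⟩ := ModularFormClass.levelOne_weight_zero_const F
  have hc' : ∀ z, φ z = c := fun z => congr_fun hc z
  -- the constant is the limit at the cusp
  have hcv : c = totalCoef P r l r :=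
    tendsto_nhds_unique (tendsto_const_nhds.congr fun z => (hc' z).symm) hlim
  have := hc' ⟨τ, hτ⟩
  rw [hφ] at this
  simp only at this
  rw [← hcv, ← this, div_mul_cancel₀ _ (pow_ne_zero _ (eta_ne hτ))]

/-- The coefficient form of `heckeSum_eq`. -/
lemma totalCoef_eq {P : ℚ → ℂ} {r l : ℕ} (hP : IsEtaPowerCoeffs r P) (hr : r ≤ 24)
    (hl : 0 < l) (h24 : (24 : ℤ) ∣ r * ((l : ℤ) - 1)) (hsq : Odd r → IsSquare l) (m : ℕ) :
    totalCoef P r l (r + 24 * m) = totalCoef P r l r * P m := by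
  rw [← sub_eq_zero]
  refine series_unique m
    (A := fun m => totalCoef P r l (r + 24 * m) - totalCoef P r l r * P m) fun τ hτ => ?_
  have h1 := (hasSum_heckeSum hP hr hl h24 hτ).sub
    ((hasSum_eta hP hτ).mul_left (totalCoef P r l r))
  rw [heckeSum_eq hP hr hl h24 hsq hτ, sub_self] at h1
  have h2 := h1.mul_left (e2 (-(r / 24 * τ)))
  rw [mul_zero] at h2
  refine hasSum_of_eq h2 fun m => ?_
  rw [← mul_assoc, ← sub_mul, mul_left_comm, ← e2_add]
  congr 2; ring

/-! ### The coefficients of `η` -/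

open Finset in
lemma prod_one_sub_bound {x : ℂ} (hx : ‖x‖ < 1) (k n : ℕ) :
    ‖∏ i ∈ range n, (1 - x ^ (k + i + 1))‖ ≤ Real.exp (∑' i : ℕ, ‖x‖ ^ i) := by
  rw [norm_prod]
  have hs : Summable fun i : ℕ => ‖x‖ ^ i := summable_geometric_of_lt_one (norm_nonneg _) hx
  calc ∏ i ∈ range n, ‖1 - x ^ (k + i + 1)‖ ≤ ∏ i ∈ range n, Real.exp (‖x‖ ^ i) := by
        gcongr with i _
        have h1 : ‖1 - x ^ (k + i + 1)‖ ≤ 1 + ‖x‖ ^ (k + i + 1) := by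
          refine (norm_sub_le _ _).trans ?_
          rw [norm_one, norm_pow]
        have h2 : ‖x‖ ^ (k + i + 1) ≤ ‖x‖ ^ i :=
          pow_le_pow_of_le_one (norm_nonneg _) hx.le (by lia)
        linarith [Real.add_one_le_exp (‖x‖ ^ i)]
    _ = Real.exp (∑ i ∈ range n, ‖x‖ ^ i) := by rw [Real.exp_sum]
    _ ≤ _ := by
        gcongr
        exact hs.sum_le_tsum _ fun i _ => by positivity

/-- The pentagonal number theorem, as an identity of analytic functions on the unit disc. -/
lemma hasSum_pentagonal {x : ℂ} (hx : ‖x‖ < 1) :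
    HasSum (fun n : ℕ => (PowerSeries.pentagonalSeries ℂ).coeff n * x ^ n)
      (∏' n : ℕ, (1 - x ^ (n + 1))) := by
  set C := Real.exp (∑' i : ℕ, ‖x‖ ^ i) with hC
  have hs : Summable fun i : ℕ => ‖x‖ ^ i := summable_geometric_of_lt_one (norm_nonneg _) hx
  have hterm : ∀ k n : ℕ, ‖x ^ ((k + 1) * n) * ∏ i ∈ Finset.range (n + 1), (1 - x ^ (k + i + 1))‖
      ≤ ‖x‖ ^ n * C := by
    intro k n
    rw [norm_mul, norm_pow]
    gcongr ?_ * ?_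
    · exact pow_le_pow_of_le_one (norm_nonneg _) hx.le (by nlinarith)
    · exact prod_one_sub_bound hx k (n + 1)
  have hpent : Summable fun k : ℤ => (Int.negOnePow k : ℂ) * x ^ pentagonal k := by
    apply Summable.of_norm
    have : (fun k : ℤ => ‖(Int.negOnePow k : ℂ) * x ^ pentagonal k‖) =
        (fun n : ℕ => ‖x‖ ^ n) ∘ pentagonal := by
      funext k
      have : ‖(Int.negOnePow k : ℂ)‖ = 1 := by
        rcases Int.even_or_odd k with h | h
        · simp [Int.negOnePow_even k h]
        · simp [Int.negOnePow_odd k h]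
      rw [norm_mul, this, one_mul, norm_pow, Function.comp]
    rw [this]
    exact hs.comp_injective pentagonal_injective
  have hpent2 := (hpent.hasSum_iff.mpr rfl)
  rw [← neg_injective.hasSum_iff (fun x hx ↦ by absurd hx; use -x; simp)] at hpent2
  have hnat := hpent2.nat_add_neg_add_one
  have hrhs : HasSum (fun k : ℕ ↦ (-1) ^ k * (x ^ pentagonal (-k) - x ^ pentagonal (k + 1)))
      (∑' k : ℤ, (Int.negOnePow k : ℂ) * x ^ pentagonal k) := by
    convert hnat using 2 with k
    simp_rw [Function.comp_apply, neg_neg, Int.negOnePow_add]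
    simp
    ring
  have hprod := Pentagonal.tprod_one_sub_pow (x := x)
    (tendsto_pow_atTop_nhds_zero_of_norm_lt_one hx)
    (fun k => Summable.of_norm_bounded (hs.mul_right C) (hterm k))
    (fun k => by
      have : Summable fun n : ℕ => ‖-x ^ (n + k + 1)‖ := by
        simp only [norm_neg, norm_pow]
        exact (summable_nat_add_iff (k + 1)).mpr hs
      simpa [sub_eq_add_neg] using multipliable_one_add_of_summable this)
    hrhs.summable
    (by
      have hb : ∀ k : ℕ, ‖(-1 : ℂ) ^ (k + 1) * x ^ ((k + 1) * (3 * k + 4) / 2) *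
          ∑' (n : ℕ), x ^ ((k + 1) * n) * ∏ i ∈ Finset.range (n + 1), (1 - x ^ (k + i + 1))‖ ≤
          ‖x‖ ^ k * ∑' n : ℕ, ‖x‖ ^ n * C := by
        intro k
        rw [norm_mul, norm_mul, norm_pow, norm_neg, norm_one, one_pow, one_mul, norm_pow]
        gcongr ?_ * ?_
        · refine pow_le_pow_of_le_one (norm_nonneg _) hx.le ?_
          rw [Nat.le_div_iff_mul_le (by norm_num)]
          nlinarith
        · exact tsum_of_norm_bounded (hs.mul_right C).hasSum (hterm k)
      refine squeeze_zero_norm hb ?_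
      have := (tendsto_pow_atTop_nhds_zero_of_lt_one (norm_nonneg x) hx).mul_const
        (∑' n : ℕ, ‖x‖ ^ n * C)
      rwa [zero_mul] at this)
  rw [hprod, hrhs.tsum_eq]
  refine (pentagonal_injective.hasSum_iff fun n hn => ?_).mp ?_
  · rw [PowerSeries.coeff_pentagonalSeries_eq_zero ℂ hn, zero_mul]
  · convert hpent.hasSum using 2 with k
    rw [Function.comp_apply, PowerSeries.coeff_pentagonalSeries_pentagonal]

/-- The Fourier coefficients of `η`. -/
def etaCoef (x : ℚ) : ℂ :=
  if x = x.num.toNat then (PowerSeries.pentagonalSeries ℂ).coeff x.num.toNat else 0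

lemma etaCoef_nat (n : ℕ) : etaCoef n = (PowerSeries.pentagonalSeries ℂ).coeff n := by
  simp [etaCoef]

lemma isEtaPowerCoeffs_etaCoef : IsEtaPowerCoeffs (1 : ℕ) etaCoef := by
  constructor
  · intro x hx
    rw [etaCoef, if_neg]
    exact fun h => hx ⟨_, h⟩
  · intro τ
    have hq : ‖e2 τ‖ < 1 := by
      rw [norm_e2, Real.exp_lt_one_iff]
      have : 0 < (τ : ℂ).im := τ.2
      nlinarith [Real.pi_pos]
    have h1 := (hasSum_pentagonal hq).mul_left (e2 (τ / 24))
    have h2 : dedekindEta τ ^ ((1 : ℕ) : ℤ) = e2 (τ / 24) * ∏' n : ℕ, (1 - e2 τ ^ (n + 1)) := by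
      rw [Nat.cast_one, zpow_one, dedekindEta]
      congr 2
      funext n
      rw [← e2_nat_mul]; push_cast; rfl
    rw [h2]
    refine hasSum_of_eq h1 fun n => ?_
    rw [etaCoef_nat, ← e2_nat_mul, mul_left_comm, ← e2_add]
    congr 2
    push_cast; ring

/-- Euler's pentagonal number theorem: the coefficient of `q^{p²/24}` in `η` is `(3 | p)`. -/
lemma etaCoef_sq {p : ℕ} (h2 : Odd p) (h3 : Nat.Coprime 3 p) :
    etaCoef (((p : ℚ) ^ 2 - 1) / 24) = (jacobiSym 3 p : ℂ) := by
  have hrec := jac_recip (m := 3) (n := p) (by decide) h2 h3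
  have h6 : p % 6 = 1 ∨ p % 6 = 5 := by
    have : p % 3 ≠ 0 := fun h => by
      have := Nat.dvd_gcd dvd_rfl (Nat.dvd_of_mod_eq_zero h)
      rw [h3] at this
      omega
    obtain ⟨k, rfl⟩ := h2
    omega
  -- `24 * (k (3 k - 1) / 2) + 1 = (6 k - 1) ^ 2`
  have key : ∀ k : ℤ, (p : ℤ) ^ 2 = (6 * k - 1) ^ 2 →
      etaCoef (((p : ℚ) ^ 2 - 1) / 24) = Int.negOnePow k := by
    intro k hk
    have : ((p : ℚ) ^ 2 - 1) / 24 = (pentagonal k : ℕ) := by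
      have h4 := two_mul_natCast_pentagonal k
      have h5 : (p : ℤ) ^ 2 - 1 = 24 * (pentagonal k : ℕ) := by linear_combination hk - 12 * h4
      have h6 : (p : ℚ) ^ 2 - 1 = 24 * (pentagonal k : ℕ) := by exact_mod_cast h5
      rw [h6]; ring
    rw [this, etaCoef_nat, PowerSeries.coeff_pentagonalSeries_pentagonal]
  have hpow : ∀ k : ℤ, ze (12 * k) = (Int.negOnePow k : ℂ) := by
    intro k
    rcases Int.even_or_odd k with h | h
    · rw [Int.negOnePow_even k h, ze_eq_one]
      · simp
      · obtain ⟨m, rfl⟩ := h; exact ⟨m, by ring⟩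
    · rw [Int.negOnePow_odd k h, ze_congr (n := 12), ze_twelve]
      · simp
      · obtain ⟨m, rfl⟩ := h; exact ⟨m, by ring⟩
  rcases h6 with h | h
  · obtain ⟨k, rfl⟩ : ∃ k, p = 6 * k + 1 := ⟨p / 6, by omega⟩
    rw [key (-k) (by push_cast; ring)]
    have : jacobiSym ((6 * k + 1 : ℕ) : ℤ) 3 = 1 := by
      rw [jacobiSym.mod_left' (b := 3) (a₂ := 1)]
      · exact jacobiSym.one_left 3
      · omega
    push_cast at hrec this
    rw [this, Int.cast_one, mul_one] at hrec
    rw [hrec, ← hpow]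
    refine ze_congr ⟨-2 * k, ?_⟩
    ring
  · obtain ⟨k, rfl⟩ : ∃ k, p = 6 * k + 5 := ⟨p / 6, by omega⟩
    rw [key (k + 1) (by push_cast; ring)]
    have : jacobiSym ((6 * k + 5 : ℕ) : ℤ) 3 = -1 := by
      rw [jacobiSym.mod_left' (b := 3) (a₂ := 2)]
      · norm_num
      · omega
    push_cast at hrec this
    rw [this] at hrec
    have h7 : (jacobiSym 3 (6 * k + 5) : ℂ) = - ze (6 * (6 * k + 5 - 1)) := by
      rw [← hrec]; push_cast; ring
    rw [h7, ← hpow, ← neg_one_mul, ← ze_twelve, ← ze_add]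
    refine ze_congr ⟨-k - 1, ?_⟩
    ring

/-! ### Quadratic Gauss sums and Ramanujan sums -/

/-- The exponential sum `∑ f(b) e(b k / m)` over `b` modulo `m`. -/
def charSum (f : ℕ → ℂ) (m : ℕ) (k : ℤ) : ℂ := ∑ b ∈ Finset.range m, f b * e2 ((b : ℂ) * k / m)

/-- The quadratic Gauss sum `∑ (b | m) e(b k / m)`. -/
def gs (m : ℕ) (k : ℤ) : ℂ := charSum (fun b => (jacobiSym b m : ℂ)) m k

/-- The Ramanujan sum: `∑ e(b k / m)` over `b` prime to `m`. -/
def rs (m : ℕ) (k : ℤ) : ℂ := charSum (fun b => if Nat.Coprime b m then 1 else 0) m k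

lemma periodic_mod {f : ℕ → ℂ} {m : ℕ} (hf : ∀ b, f (b + m) = f b) (b : ℕ) : f (b % m) = f b := by
  have hp : Function.Periodic f m := hf
  exact hp.map_mod_nat b

/-- The Chinese remainder theorem for sums of periodic functions. -/
lemma sum_crt {m n : ℕ} (hm : 0 < m) (hn : 0 < n) (hco : Nat.Coprime m n) {F : ℕ → ℂ}
    (hF : ∀ b, F (b + m * n) = F b) :
    ∑ b ∈ Finset.range (m * n), F b =
      ∑ x ∈ Finset.range m, ∑ y ∈ Finset.range n, F (n * x + m * y) := by
  rw [← Finset.sum_product']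
  have hinj : Set.InjOn (fun z : ℕ × ℕ => (n * z.1 + m * z.2) % (m * n))
      (Finset.range m ×ˢ Finset.range n : Finset (ℕ × ℕ)) := by
    rintro ⟨x, y⟩ h1 ⟨x', y'⟩ h2 h
    simp only [Finset.coe_product, Finset.coe_range, Set.mem_prod, Set.mem_Iio] at h1 h2
    have h : n * x + m * y ≡ n * x' + m * y' [MOD m * n] := h
    have hx : n * x ≡ n * x' [MOD m] := by
      have := h.of_mul_right n
      simpa [Nat.ModEq] using this
    have hy : m * y ≡ m * y' [MOD n] := by
      have := h.of_mul_left m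
      simpa [Nat.ModEq] using this
    have hx' := Nat.ModEq.eq_of_lt_of_lt (Nat.ModEq.cancel_left_of_coprime hco hx) h1.1 h2.1
    have hy' := Nat.ModEq.eq_of_lt_of_lt (Nat.ModEq.cancel_left_of_coprime hco.symm hy) h1.2 h2.2
    rw [hx', hy']
  have himg : (Finset.range m ×ˢ Finset.range n).image
      (fun z : ℕ × ℕ => (n * z.1 + m * z.2) % (m * n)) = Finset.range (m * n) := by
    refine Finset.eq_of_subset_of_card_le (fun b hb => ?_) ?_
    · obtain ⟨z, -, rfl⟩ := Finset.mem_image.mp hb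
      exact Finset.mem_range.mpr (Nat.mod_lt _ (by positivity))
    · rw [Finset.card_image_of_injOn hinj]; simp
  rw [← himg, Finset.sum_image hinj]
  exact Finset.sum_congr rfl fun z _ => periodic_mod hF _

lemma sum_perm {p K : ℕ} (hp : 0 < p) (hK : Nat.Coprime p K) {F : ℕ → ℂ}
    (hF : ∀ b, F (b + p) = F b) :
    ∑ b ∈ Finset.range p, F (K * b) = ∑ b ∈ Finset.range p, F b := by
  have hinj : Set.InjOn (fun b => (K * b) % p) (Finset.range p : Set ℕ) := by
    intro x hx y hy h
    simp only [Finset.coe_range, Set.mem_Iio] at hx hy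
    exact Nat.ModEq.eq_of_lt_of_lt (Nat.ModEq.cancel_left_of_coprime hK h) hx hy
  have himg : (Finset.range p).image (fun b => (K * b) % p) = Finset.range p := by
    refine Finset.eq_of_subset_of_card_le (fun b hb => ?_) ?_
    · obtain ⟨z, -, rfl⟩ := Finset.mem_image.mp hb
      exact Finset.mem_range.mpr (Nat.mod_lt _ hp)
    · rw [Finset.card_image_of_injOn hinj]
  conv_rhs => rw [← himg, Finset.sum_image hinj]
  exact Finset.sum_congr rfl fun b _ => (periodic_mod hF _).symm

lemma charSum_periodic {f : ℕ → ℂ} {m : ℕ} (hm : 0 < m) (hf : ∀ b, f (b + m) = f b) (k : ℤ) (b : ℕ) :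
    f (b + m) * e2 (((b + m : ℕ) : ℂ) * k / m) = f b * e2 ((b : ℂ) * k / m) := by
  have : (m : ℂ) ≠ 0 := by exact_mod_cast hm.ne'
  rw [hf, show (((b + m : ℕ) : ℂ) * k / m) = b * k / m + k by push_cast; field_simp, e2_add_int]

lemma charSum_mul {m n : ℕ} (hm : 0 < m) (hn : 0 < n) (hco : Nat.Coprime m n) {f f₁ f₂ : ℕ → ℂ}
    {c : ℂ} (hf : ∀ b, f (b + m * n) = f b)
    (h : ∀ x y, f (n * x + m * y) = c * f₁ x * f₂ y) (k : ℤ) :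
    charSum f (m * n) k = c * charSum f₁ m k * charSum f₂ n k := by
  have hm' : (m : ℂ) ≠ 0 := by exact_mod_cast hm.ne'
  have hn' : (n : ℂ) ≠ 0 := by exact_mod_cast hn.ne'
  rw [charSum, sum_crt hm hn hco (charSum_periodic (by positivity) hf k), charSum, charSum,
    mul_assoc, Finset.sum_mul_sum, Finset.mul_sum]
  refine Finset.sum_congr rfl fun x _ => ?_
  rw [Finset.mul_sum]
  refine Finset.sum_congr rfl fun y _ => ?_
  rw [h, show (((n * x + m * y : ℕ) : ℂ) * k / (m * n : ℕ)) = x * k / m + y * k / n by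
    push_cast; field_simp, e2_add]
  ring

lemma jac_periodic (m b : ℕ) : (jacobiSym ((b + m : ℕ) : ℤ) m : ℂ) = jacobiSym b m := by
  have := jac_add_mul b m 1
  rw [mul_one] at this
  rw [this]

lemma coprime_periodic (m b : ℕ) :
    (if Nat.Coprime (b + m) m then (1 : ℂ) else 0) = if Nat.Coprime b m then 1 else 0 := by
  simp

/-- Twisted multiplicativity, from the Chinese remainder theorem `b = n x + m y`. -/
lemma gs_mul {m n : ℕ} (hm : 0 < m) (hn : 0 < n) (hco : Nat.Coprime m n) (k : ℤ) :
    gs (m * n) k = (jacobiSym n m * jacobiSym m n : ℤ) * gs m k * gs n k := by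
  have := NeZero.of_pos hm
  have := NeZero.of_pos hn
  refine charSum_mul hm hn hco (jac_periodic _) (fun x y => ?_) k
  have h1 : jacobiSym ((n * x + m * y : ℕ) : ℤ) m = jacobiSym n m * jacobiSym x m := by
    rw [jac_add_mul, Nat.cast_mul, jacobiSym.mul_left]
  have h2 : jacobiSym ((n * x + m * y : ℕ) : ℤ) n = jacobiSym m n * jacobiSym y n := by
    rw [add_comm, jac_add_mul, Nat.cast_mul, jacobiSym.mul_left]
  rw [jacobiSym.mul_right, h1, h2]
  push_cast; ring

lemma rs_mul {m n : ℕ} (hm : 0 < m) (hn : 0 < n) (hco : Nat.Coprime m n) (k : ℤ) :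
    rs (m * n) k = rs m k * rs n k := by
  have h0 : rs (m * n) k = 1 * rs m k * rs n k := by
    refine charSum_mul hm hn hco (coprime_periodic _) (fun x y => ?_) k
    have h1 : Nat.Coprime (n * x + m * y) m ↔ Nat.Coprime x m := by
      rw [Nat.coprime_add_mul_left_left, Nat.coprime_mul_iff_left]
      exact and_iff_right hco.symm
    have h2 : Nat.Coprime (n * x + m * y) n ↔ Nat.Coprime y n := by
      rw [add_comm, Nat.coprime_add_mul_left_left, Nat.coprime_mul_iff_left]
      exact and_iff_right hco
    simp only [Nat.coprime_mul_iff_right, h1, h2]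
    split_ifs <;> simp_all
  rw [h0, one_mul]

lemma sum_e2 {m : ℕ} (hm : 0 < m) (k : ℤ) :
    ∑ b ∈ Finset.range m, e2 ((b : ℂ) * k / m) = if (m : ℤ) ∣ k then (m : ℂ) else 0 := by
  have hm' : (m : ℂ) ≠ 0 := by exact_mod_cast hm.ne'
  split_ifs with h
  · obtain ⟨q, rfl⟩ := h
    rw [Finset.sum_eq_card_nsmul (b := 1)]
    · simp
    · intro b _
      rw [show ((b : ℂ) * ((m * q : ℤ) : ℂ) / m) = ((b * q : ℤ) : ℂ) by push_cast; field_simp, e2_int]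
  · by_contra hne
    have hsh := sum_perm (F := fun b => 1 * e2 ((b : ℂ) * k / m)) hm (Nat.coprime_one_right m)
      (charSum_periodic (f := fun _ => 1) hm (fun _ => rfl) k)
    have h1 := Finset.sum_range_succ (fun b : ℕ => e2 ((b : ℂ) * k / m)) m
    rw [Finset.sum_range_succ'] at h1
    have h2 : e2 ((m : ℂ) * k / m) = 1 := by
      rw [mul_div_cancel_left₀ _ hm', e2_int]
    have h3 : ∀ b : ℕ, e2 (((b + 1 : ℕ) : ℂ) * k / m) = e2 (k / m) * e2 ((b : ℂ) * k / m) := fun b => by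
      rw [← e2_add]; congr 1; push_cast; ring
    simp only [h3, h2, Nat.cast_zero, zero_mul, zero_div, e2_zero, add_left_inj,
      ← Finset.mul_sum] at h1
    have h4 : e2 ((k : ℂ) / m) = 1 := mul_right_cancel₀ hne (by rw [h1, one_mul])
    obtain ⟨q, hq⟩ := (e2_eq_one_iff _).mp h4
    rw [div_eq_iff hm'] at hq
    exact h ⟨q, by rw [mul_comm]; exact_mod_cast hq⟩

/-- The value at a prime: `p - 1` if `p ∣ k`, and `-1` otherwise. -/
lemma rs_prime {p : ℕ} (hp : p.Prime) (k : ℤ) :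
    rs p k = (p : ℂ) - 1 - p * (jacobiSym k p : ℂ) ^ 2 := by
  have h1 : rs p k = ∑ b ∈ Finset.range p, e2 ((b : ℂ) * k / p) - 1 := by
    obtain ⟨n, rfl⟩ : ∃ n, p = n + 1 := ⟨p - 1, by have := hp.pos; lia⟩
    rw [rs, charSum, Finset.sum_range_succ', Finset.sum_range_succ', if_neg]
    · simp only [Nat.cast_zero, zero_mul, zero_div, e2_zero, mul_one, add_sub_cancel_right, add_zero]
      refine Finset.sum_congr rfl fun b hb => ?_
      rw [if_pos, one_mul]
      have := Finset.mem_range.mp hb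
      exact (Nat.coprime_of_lt_prime (by lia) (by lia) hp).symm
    · rw [Nat.coprime_zero_left]; exact hp.one_lt.ne'
  rw [h1, sum_e2 hp.pos]
  split_ifs with h
  · have : jacobiSym k p = 0 := by
      have := NeZero.of_pos hp.pos
      rw [jacobiSym.eq_zero_iff_not_coprime]
      intro h0
      have := Int.dvd_gcd h dvd_rfl
      rw [h0] at this
      have := Nat.le_of_dvd one_pos this
      have := hp.one_lt
      lia
    rw [this]; simp
  · rw [jac_sq_one]
    · ring
    · exact ((Nat.prime_iff_prime_int.mp hp).coprime_iff_not_dvd.mpr h).symm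

lemma prod_coprime {s : Finset ℕ} (hs : ∀ p ∈ s, p.Prime) {q : ℕ} (hq : q.Prime) (hqs : q ∉ s) :
    Nat.Coprime q (∏ p ∈ s, p) := by
  refine Nat.Coprime.prod_right fun p hp => (Nat.coprime_primes hq (hs p hp)).mpr ?_
  rintro rfl; exact hqs hp

lemma rs_prod (k : ℤ) (s : Finset ℕ) (hs : ∀ p ∈ s, p.Prime) :
    rs (∏ p ∈ s, p) k = ∏ p ∈ s, ((p : ℂ) - 1 - p * (jacobiSym k p : ℂ) ^ 2) := by
  induction s using Finset.induction_on with
  | empty => simp [rs, charSum, e2_zero]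
  | insert q s hq ih =>
    have hs' : ∀ p ∈ s, p.Prime := fun p hp => hs p (Finset.mem_insert_of_mem hp)
    have hqp := hs q (Finset.mem_insert_self _ _)
    rw [Finset.prod_insert hq, Finset.prod_insert hq, rs_mul hqp.pos
      (Finset.prod_pos fun p hp => (hs' p hp).pos) (prod_coprime hs' hqp hq), ih hs', rs_prime hqp]

lemma gs_zero {p : ℕ} (hp : p.Prime) (hp2 : p ≠ 2) : gs p 0 = 0 := by
  have := Fact.mk hp
  obtain ⟨a, ha⟩ := FiniteField.exists_nonsquare (F := ZMod p) (by rw [ZMod.ringChar_zmod_n]; exact hp2)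
  have hs : jacobiSym (a.val : ℤ) p = -1 := by
    rw [← jacobiSym.legendreSym.to_jacobiSym, legendreSym.eq_neg_one_iff]
    simpa using ha
  have hco : Nat.Coprime p a.val := by
    rw [hp.coprime_iff_not_dvd, ← ZMod.natCast_eq_zero_iff, ZMod.natCast_zmod_val]
    rintro rfl; exact ha ⟨0, by simp⟩
  have h := sum_perm (F := fun b => (jacobiSym b p : ℂ)) hp.pos hco (jac_periodic p)
  simp only [Nat.cast_mul, jacobiSym.mul_left, hs, Int.cast_mul, ← Finset.mul_sum] at h
  have h0 : gs p 0 = ∑ b ∈ Finset.range p, (jacobiSym b p : ℂ) := by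
    simp [gs, charSum, e2_zero]
  rw [h0]
  push_cast at h
  linear_combination -(1 / 2 : ℂ) * h

lemma gs_prime_mul {p : ℕ} (hp : p.Prime) (hp2 : p ≠ 2) (k : ℤ) :
    gs p k = (jacobiSym k p : ℂ) * gs p 1 := by
  have hp0 : (p : ℂ) ≠ 0 := by exact_mod_cast hp.ne_zero
  have := NeZero.of_pos hp.pos
  by_cases hk : (p : ℤ) ∣ k
  · have h1 : jacobiSym k p = 0 := by
      rw [jacobiSym.eq_zero_iff_not_coprime]
      intro h0
      have := Int.dvd_gcd hk dvd_rfl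
      rw [h0] at this
      have := Nat.le_of_dvd one_pos this
      have := hp.one_lt
      lia
    rw [h1, Int.cast_zero, zero_mul, ← gs_zero hp hp2]
    obtain ⟨q, rfl⟩ := hk
    unfold gs charSum
    refine Finset.sum_congr rfl fun b _ => ?_
    rw [show ((b : ℂ) * ((p * q : ℤ) : ℂ) / p) = ((b * q : ℤ) : ℂ) by push_cast; field_simp, e2_int]
    simp [e2_zero]
  · have hpos : (0 : ℤ) < p := by exact_mod_cast hp.pos
    obtain ⟨K, hK⟩ := Int.eq_ofNat_of_zero_le (Int.emod_nonneg k hpos.ne')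
    have hco : IsCoprime k (p : ℤ) :=
      ((Nat.prime_iff_prime_int.mp hp).coprime_iff_not_dvd.mpr hk).symm
    have hkK : k = K + p * (k / p) := by rw [← hK]; exact (Int.emod_add_mul_ediv k p).symm
    have hJ : jacobiSym K p = jacobiSym k p := by
      rw [← hK]; exact (jacobiSym.mod_left k p).symm
    have hcoK : Nat.Coprime p K := by
      rw [hp.coprime_iff_not_dvd]
      intro h0
      apply hk
      rw [hkK]
      exact dvd_add (by exact_mod_cast h0) (dvd_mul_right _ _)
    have h := sum_perm (F := fun b => (jacobiSym b p : ℂ) * e2 ((b : ℂ) * (1 : ℤ) / p)) hp.pos hcoK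
      (charSum_periodic (f := fun b => (jacobiSym b p : ℂ)) hp.pos
      (jac_periodic p) 1)
    have h2 : ∀ b : ℕ, (jacobiSym ((K * b : ℕ) : ℤ) p : ℂ) * e2 (((K * b : ℕ) : ℂ) * (1 : ℤ) / p) =
        jacobiSym k p * ((jacobiSym b p : ℂ) * e2 ((b : ℂ) * k / p)) := by
      intro b
      rw [Nat.cast_mul, jacobiSym.mul_left, hJ]
      have : e2 ((b : ℂ) * k / p) = e2 (((K * b : ℕ) : ℂ) * (1 : ℤ) / p) := by
        rw [← e2_add_int (((K * b : ℕ) : ℂ) * (1 : ℤ) / p) (b * (k / p))]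
        congr 1
        have hkC : (k : ℂ) = K + p * ((k / p : ℤ) : ℂ) := by exact_mod_cast hkK
        rw [hkC]
        push_cast
        field_simp
      rw [this]
      push_cast; ring
    simp only [h2, ← Finset.mul_sum] at h
    change (jacobiSym k p : ℂ) * gs p k = gs p 1 at h
    rw [← h, ← mul_assoc, ← sq, jac_sq_one hco, one_mul]

/-! ### The sign of the quadratic Gauss sum -/

lemma hCoef_one_left (P : ℚ → ℂ) {d : ℕ} {n : ℤ} (h : (24 : ℤ) ∣ d - 1)
    (hn : (24 : ℤ) ∣ n - d) : hCoef P 1 1 d n = d * P (((n : ℚ) * d - 1) / 24) := by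
  obtain ⟨i, hi⟩ := hn
  have hi' : (n : ℂ) = d + 24 * i := by
    have : n = d + 24 * i := by linear_combination hi
    exact_mod_cast this
  have hc : cop 1 d = Finset.range d := by simp [cop]
  have hs : ∀ b ∈ Finset.range d, (jacobiSym b (Nat.gcd 1 d) : ℂ) ^ 1 *
      e2 ((b : ℂ) * (n - (1 : ℕ) * ((1 : ℕ) * d)) / (24 * (1 : ℕ))) = 1 := by
    intro b _
    rw [Nat.gcd_one_left, jacobiSym.one_right, hi',
      show ((b : ℂ) * (d + 24 * i - (1 : ℕ) * ((1 : ℕ) * d)) / (24 * (1 : ℕ))) = ((b * i : ℤ) : ℂ) by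
        push_cast; ring, e2_int]
    simp
  rw [hCoef, hc, Finset.sum_congr rfl hs, ze_eq_one (h.mul_left _)]
  simp

lemma hCoef_one_right (P : ℚ → ℂ) {a : ℕ} {n : ℤ} :
    hCoef P 1 a 1 n = ((√a : ℝ) : ℂ) * P (((n : ℚ) / a - 1) / 24) := by
  have hc : cop a 1 = {0} := by simp [cop]
  rw [hCoef, hc]
  simp [e2_zero, ze_zero]

/-- The middle divisor of `p²`: the only one that involves a Gauss sum. -/
lemma hCoef_diag (P : ℚ → ℂ) {p : ℕ} (hp : p.Prime) {n i : ℤ} (hn : n = p * p + 24 * i) :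
    hCoef P 1 p p n =
      ((√p : ℝ) : ℂ) * ze (3 * ((p : ℤ) - 1)) * gs p i * P (((n : ℚ) - 1) / 24) := by
  have hp0 : (p : ℂ) ≠ 0 := by exact_mod_cast hp.ne_zero
  have hp1 : (p : ℚ) ≠ 0 := by exact_mod_cast hp.ne_zero
  have := NeZero.of_pos hp.pos
  have hsum : ∑ b ∈ cop p p, (jacobiSym b (Nat.gcd p p) : ℂ) ^ 1 *
      e2 ((b : ℂ) * (n - (1 : ℕ) * (p * p)) / (24 * p)) = gs p i := by
    rw [gs, charSum, cop, Finset.sum_filter]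
    refine Finset.sum_congr rfl fun b _ => ?_
    rw [Nat.gcd_self]
    split_ifs with hb
    · rw [pow_one, hn]
      congr 2
      push_cast; field_simp
      try ring
    · rw [jacobiSym.eq_zero_iff_not_coprime.mpr, Int.cast_zero, zero_mul]
      rwa [Int.gcd_natCast_natCast, Nat.gcd_comm]
  rw [hCoef, hsum, mul_div_cancel_right₀ _ hp1]
  push_cast
  rw [pow_one]

/-- The three divisors `1`, `p`, `p²` of `p²` give the three terms of the classical action of the
Hecke operator at `p²` on forms of half-integral weight. -/
lemma totalCoef_prime_sq (P : ℚ → ℂ) {p : ℕ} (hp : p.Prime) (h24 : (24 : ℤ) ∣ (p : ℤ) ^ 2 - 1)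
    {n i : ℤ} (hn : n = p * p + 24 * i) :
    totalCoef P 1 (p ^ 2) n = p ^ 2 * P (((n : ℚ) * p ^ 2 - 1) / 24) +
      ((√p : ℝ) : ℂ) * ze (3 * ((p : ℤ) - 1)) * gs p i * P (((n : ℚ) - 1) / 24) +
      p * P (((n : ℚ) / p ^ 2 - 1) / 24) := by
  rw [totalCoef, Nat.sum_divisors_prime_pow hp, Finset.sum_range_succ, Finset.sum_range_succ,
    Finset.sum_range_one]
  rw [pow_zero, pow_one, Nat.div_one, Nat.div_self (pow_pos hp.pos 2),
    show p ^ 2 / p = p by rw [sq, Nat.mul_div_cancel _ hp.pos], hCoef_one_right,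
    hCoef_diag P hp hn, hCoef_one_left P (by push_cast; exact h24)
    ⟨i, by push_cast; linear_combination hn⟩]
  push_cast
  rw [Real.sqrt_sq (Nat.cast_nonneg p)]
  push_cast; rfl

/-- Gauss's evaluation for a prime `p ≥ 5`: the multiplicativity relation for `η` at level `p²`,
compared at the exponents `1` and `p²`, leaves a linear equation for the Gauss sum. -/
lemma gs_prime_aux {p : ℕ} (hp : p.Prime) (hp2 : p ≠ 2) (hp3 : p ≠ 3) :
    gs p 1 = ((√p : ℝ) : ℂ) * (jacobiSym 2 p : ℂ) * ze (-(3 * ((p : ℤ) - 1))) := by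
  have := NeZero.of_pos hp.pos
  have hodd : Odd p := hp.odd_of_ne_two hp2
  have hco3 : Nat.Coprime 3 p := (Nat.coprime_primes Nat.prime_three hp).mpr (Ne.symm hp3)
  have hco2 : Nat.Coprime 2 p := (Nat.coprime_primes Nat.prime_two hp).mpr (Ne.symm hp2)
  obtain ⟨m, hm⟩ : ∃ m : ℕ, p ^ 2 = 1 + 24 * m := by
    have h6 : p % 6 = 1 ∨ p % 6 = 5 := by
      have : p % 3 ≠ 0 := fun h => by
        have := Nat.dvd_gcd dvd_rfl (Nat.dvd_of_mod_eq_zero h)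
        rw [hco3] at this
        omega
      obtain ⟨k, rfl⟩ := hodd
      omega
    have h24 : p ^ 2 % 24 = 1 := by
      have : p % 24 = 1 ∨ p % 24 = 5 ∨ p % 24 = 7 ∨ p % 24 = 11 ∨ p % 24 = 13 ∨ p % 24 = 17 ∨
        p % 24 = 19 ∨ p % 24 = 23 := by omega
      rw [Nat.pow_mod]
      rcases this with h | h | h | h | h | h | h | h <;> rw [h]
    exact ⟨p ^ 2 / 24, by omega⟩
  have hmZ : (p : ℤ) ^ 2 = 1 + 24 * m := by exact_mod_cast hm
  have hmQ : (p : ℚ) ^ 2 = 1 + 24 * m := by exact_mod_cast hm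
  have h24 : (24 : ℤ) ∣ (p : ℤ) ^ 2 - 1 := ⟨m, by linear_combination hmZ⟩
  have hpQ : (p : ℚ) ^ 2 ≠ 0 := pow_ne_zero _ (by exact_mod_cast hp.ne_zero)
  set X : ℂ := (jacobiSym 3 p : ℂ) with hX
  have hPm : etaCoef m = X := by
    rw [hX, ← etaCoef_sq hodd hco3, hmQ]; congr 1; ring
  have hP0 : etaCoef 0 = 1 := coeff_zero isEtaPowerCoeffs_etaCoef
  have hP1 : etaCoef (((p : ℚ) ^ 2 * p ^ 2 - 1) / 24) = 1 := by
    have h := etaCoef_sq (hodd.pow (n := 2)) (hco3.pow_right 2)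
    push_cast at h
    rw [jacobiSym.pow_right, Int.cast_pow, jac_sq_one (by exact_mod_cast Nat.isCoprime_iff_coprime.mpr hco3)] at h
    rw [← h]; congr 1; ring
  -- the term of the divisor `p²` of `p²` has a negative exponent
  have hP2 : etaCoef ((((1 : ℤ) : ℚ) / p ^ 2 - 1) / 24) = 0 := by
    refine isEtaPowerCoeffs_etaCoef.1 _ ?_
    rintro ⟨k, hk⟩
    have hlt : (((1 : ℤ) : ℚ) / p ^ 2 - 1) / 24 < 0 := by
      have h1 : (1 : ℚ) < p := by exact_mod_cast hp.one_lt
      have h2 : (1 : ℚ) / p ^ 2 < 1 := by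
        rw [div_lt_one (by positivity)]; nlinarith
      push_cast
      linarith
    rw [hk] at hlt
    exact absurd hlt (not_lt.mpr (Nat.cast_nonneg k))
  have h0 : totalCoef etaCoef 1 (p ^ 2) 1 =
      p ^ 2 * X + ((√p : ℝ) : ℂ) * ze (3 * ((p : ℤ) - 1)) * gs p (-m) := by
    rw [totalCoef_prime_sq etaCoef hp h24 (i := -m) (by linear_combination -hmZ), hP2,
      ← hPm]
    rw [show ((((1 : ℤ) : ℚ) * p ^ 2 - 1) / 24) = m by rw [hmQ]; push_cast; ring,
      show (((1 : ℤ) : ℚ) - 1) / 24 = 0 by norm_num, hP0]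
    ring
  have h1 : totalCoef etaCoef 1 (p ^ 2) (1 + 24 * m) = p ^ 2 + p := by
    rw [totalCoef_prime_sq etaCoef hp h24 (i := 0) (by linear_combination -hmZ), ← hmZ,
      gs_zero hp hp2]
    push_cast
    rw [hP1, div_self hpQ, sub_self, zero_div, hP0]
    ring
  have key := totalCoef_eq (r := 1) (l := p ^ 2) isEtaPowerCoeffs_etaCoef (by norm_num)
    (pow_pos hp.pos 2) (by push_cast; rw [one_mul]; exact h24) (fun _ => ⟨p, sq p⟩) m
  rw [Nat.cast_one, h0, h1, hPm, gs_prime_mul hp hp2] at key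
  have hX2 : X ^ 2 = 1 := jac_sq_one (by exact_mod_cast Nat.isCoprime_iff_coprime.mpr hco3)
  have hT2 : (jacobiSym 2 p : ℂ) ^ 2 = 1 :=
    jac_sq_one (by exact_mod_cast Nat.isCoprime_iff_coprime.mpr hco2)
  -- `24 * (-m) ≡ 1` modulo `p`
  have hJ : (jacobiSym (-m) p : ℂ) * jacobiSym 2 p * X = 1 := by
    have h3 : jacobiSym (-m) p * jacobiSym 2 p ^ 3 * jacobiSym 3 p = 1 := by
      rw [← jacobiSym.pow_left, ← jacobiSym.mul_left, ← jacobiSym.mul_left,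
        jacobiSym.mod_left' (a₂ := 1), jacobiSym.one_left]
      exact Int.modEq_iff_dvd.mpr ⟨p, by linear_combination -hmZ⟩
    have h4 : (jacobiSym (-m) p : ℂ) * (jacobiSym 2 p) ^ 3 * X = 1 := by rw [hX]; exact_mod_cast h3
    linear_combination h4 - (jacobiSym (-m) p : ℂ) * (jacobiSym 2 p) * X * hT2
  have hJ2 : (jacobiSym (-m) p : ℂ) * X = jacobiSym 2 p := by
    linear_combination (jacobiSym 2 p : ℂ) * hJ - (jacobiSym (-m) p : ℂ) * X * hT2
  have hsq : ((√p : ℝ) : ℂ) ^ 2 = p := by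
    rw [← Complex.ofReal_pow, Real.sq_sqrt (Nat.cast_nonneg p)]; simp
  have hs0 : ((√p : ℝ) : ℂ) ≠ 0 := by
    intro h
    rw [h] at hsq
    have := hp.ne_zero
    apply this
    exact_mod_cast (by simpa using hsq.symm : (p : ℂ) = 0)
  rw [ze_neg, ← div_eq_mul_inv, eq_div_iff (ze_ne_zero _)]
  apply mul_left_cancel₀ hs0
  have h5 : ((√p : ℝ) : ℂ) * ze (3 * ((p : ℤ) - 1)) * gs p 1 * jacobiSym 2 p = p := by
    linear_combination -key - (p : ℂ) ^ 2 * hX2 - ((√p : ℝ) : ℂ) * ze (3 * ((p : ℤ) - 1)) * gs p 1 * hJ2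
  linear_combination (jacobiSym 2 p : ℂ) * h5 - ((√p : ℝ) : ℂ) * ze (3 * ((p : ℤ) - 1)) * gs p 1 * hT2
    - (jacobiSym 2 p : ℂ) * hsq

lemma gs_three : gs 3 1 = ((√3 : ℝ) : ℂ) * (jacobiSym 2 3 : ℂ) * ze (-6) := by
  have hw : e2 (1 / 3) = -(1 / 2) + ((√3 : ℝ) : ℂ) / 2 * Complex.I := by
    have hc : Real.cos (2 * Real.pi / 3) = -(1 / 2) := by
      rw [show 2 * Real.pi / 3 = Real.pi - Real.pi / 3 by ring, Real.cos_pi_sub, Real.cos_pi_div_three]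
    have hs : Real.sin (2 * Real.pi / 3) = √3 / 2 := by
      rw [show 2 * Real.pi / 3 = Real.pi - Real.pi / 3 by ring, Real.sin_pi_sub, Real.sin_pi_div_three]
    rw [e2, show (2 * Real.pi * Complex.I * (1 / 3) : ℂ) = ((2 * Real.pi / 3 : ℝ) : ℂ) * Complex.I by
      push_cast; ring, Complex.exp_mul_I, ← Complex.ofReal_cos, ← Complex.ofReal_sin, hc, hs]
    push_cast; ring
  have hsq : ((√3 : ℝ) : ℂ) ^ 2 = 3 := by
    rw [← Complex.ofReal_pow, Real.sq_sqrt (by norm_num)]; norm_num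
  have h2 : e2 (2 / 3) = e2 (1 / 3) ^ 2 := by rw [← e2_nat_mul]; congr 1; push_cast; ring
  have hj1 : jacobiSym 1 3 = 1 := by norm_num
  have hj2 : jacobiSym 2 3 = -1 := by norm_num
  have hj0 : jacobiSym 0 3 = 0 := by norm_num
  rw [gs, charSum, Finset.sum_range_succ, Finset.sum_range_succ, Finset.sum_range_one,
    show (-6 : ℤ) = 6 * (-1) by norm_num, ze_six_mul, zpow_neg_one, Complex.inv_I]
  push_cast
  rw [hj0, hj1, hj2]
  push_cast
  rw [show (2 * 1 / 3 : ℂ) = 2 / 3 by norm_num, show (1 * 1 / 3 : ℂ) = 1 / 3 by norm_num, h2, hw]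
  linear_combination (-(1 / 4) : ℂ) * Complex.I ^ 2 * hsq - (3 / 4 : ℂ) * Complex.I_sq

lemma gs_prime {p : ℕ} (hp : p.Prime) (hp2 : p ≠ 2) :
    gs p 1 = ((√p : ℝ) : ℂ) * (jacobiSym 2 p : ℂ) * ze (-(3 * ((p : ℤ) - 1))) := by
  by_cases hp3 : p = 3
  · subst hp3
    exact_mod_cast gs_three
  · exact gs_prime_aux hp hp2 hp3

/-- Gauss's evaluation for a squarefree odd modulus. -/
lemma gs_prod (k : ℤ) (s : Finset ℕ) (hs : ∀ p ∈ s, p.Prime ∧ p ≠ 2) :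
    gs (∏ p ∈ s, p) k = (jacobiSym k (∏ p ∈ s, p) : ℂ) * (((√((∏ p ∈ s, p : ℕ) : ℝ) : ℝ) : ℂ) *
      (jacobiSym 2 (∏ p ∈ s, p) : ℂ) * ze (-(3 * (((∏ p ∈ s, p : ℕ) : ℤ) - 1)))) := by
  induction s using Finset.induction_on with
  | empty => simp [gs, charSum, e2_zero, ze_zero]
  | insert q s hq ih =>
    have hs' : ∀ p ∈ s, p.Prime ∧ p ≠ 2 := fun p hp => hs p (Finset.mem_insert_of_mem hp)
    obtain ⟨hqp, hq2⟩ := hs q (Finset.mem_insert_self _ _)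
    have hpos : 0 < ∏ p ∈ s, p := Finset.prod_pos fun p hp => (hs' p hp).1.pos
    have hodd : Odd (∏ p ∈ s, p) :=
      Finset.prod_induction _ Odd (fun _ _ => Odd.mul) odd_one
        fun p hp => (hs' p hp).1.odd_of_ne_two (hs' p hp).2
    have hco := prod_coprime (fun p hp => (hs' p hp).1) hqp hq
    specialize ih hs'
    rw [Finset.prod_insert hq]
    generalize (∏ p ∈ s, p) = M at *
    have := NeZero.of_pos hpos
    have := NeZero.of_pos hqp.pos
    have hqodd := hqp.odd_of_ne_two hq2
    rw [gs_mul hqp.pos hpos hco, ih, gs_prime_mul hqp hq2, gs_prime hqp hq2, Int.cast_mul,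
      jac_recip hodd hqodd hco.symm, jacobiSym.mul_right, jacobiSym.mul_right,
      Nat.cast_mul, Real.sqrt_mul (Nat.cast_nonneg q)]
    have hz : ze (-(3 * (((q * M : ℕ) : ℤ) - 1))) =
        ze (3 * ((M : ℤ) - 1) * ((q : ℤ) - 1)) * ze (-(3 * ((q : ℤ) - 1))) *
          ze (-(3 * ((M : ℤ) - 1))) := by
      rw [← ze_add, ← ze_add]
      obtain ⟨u, rfl⟩ := hodd
      obtain ⟨v, rfl⟩ := hqodd
      refine ze_congr ⟨-u * v, ?_⟩
      push_cast; ring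
    rw [hz]
    push_cast
    ring

/-! ### Even powers -/

lemma sum_moebius_divisors (m : ℕ) :
    ∑ t ∈ m.divisors, (ArithmeticFunction.moebius t : ℂ) = if m = 1 then 1 else 0 := by
  have h := congrArg (fun f : ArithmeticFunction ℤ => f m) ArithmeticFunction.moebius_mul_coe_zeta
  simp only [ArithmeticFunction.coe_mul_zeta_apply, ArithmeticFunction.one_apply] at h
  exact_mod_cast h

lemma sum_multiples {t e : ℕ} (ht : 0 < t) (F : ℕ → ℂ) :
    ∑ b ∈ Finset.range (t * e), (if t ∣ b then F b else 0) = ∑ c ∈ Finset.range e, F (t * c) := by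
  have himg : (Finset.range (t * e)).filter (t ∣ ·) = (Finset.range e).image (t * ·) := by
    ext b
    simp only [Finset.mem_filter, Finset.mem_range, Finset.mem_image]
    constructor
    · rintro ⟨h1, c, rfl⟩
      exact ⟨c, Nat.lt_of_mul_lt_mul_left h1, rfl⟩
    · rintro ⟨c, hc, rfl⟩
      exact ⟨Nat.mul_lt_mul_of_pos_left hc ht, dvd_mul_right _ _⟩
  rw [← Finset.sum_filter, himg, Finset.sum_image fun x _ y _ h => Nat.eq_of_mul_eq_mul_left ht h]

lemma coprime_of_mem_cop {a d b : ℕ} (hb : b ∈ cop a d) :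
    IsCoprime (b : ℤ) (Nat.gcd a d : ℕ) :=
  (Nat.isCoprime_iff_coprime.mpr (Finset.mem_filter.mp hb).2).symm

/-- For even `r` the twist disappears and Möbius inversion evaluates the sum. -/
lemma expSum_even {r a d : ℕ} (hr : Even r) (hd : 0 < d) (j : ℤ) :
    expSum r a d j = ∑ t ∈ (Nat.gcd a d).divisors.filter (fun t : ℕ => (d : ℤ) ∣ j * t),
      (ArithmeticFunction.moebius t : ℂ) * d / t := by
  have hg : 0 < Nat.gcd a d := Nat.gcd_pos_of_pos_right _ hd
  have h1 : expSum r a d j = ∑ b ∈ Finset.range d, ∑ t ∈ (Nat.gcd a d).divisors,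
      (if t ∣ b then (ArithmeticFunction.moebius t : ℂ) * e2 ((b : ℂ) * j / d) else 0) := by
    have h0 : ∀ b ∈ cop a d, (jacobiSym b (Nat.gcd a d) : ℂ) ^ r * e2 ((b : ℂ) * j / d) =
        e2 ((b : ℂ) * j / d) := by
      intro b hb
      obtain ⟨s, rfl⟩ := hr
      rw [← two_mul, pow_mul, jac_sq_one (coprime_of_mem_cop hb), one_pow, one_mul]
    rw [expSum, Finset.sum_congr rfl h0, cop, Finset.sum_filter]
    refine Finset.sum_congr rfl fun b _ => ?_
    rw [← Finset.sum_filter, ← Finset.sum_mul]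
    have h2 : (Nat.gcd a d).divisors.filter (· ∣ b) = (Nat.gcd (Nat.gcd a d) b).divisors := by
      ext t
      simp only [Finset.mem_filter, Nat.mem_divisors, Nat.dvd_gcd_iff]
      have : Nat.gcd (Nat.gcd a d) b ≠ 0 := (Nat.gcd_pos_of_pos_left _ hg).ne'
      have := hg.ne'
      tauto
    rw [h2, sum_moebius_divisors]
    split_ifs <;> simp
  rw [h1, Finset.sum_comm, Finset.sum_filter]
  refine Finset.sum_congr rfl fun t ht => ?_
  obtain ⟨e, he⟩ := (Nat.dvd_of_mem_divisors ht).trans (Nat.gcd_dvd_right a d)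
  have ht0 : 0 < t := Nat.pos_of_mem_divisors ht
  have he0 : 0 < e := Nat.pos_of_mul_pos_left (he ▸ hd)
  have ht' : (t : ℂ) ≠ 0 := by exact_mod_cast ht0.ne'
  have ht'' : (t : ℤ) ≠ 0 := by exact_mod_cast ht0.ne'
  subst he
  rw [sum_multiples ht0, ← Finset.mul_sum]
  have h3 : ∀ c : ℕ, e2 (((t * c : ℕ) : ℂ) * j / (t * e : ℕ)) = e2 ((c : ℂ) * j / e) := fun c => by
    congr 1
    push_cast
    rw [mul_assoc, mul_div_mul_left _ _ ht']
  simp only [h3]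
  rw [sum_e2 he0]
  have h4 : ((t * e : ℕ) : ℤ) ∣ j * t ↔ (e : ℤ) ∣ j := by
    rw [mul_comm j, Nat.cast_mul]
    exact mul_dvd_mul_iff_left ht''
  simp only [h4]
  split_ifs
  · push_cast; field_simp
  · rw [mul_zero]

lemma sqrt_pow_sq (a : ℕ) : ((√a : ℝ) : ℂ) ^ 2 = a := by
  rw [← Complex.ofReal_pow, Real.sq_sqrt (Nat.cast_nonneg a)]; simp

lemma coeff_arg {n : ℤ} {l a d : ℕ} (ha : 0 < a) (hl : l = a * d) (r : ℚ) :
    (((n : ℚ) * (l : ℚ) / (a : ℚ) ^ 2 - r) / 24) = ((n : ℚ) * d / a - r) / 24 := by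
  have : (a : ℚ) ≠ 0 := by exact_mod_cast ha.ne'
  rw [hl]; push_cast; field_simp

/-- When the coefficient of `η^r` does not vanish, its index `k` is a natural number, and
`j = d (n - r l) / (24 a)` is an integer. -/
lemma exists_kj {P : ℚ → ℂ} {r a d : ℕ} {n : ℤ} (hP : IsEtaPowerCoeffs r P)
    (ha : 0 < a) (h24 : (24 : ℤ) ∣ r * ((a : ℤ) * d - 1))
    (h : P (((n : ℚ) * d / a - r) / 24) ≠ 0) :
    ∃ (k : ℕ) (j : ℤ), 24 * j = 24 * (k : ℤ) - r * ((d : ℤ) ^ 2 - 1) ∧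
      ((r : ℤ) + 24 * k) * a = n * d ∧ d * (n - r * (a * d)) = 24 * a * j ∧
      ((n : ℚ) * d / a - r) / 24 = k := by
  obtain ⟨k, hk⟩ : ∃ k : ℕ, ((n : ℚ) * d / a - r) / 24 = k := by
    by_contra h0; exact h (hP.1 _ h0)
  have hn : ((r : ℤ) + 24 * k) * a = n * d := by
    have ha' : (a : ℚ) ≠ 0 := by exact_mod_cast ha.ne'
    field_simp at hk
    have : ((r : ℚ) + 24 * k) * a = n * d := by linear_combination -hk
    exact_mod_cast this
  obtain ⟨j, hj⟩ := exists_j h24 k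
  exact ⟨k, j, hj, hn, by linear_combination -hn - (a : ℤ) * hj, hk⟩

lemma phase_even_term {r a d : ℕ} (hr : Even r) (h24 : (24 : ℤ) ∣ r * ((a : ℤ) * d - 1)) :
    (-1 : ℂ) ^ ((r : ℤ) * ((d : ℤ) - 1) / 4) = ze (3 * r * ((d : ℤ) - 1)) := by
  obtain ⟨w, hw⟩ : ∃ w : ℤ, (r : ℤ) * ((d : ℤ) - 1) = 4 * w := by
    obtain ⟨s, rfl⟩ := hr
    rcases Nat.even_or_odd s with ⟨u, rfl⟩ | hs
    · exact ⟨u * (d - 1), by push_cast; ring⟩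
    · have hd : Odd d := by
        by_contra hd
        obtain ⟨u, rfl⟩ := Nat.not_odd_iff_even.mp hd
        obtain ⟨v, rfl⟩ := hs
        obtain ⟨q, hq⟩ := h24
        push_cast at hq
        have h3 : 2 * (2 * (v : ℤ) * a * u + a * u - v) - 1 = 12 * q := by linarith
        omega
      obtain ⟨u, rfl⟩ := hd
      exact ⟨s * u, by push_cast; ring⟩
  rw [hw, Int.mul_ediv_cancel_left _ (by norm_num), show 3 * (r : ℤ) * ((d : ℤ) - 1) = 6 * (2 * w) by
    linear_combination 3 * hw, ze_six_mul, zpow_mul]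
  norm_num

/-- The summand of `R(n; r, l)` for even `r`, with `l = a d`. -/
lemma even_term {P : ℚ → ℂ} {r a d l : ℕ} {n : ℤ} (hP : IsEtaPowerCoeffs r P) (hr : Even r)
    (ha : 0 < a) (hd : 0 < d) (hl : l = a * d) (h24 : (24 : ℤ) ∣ r * ((l : ℤ) - 1)) :
    (a : ℂ) ^ ((r : ℤ) / 2 : ℤ) * (-1 : ℂ) ^ ((r : ℤ) * ((d : ℤ) - 1) / 4) *
      ∑ t ∈ ((Nat.gcd a d).divisors).filter
          (fun t => 24 * a ∣ Int.gcd ((24 * a : ℕ) : ℤ) (n - (r : ℤ) * l) * t),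
        (ArithmeticFunction.moebius t : ℂ) * (d : ℂ) / (t : ℂ) *
          P (((n : ℚ) * (l : ℚ) / (a : ℚ) ^ 2 - ((r : ℤ) : ℚ)) / 24) = hCoef P r a d n := by
  have h24' : (24 : ℤ) ∣ r * ((a : ℤ) * d - 1) := by rw [hl] at h24; exact_mod_cast h24
  rw [coeff_arg ha hl, Int.cast_natCast]
  by_cases h0 : P (((n : ℚ) * d / a - r) / 24) = 0
  · simp [hCoef, h0]
  obtain ⟨k, j, hj, hn, hN, hk⟩ := exists_kj hP ha h24' h0
  rw [hCoef_eq ha hd hj hn, hk, expSum_even hr hd, phase_even_term hr h24', ← Finset.sum_mul]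
  have hpow : (a : ℂ) ^ ((r : ℤ) / 2 : ℤ) = ((√a : ℝ) : ℂ) ^ r := by
    obtain ⟨s, rfl⟩ := hr
    rw [← two_mul, pow_mul, sqrt_pow_sq]
    push_cast
    rw [Int.mul_ediv_cancel_left _ (by norm_num), zpow_natCast]
  have hcond : ∀ t : ℕ, 24 * a ∣ Int.gcd ((24 * a : ℕ) : ℤ) (n - (r : ℤ) * l) * t ↔
      (d : ℤ) ∣ j * t := by
    intro t
    have hd' : (d : ℤ) ≠ 0 := by exact_mod_cast hd.ne'
    have ha' : (24 * a : ℤ) ≠ 0 := by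
      have : (a : ℤ) ≠ 0 := by exact_mod_cast ha.ne'
      simpa using this
    have h1 : 24 * a ∣ Int.gcd ((24 * a : ℕ) : ℤ) (n - (r : ℤ) * l) * t ↔
        ((24 * a : ℕ) : ℤ) ∣ (n - (r : ℤ) * l) * t := by
      rw [show ∀ x y : ℤ, Int.gcd x y * t = Int.gcd (x * t) (y * t) from fun x y => by
        rw [Int.gcd_mul_right, Int.natAbs_natCast], ← Int.natCast_dvd_natCast, Int.dvd_coe_gcd_iff]
      exact and_iff_right (dvd_mul_right _ _)
    rw [h1, ← mul_dvd_mul_iff_left hd', ← mul_assoc, hl]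
    push_cast
    rw [hN, mul_comm (d : ℤ), mul_assoc (24 * (a : ℤ)), mul_dvd_mul_iff_left ha']
  simp only [hcond, hpow]
  ring

/-! ### Odd powers -/

/-- The Kronecker symbol and Mathlib's Jacobi symbol agree for odd positive lower entry. -/
lemma kron_eq_jacobiSym (m : ℤ) {N : ℕ} (hN : Odd N) : kron m N = jacobiSym m N := by
  have key : ∀ N : ℕ, Odd N → (N.factorization.prod fun p e => kronP m p ^ e) = jacobiSym m N := by
    intro N
    induction N using induction_on_primes with
    | zero => intro h; exact absurd h (by decide)
    | one => simp
    | prime_mul p a hp ih =>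
      intro hpa
      obtain ⟨hpo, hao⟩ := Nat.odd_mul.mp hpa
      have := NeZero.of_pos hp.pos
      have := NeZero.of_pos hao.pos
      rw [Nat.factorization_mul hp.ne_zero hao.pos.ne',
        Finsupp.prod_add_index' (fun _ => pow_zero _) (fun _ _ _ => pow_add _ _ _), ih hao,
        hp.factorization, Finsupp.prod_single_index (h := fun p e => kronP m p ^ e) (pow_zero _),
        pow_one, jacobiSym.mul_right]
      have hp2 : p ≠ 2 := by rintro rfl; exact absurd hpo (by decide)
      have := Fact.mk hp
      rw [kronP, if_neg hp2, dif_pos hp, jacobiSym.legendreSym.to_jacobiSym p m]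
  have h0 : (N : ℤ) ≠ 0 := by exact_mod_cast hN.pos.ne'
  rw [kron, if_neg h0, if_neg (by rintro ⟨h, -⟩; exact absurd h (not_lt.mpr (Nat.cast_nonneg N))),
    one_mul, Int.natAbs_natCast, key N hN]

lemma rad_eq (m : ℕ) : rad m = ∏ p ∈ m.primeFactors, p := by
  rw [rad, radE, radO]
  simp only [← Nat.not_even_iff_odd]
  exact Finset.prod_filter_mul_prod_filter_not _ _ _

lemma rad_dvd (m : ℕ) : rad m ∣ m := by
  rw [rad_eq]; exact Nat.prod_primeFactors_dvd m

lemma rad_pos (m : ℕ) : 0 < rad m := by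
  rw [rad_eq]
  exact Finset.prod_pos fun p hp => (Nat.prime_of_mem_primeFactors hp).pos

lemma radE_pos (m : ℕ) : 0 < radE m := Nat.pos_of_mul_pos_right (rad_pos m)

lemma radO_pos (m : ℕ) : 0 < radO m := Nat.pos_of_mul_pos_left (rad_pos m)

lemma radE_dvd (m : ℕ) : radE m ∣ m := (dvd_mul_right _ _).trans (rad_dvd m)

lemma radO_dvd (m : ℕ) : radO m ∣ m := (dvd_mul_left _ _).trans (rad_dvd m)

lemma radO_coprime_radE (m : ℕ) : Nat.Coprime (radO m) (radE m) := by
  refine Nat.Coprime.prod_left fun p hp => Nat.Coprime.prod_right fun q hq => ?_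
  rw [Finset.mem_filter] at hp hq
  rw [Nat.coprime_primes (Nat.prime_of_mem_primeFactors hp.1) (Nat.prime_of_mem_primeFactors hq.1)]
  rintro rfl
  exact Nat.not_even_iff_odd.mpr hp.2 hq.2

lemma eq_radO_mul_sq {m : ℕ} (hm : m ≠ 0) : ∃ w, m = radO m * w ^ 2 := by
  refine ⟨∏ p ∈ m.primeFactors, p ^ (m.factorization p / 2), ?_⟩
  conv_lhs => rw [← Nat.prod_factorization_pow_eq_self hm]
  rw [radO, Finset.prod_filter, ← Finset.prod_pow, ← Finset.prod_mul_distrib, Finsupp.prod,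
    Nat.support_factorization]
  refine Finset.prod_congr rfl fun p _ => ?_
  split_ifs with h
  · obtain ⟨k, hk⟩ := h
    rw [hk, ← pow_mul, ← pow_succ']; congr 1; lia
  · obtain ⟨k, hk⟩ := Nat.not_odd_iff_even.mp h
    rw [hk, one_mul, ← pow_mul]; congr 1; lia

/-- The character `(· | m)` is induced from the modulus `rad m`. -/
lemma jac_rad {m : ℕ} (hm : m ≠ 0) (b : ℕ) :
    (jacobiSym b m : ℂ) = jacobiSym b (radO m) * if Nat.Coprime b (radE m) then 1 else 0 := by
  have := NeZero.mk hm
  by_cases hb : Nat.Coprime b m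
  · obtain ⟨w, hw⟩ := eq_radO_mul_sq hm
    have hw0 : w ≠ 0 := by rintro rfl; simp at hw; exact hm hw
    have hbw : Nat.Coprime b w := hb.coprime_dvd_right (by
      conv_rhs => rw [hw]
      exact (dvd_pow_self w two_ne_zero).mul_left _)
    rw [if_pos (hb.coprime_dvd_right (radE_dvd m)), mul_one]
    conv_lhs => rw [hw]
    rw [jacobiSym.mul_right' _ (radO_pos m).ne' (pow_ne_zero 2 hw0), jacobiSym.pow_right,
      Int.cast_mul, Int.cast_pow, jac_sq_one (Nat.isCoprime_iff_coprime.mpr hbw), mul_one]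
  · rw [jacobiSym.eq_zero_iff_not_coprime.mpr (by rwa [Int.gcd_natCast_natCast]), Int.cast_zero]
    split_ifs with hE
    · have : NeZero (radO m) := NeZero.of_pos (radO_pos m)
      rw [jacobiSym.eq_zero_iff_not_coprime.mpr, Int.cast_zero, zero_mul]
      rw [Int.gcd_natCast_natCast]
      intro hO
      obtain ⟨p, hp, hpb, hpm⟩ := Nat.Prime.not_coprime_iff_dvd.mp hb
      have hpr : p ∣ rad m := by
        rw [rad_eq]
        exact Finset.dvd_prod_of_mem _ (Nat.mem_primeFactors.mpr ⟨hp, hpm, hm⟩)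
      exact Nat.Prime.not_coprime_iff_dvd.mpr ⟨p, hp, hpb, hpr⟩ (Nat.Coprime.mul_right hE hO)
    · rw [mul_zero]

lemma jac_rad_periodic {m : ℕ} (hm : m ≠ 0) (b k : ℕ) :
    (jacobiSym ((b + k * rad m : ℕ) : ℤ) m : ℂ) = jacobiSym b m := by
  have h1 : jacobiSym ((b + k * rad m : ℕ) : ℤ) (radO m) = jacobiSym b (radO m) := by
    rw [rad, show b + k * (radE m * radO m) = b + radO m * (k * radE m) by ring, jac_add_mul]
  have h2 : Nat.Coprime (b + k * rad m) (radE m) ↔ Nat.Coprime b (radE m) := by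
    rw [rad, show b + k * (radE m * radO m) = b + radE m * (k * radO m) by ring,
      Nat.coprime_add_mul_left_left]
  simp only [jac_rad hm, h1, h2]

/-- The sum over a full period of the induced character factors into a Gauss sum and a
Ramanujan sum. -/
lemma charSum_rad {m : ℕ} (hm : m ≠ 0) (k : ℤ) :
    charSum (fun b => (jacobiSym b m : ℂ)) (rad m) k =
      jacobiSym (radE m) (radO m) * gs (radO m) k * rs (radE m) k := by
  have hco := radO_coprime_radE m
  rw [rad, mul_comm (radE m)]
  refine charSum_mul (radO_pos m) (radE_pos m) hco (fun b => ?_) (fun x y => ?_) k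
  · have := jac_rad_periodic hm b 1
    rw [one_mul, rad, mul_comm (radE m)] at this
    exact this
  · have h2 : Nat.Coprime (radE m * x + radO m * y) (radE m) ↔ Nat.Coprime y (radE m) := by
      rw [add_comm, Nat.coprime_add_mul_left_left, Nat.coprime_mul_iff_left]
      exact and_iff_right hco
    simp only [jac_rad hm, h2]
    rw [jac_add_mul, Nat.cast_mul, jacobiSym.mul_left, Int.cast_mul]

lemma sum_periodic {R : ℕ} (e : ℕ) {F : ℕ → ℂ} (hF : ∀ b, F (b + R) = F b) :
    ∑ b ∈ Finset.range (R * e), F b = e * ∑ b ∈ Finset.range R, F b := by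
  induction e with
  | zero => simp
  | succ e ih =>
    have hp : Function.Periodic F R := hF
    rw [Nat.mul_succ, Finset.sum_range_add, ih]
    have : ∀ b, F (R * e + b) = F b := fun b => by
      rw [add_comm, mul_comm]; exact hp.nat_mul e b
    simp only [this]
    push_cast; ring

lemma expSum_odd {r a d : ℕ} (hr : Odd r) (hd : 0 < d) (j : ℤ) :
    expSum r a d j = ∑ b ∈ Finset.range d, (jacobiSym b (Nat.gcd a d) : ℂ) * e2 ((b : ℂ) * j / d) := by
  have : NeZero (Nat.gcd a d) := NeZero.of_pos (Nat.gcd_pos_of_pos_right _ hd)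
  rw [expSum, cop, Finset.sum_filter]
  refine Finset.sum_congr rfl fun b _ => ?_
  split_ifs with hb
  · obtain ⟨s, rfl⟩ := hr
    rw [pow_succ, pow_mul, jac_sq_one (Nat.isCoprime_iff_coprime.mpr hb).symm, one_pow, one_mul]
  · rw [jacobiSym.eq_zero_iff_not_coprime.mpr, Int.cast_zero, zero_mul]
    rwa [Int.gcd_natCast_natCast, Nat.gcd_comm]

/-- The twist has period `rad (gcd (a, d))`, which sharpens `expSum_ne_zero` for odd `r`. -/
lemma expSum_odd_dvd {r a d : ℕ} (hr : Odd r) (hd : 0 < d) {j : ℤ} (h : expSum r a d j ≠ 0) :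
    (d : ℤ) ∣ rad (Nat.gcd a d) * j := by
  have hg : Nat.gcd a d ≠ 0 := (Nat.gcd_pos_of_pos_right _ hd).ne'
  have hd' : (d : ℂ) ≠ 0 := by exact_mod_cast hd.ne'
  set R := rad (Nat.gcd a d) with hR
  rw [expSum_odd hr hd] at h
  set F : ℕ → ℂ := fun b => (jacobiSym b (Nat.gcd a d) : ℂ) * e2 ((b : ℂ) * j / d) with hF
  have hJd : ∀ b, (jacobiSym ((b + d : ℕ) : ℤ) (Nat.gcd a d) : ℂ) = jacobiSym b (Nat.gcd a d) := by
    intro b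
    obtain ⟨q, hq⟩ := Nat.gcd_dvd_right a d
    have := jac_add_mul b (Nat.gcd a d) q
    rw [← hq] at this
    rw [this]
  have hper : Function.Periodic F d := charSum_periodic
    (f := fun b => (jacobiSym b (Nat.gcd a d) : ℂ)) hd hJd j
  have hshift : ∀ b, F (b + R) = e2 ((R : ℂ) * j / d) * F b := by
    intro b
    have := jac_rad_periodic hg b 1
    rw [one_mul] at this
    simp only [hF]
    rw [this, show (((b + R : ℕ) : ℂ) * j / d) = (R : ℂ) * j / d + b * j / d by push_cast; ring, e2_add]
    ring
  have hsum : ∑ b ∈ Finset.range d, F (b + R) = ∑ b ∈ Finset.range d, F b := by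
    have := sum_cop_shift (a := 1) hd R (by simp) F hper
    simpa [cop] using this
  simp only [hshift, ← Finset.mul_sum] at hsum
  have h1 : e2 ((R : ℂ) * j / d) = 1 := mul_right_cancel₀ h (by rw [hsum, one_mul])
  obtain ⟨q, hq⟩ := (e2_eq_one_iff _).mp h1
  rw [div_eq_iff hd'] at hq
  exact ⟨q, by rw [mul_comm (d : ℤ)]; exact_mod_cast hq⟩

lemma expSum_odd_eq {r a d : ℕ} (hr : Odd r) (hd : 0 < d) {j k : ℤ}
    (h : rad (Nat.gcd a d) * j = d * k) :
    expSum r a d j = (d : ℂ) / rad (Nat.gcd a d) *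
      (jacobiSym (radE (Nat.gcd a d)) (radO (Nat.gcd a d)) * gs (radO (Nat.gcd a d)) k *
        rs (radE (Nat.gcd a d)) k) := by
  have hg : Nat.gcd a d ≠ 0 := (Nat.gcd_pos_of_pos_right _ hd).ne'
  have hd' : (d : ℂ) ≠ 0 := by exact_mod_cast hd.ne'
  have hR : 0 < rad (Nat.gcd a d) := rad_pos _
  have hR' : (rad (Nat.gcd a d) : ℂ) ≠ 0 := by exact_mod_cast hR.ne'
  obtain ⟨e, he⟩ := (rad_dvd (Nat.gcd a d)).trans (Nat.gcd_dvd_right a d)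
  have heC : (d : ℂ) = rad (Nat.gcd a d) * e := by exact_mod_cast he
  have hjk : (j : ℂ) / d = k / rad (Nat.gcd a d) := by
    rw [div_eq_div_iff hd' hR']
    have : (rad (Nat.gcd a d) : ℂ) * j = d * k := by exact_mod_cast h
    linear_combination this
  have hper : ∀ b, (jacobiSym ((b + rad (Nat.gcd a d) : ℕ) : ℤ) (Nat.gcd a d) : ℂ) =
      jacobiSym b (Nat.gcd a d) := fun b => by
    have := jac_rad_periodic hg b 1
    rwa [one_mul] at this
  have hde : (d : ℂ) / rad (Nat.gcd a d) = e := by rw [heC, mul_div_cancel_left₀ _ hR']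
  have hterm : ∀ b : ℕ, e2 ((b : ℂ) * j / d) = e2 ((b : ℂ) * k / rad (Nat.gcd a d)) := fun b => by
    rw [mul_div_assoc, hjk, mul_div_assoc]
  rw [expSum_odd hr hd, ← charSum_rad hg, hde, charSum]
  simp only [hterm]
  have hsum := sum_periodic e (F := fun b : ℕ => (jacobiSym b (Nat.gcd a d) : ℂ) *
      e2 ((b : ℂ) * k / rad (Nat.gcd a d)))
    (charSum_periodic (f := fun b => (jacobiSym b (Nat.gcd a d) : ℂ)) hR hper k)
  rwa [← he] at hsum

lemma odd_of_dvd {r l : ℕ} (hr : Odd r) (h24 : (24 : ℤ) ∣ r * ((l : ℤ) - 1)) : Odd l := by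
  rcases odd_or_eight_dvd (C := (l : ℤ)) (x := 1) (by rwa [mul_one]) with h | h
  · exact_mod_cast h
  · exact absurd ((even_iff_two_dvd.mpr ((by norm_num : 2 ∣ 8).trans h))) (Nat.not_even_iff_odd.mpr hr)

/-- The root of unity in `hCoef` combines with the sign of the Gauss sum to a Jacobi symbol. -/
lemma phase_odd_term {d s w u : ℕ} (hd : Odd d) (hw : d = w * u ^ 2) :
    ze (3 * (2 * s + 1 : ℕ) * ((d : ℤ) - 1)) * ((jacobiSym 2 w : ℂ) * ze (-(3 * ((w : ℤ) - 1)))) =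
      (jacobiSym (2 * (-1) ^ s) d : ℂ) := by
  have hodd := hd
  rw [hw, Nat.odd_mul, Nat.odd_pow_iff two_ne_zero] at hodd
  obtain ⟨ow, ou⟩ := hodd
  have h2 : jacobiSym 2 d = jacobiSym 2 w := by
    rw [hw, jacobiSym.mul_right' _ ow.pos.ne' (pow_ne_zero 2 ou.pos.ne'), jacobiSym.pow_right,
      jacobiSym.sq_one, mul_one]
    exact_mod_cast (Nat.coprime_two_left.mpr ou)
  rw [jacobiSym.mul_left, jacobiSym.pow_left, h2, Int.cast_mul, Int.cast_pow, jac_neg_one hd, ze_pow,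
    mul_left_comm, ← ze_add]
  congr 1
  refine ze_congr ?_
  obtain ⟨x, rfl⟩ := ow
  obtain ⟨y, rfl⟩ := ou
  obtain ⟨z, hz⟩ : ∃ z : ℤ, (y : ℤ) * (y + 1) = 2 * z := by
    obtain ⟨z, hz⟩ := Int.even_mul_succ_self y
    exact ⟨z, by linear_combination hz⟩
  refine ⟨(2 * x + 1) * z, ?_⟩
  rw [hw]
  push_cast
  linear_combination 12 * (2 * (x : ℤ) + 1) * hz

lemma cpow_half (r a : ℕ) : (a : ℂ) ^ (((((r : ℤ) : ℝ) / 2 : ℝ)) : ℂ) = ((√a : ℝ) : ℂ) ^ r := by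
  have h : ((a : ℝ) ^ (((r : ℤ) : ℝ) / 2)) = √a ^ r := by
    rw [Real.sqrt_eq_rpow, ← Real.rpow_natCast, ← Real.rpow_mul (Nat.cast_nonneg a)]
    congr 1; push_cast; ring
  rw [← Complex.ofReal_natCast, ← Complex.ofReal_cpow (Nat.cast_nonneg a), h]
  push_cast; rfl

/-- The divisibility condition in the definition of `R(n; r, l)` for odd `r` removes only vanishing
terms. -/
lemma hCoef_odd_dvd {P : ℚ → ℂ} {r a d l : ℕ} {n : ℤ} (hP : IsEtaPowerCoeffs r P) (hr : Odd r)
    (ha : 0 < a) (hd : 0 < d) (hl : l = a * d) (h24 : (24 : ℤ) ∣ r * ((l : ℤ) - 1))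
    (h : hCoef P r a d n ≠ 0) :
    ((24 * a : ℕ) : ℤ) ∣ (rad (Nat.gcd a d) : ℤ) * (n - (r : ℤ) * l) := by
  have h24' : (24 : ℤ) ∣ r * ((a : ℤ) * d - 1) := by rw [hl] at h24; exact_mod_cast h24
  have h0 : P (((n : ℚ) * d / a - r) / 24) ≠ 0 := right_ne_zero_of_mul h
  obtain ⟨k, j, hj, hn, hN, hk⟩ := exists_kj hP ha h24' h0
  rw [hCoef_eq ha hd hj hn] at h
  obtain ⟨q, hq⟩ := expSum_odd_dvd hr hd (right_ne_zero_of_mul (left_ne_zero_of_mul h))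
  have hd' : (d : ℤ) ≠ 0 := by exact_mod_cast hd.ne'
  refine ⟨q, mul_left_cancel₀ hd' ?_⟩
  rw [hl]; push_cast
  linear_combination (rad (Nat.gcd a d) : ℤ) * hN + 24 * (a : ℤ) * hq

/-- The final rearrangement in `odd_term`: `O` stands for `√rad_O` and `E` for `rad_E`. -/
lemma odd_term_algebra {x y z J c A D O E p W : ℂ} (hO : O ≠ 0) (hE : E ≠ 0) :
    x * (y * z) * J * (D * A / (E * O)) * p * c * W =
      A * x * (D / (E * O ^ 2) * (J * (c * (O * y * z)) * W)) * p := by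
  field_simp

/-- The summand of `R(n; r, l)` for odd `r`, with `l = a d`. -/
lemma odd_term {P : ℚ → ℂ} {r a d l : ℕ} {n : ℤ} (hP : IsEtaPowerCoeffs r P) (hr : Odd r)
    (ha : 0 < a) (hd : 0 < d) (hl : l = a * d) (h24 : (24 : ℤ) ∣ r * ((l : ℤ) - 1))
    (hsq : IsSquare l)
    (h : ((24 * a : ℕ) : ℤ) ∣ (rad (Nat.gcd a d) : ℤ) * (n - (r : ℤ) * l)) :
    (kron (2 * (((-1 : ℤˣ) ^ (((r : ℤ) - 1) / 2) : ℤˣ) : ℤ)) ((d : ℕ) : ℤ) : ℂ) *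
      (kron (radE (Nat.gcd a d) : ℤ) (radO (Nat.gcd a d) : ℤ) : ℂ) *
      (((d : ℕ) : ℂ) * (a : ℂ) ^ (((((r : ℤ) : ℝ) / 2 : ℝ)) : ℂ) /
        ((Real.sqrt (radP (Nat.gcd a d)) : ℝ) : ℂ)) *
      P (((n : ℚ) * (l : ℚ) / (a : ℚ) ^ 2 - ((r : ℤ) : ℚ)) / 24) *
      (kron ((rad (Nat.gcd a d) : ℤ) * (n - (r : ℤ) * l) / (24 * a)) (radO (Nat.gcd a d) : ℤ) : ℂ) *
      ∏ p ∈ (radE (Nat.gcd a d)).primeFactors,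
        ((p : ℂ) - 1 -
          (p : ℂ) * (kron ((rad (Nat.gcd a d) : ℤ) * (n - (r : ℤ) * l) / (24 * a)) (p : ℤ) : ℂ) ^ 2) =
      hCoef P r a d n := by
  have h24' : (24 : ℤ) ∣ r * ((a : ℤ) * d - 1) := by rw [hl] at h24; exact_mod_cast h24
  rw [coeff_arg ha hl, Int.cast_natCast (R := ℚ)]
  by_cases h0 : P (((n : ℚ) * d / a - r) / 24) = 0
  · simp [hCoef, h0]
  obtain ⟨k, j, hj, hn, hN, hk⟩ := exists_kj hP ha h24' h0
  have hlodd := odd_of_dvd hr h24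
  rw [hl] at hlodd
  obtain ⟨hao, hdo⟩ := Nat.odd_mul.mp hlodd
  obtain ⟨g, _, u, _, _, hg, -, hdu, -⟩ := square_factors (a₁ := d) (a₂ := 1) (C := a) hd one_pos
    (Nat.coprime_one_right d) (by rw [mul_one, ← hl]; exact hsq)
  rw [Nat.gcd_comm] at hg
  have hg0 : Nat.gcd a d ≠ 0 := (Nat.gcd_pos_of_pos_right _ hd).ne'
  have hgo : Odd (Nat.gcd a d) := hdo.of_dvd_nat (Nat.gcd_dvd_right a d)
  obtain ⟨q, hq⟩ := h
  have ha' : (24 * a : ℤ) ≠ 0 := by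
    have : (a : ℤ) ≠ 0 := by exact_mod_cast ha.ne'
    simpa using this
  have hquot : (rad (Nat.gcd a d) : ℤ) * (n - (r : ℤ) * l) / (24 * a) = q := by
    rw [hq]; push_cast
    exact Int.mul_ediv_cancel_left _ ha'
  have hdvd : (rad (Nat.gcd a d) : ℤ) * j = d * q := by
    apply mul_left_cancel₀ ha'
    rw [hl] at hq; push_cast at hq
    linear_combination (d : ℤ) * hq - (rad (Nat.gcd a d) : ℤ) * hN
  rw [hquot, hCoef_eq ha hd hj hn, hk, expSum_odd_eq hr hd hdvd, cpow_half]
  obtain ⟨w, hw⟩ := eq_radO_mul_sq hg0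
  have hdw : d = radO (Nat.gcd a d) * (w * u) ^ 2 := by
    conv_lhs => rw [hdu, ← hg, hw]
    ring
  generalize hG : Nat.gcd a d = G at *
  have hOo : Odd (radO G) := hgo.of_dvd_nat (radO_dvd G)
  have hEp : ∀ p ∈ G.primeFactors, p.Prime ∧ p ≠ 2 := fun p hp =>
    ⟨Nat.prime_of_mem_primeFactors hp, by
      rintro rfl
      exact absurd (hgo.of_dvd_nat (Nat.dvd_of_mem_primeFactors hp)) (by decide)⟩
  have hgs : gs (radO G) q = (jacobiSym q (radO G) : ℂ) * (((√(radO G : ℝ) : ℝ) : ℂ) *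
      (jacobiSym 2 (radO G) : ℂ) * ze (-(3 * ((radO G : ℤ) - 1)))) :=
    gs_prod q _ fun p hp => hEp p (Finset.mem_of_mem_filter p hp)
  have hrs : rs (radE G) q = ∏ p ∈ (radE G).primeFactors,
      ((p : ℂ) - 1 - (p : ℂ) * (kron q (p : ℤ) : ℂ) ^ 2) := by
    have hEpr : ∀ p ∈ G.primeFactors.filter (fun p => Even (G.factorization p)), p.Prime :=
      fun p hp => (hEp p (Finset.mem_of_mem_filter p hp)).1
    rw [radE, rs_prod q _ hEpr, Nat.primeFactors_prod hEpr]
    refine Finset.prod_congr rfl fun p hp => ?_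
    obtain ⟨hp1, hp2⟩ := hEp p (Finset.mem_of_mem_filter p hp)
    rw [kron_eq_jacobiSym q (hp1.odd_of_ne_two hp2)]
  obtain ⟨s, rfl⟩ := hr
  have hunit : (((-1 : ℤˣ) ^ ((((2 * s + 1 : ℕ) : ℤ) - 1) / 2) : ℤˣ) : ℤ) = (-1) ^ s := by
    rw [show (((2 * s + 1 : ℕ) : ℤ) - 1) / 2 = (s : ℤ) by push_cast; omega, zpow_natCast]
    push_cast; rfl
  have hphase := phase_odd_term (s := s) hdo hdw
  have hO : ((√(radO G : ℝ) : ℝ) : ℂ) ^ 2 = radO G := sqrt_pow_sq _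
  have hO0 : ((√(radO G : ℝ) : ℝ) : ℂ) ≠ 0 := by
    intro h
    rw [h] at hO
    exact (radO_pos G).ne' (by exact_mod_cast hO.symm.trans (zero_pow two_ne_zero))
  have hE0 : (radE G : ℂ) ≠ 0 := by exact_mod_cast (radE_pos G).ne'
  have hradP : ((√(radP G : ℝ) : ℝ) : ℂ) = radE G * ((√(radO G : ℝ) : ℝ) : ℂ) := by
    rw [radP, Nat.cast_mul, Nat.cast_pow, Real.sqrt_mul (by positivity),
      Real.sqrt_sq (Nat.cast_nonneg _)]
    push_cast; rfl
  rw [hgs, hrs, hunit, kron_eq_jacobiSym _ hdo, kron_eq_jacobiSym _ hOo, kron_eq_jacobiSym _ hOo,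
    ← hphase, hradP, rad, Nat.cast_mul, ← hO]
  exact odd_term_algebra hO0 hE0

/-! ### The coefficients of the Hecke-type sum and `R(n; r, l)` -/

/-- `R(n; r, l)` is the `n`-th coefficient of the Hecke sum of `η ^ r`. -/
lemma Rquantity_eq {P : ℚ → ℂ} {r l : ℕ} (hP : IsEtaPowerCoeffs r P) (hl : 0 < l)
    (h24 : (24 : ℤ) ∣ r * ((l : ℤ) - 1)) (hsq : Odd r → IsSquare l) (n : ℤ) :
    Rquantity P n r l = totalCoef P r l n := by
  have hdiv : ∀ a ∈ l.divisors, 0 < a ∧ 0 < l / a ∧ l = a * (l / a) := fun a ha => by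
    have hal := (Nat.mem_divisors.mp ha).1
    exact ⟨Nat.pos_of_dvd_of_pos hal hl,
      Nat.div_pos (Nat.le_of_dvd hl hal) (Nat.pos_of_dvd_of_pos hal hl),
      (Nat.mul_div_cancel' hal).symm⟩
  rw [Rquantity, totalCoef]
  split_ifs with hr
  · refine Finset.sum_congr rfl fun a ha => ?_
    obtain ⟨h0, h1, h2⟩ := hdiv a ha
    exact even_term hP (by exact_mod_cast hr) h0 h1 h2 h24
  · have hr' : Odd r := Nat.not_even_iff_odd.mp (by exact_mod_cast hr)
    have hfilter := Finset.sum_filter_of_ne (s := l.divisors)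
      (f := fun a => hCoef P r a (l / a) n) (p := fun a : ℕ => ((24 * a : ℕ) : ℤ) ∣
        (rad (Nat.gcd a (l / a)) : ℤ) * (n - (r : ℤ) * l)) fun a ha hne => by
      obtain ⟨h0, h1, h2⟩ := hdiv a ha
      exact hCoef_odd_dvd hP hr' h0 h1 h2 h24 hne
    rw [Rodd, ← hfilter]
    refine Finset.sum_congr rfl fun a ha => ?_
    obtain ⟨ha, hdvd⟩ := Finset.mem_filter.mp ha
    obtain ⟨h0, h1, h2⟩ := hdiv a ha
    exact odd_term hP hr' h0 h1 h2 h24 (hsq hr') hdvd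

end Paper

/-!
STATEMENT 18: Suppose r ∈ {0, 1, …, 24} and l is a positive integer with 24 | r(l−1);
if r is odd suppose additionally that l is a perfect square.  Then for every integer n,
R(n; r, l) = R(r; r, l)·P_r((n−r)/24), with R as defined above.
-/

open Paper in
theorem generalized_newman_relation (r : ℤ) (hr0 : 0 ≤ r) (hr24 : r ≤ 24)
    (l : ℕ) (hl : 0 < l)
    (hdvd : (24 : ℤ) ∣ r * ((l : ℤ) - 1)) (hodd : Odd r → IsSquare l)
    (P : ℚ → ℂ) (hP : IsEtaPowerCoeffs r P) :
    ∀ n : ℤ, Rquantity P n r l = Rquantity P r r l * P (((n - r : ℤ) : ℚ) / 24) := by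
  intro n
  lift r to ℕ using hr0
  have hr : r ≤ 24 := by exact_mod_cast hr24
  have hsq : Odd r → IsSquare l := fun h => hodd (by exact_mod_cast h)
  rw [Rquantity_eq hP hl hdvd hsq, Rquantity_eq hP hl hdvd hsq]
  by_cases h : ∃ m : ℕ, n = r + 24 * m
  · obtain ⟨m, rfl⟩ := h
    rw [totalCoef_eq hP hr hl hdvd hsq]
    congr 2
    push_cast
    ring
  · rw [hP.1, mul_zero]
    · by_contra h0
      exact h (totalCoef_ne_zero hP hr hl hdvd h0)
    · rintro ⟨m, hm⟩
      refine h ⟨m, ?_⟩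
      rw [div_eq_iff (by norm_num)] at hm
      have : n - r = m * 24 := by exact_mod_cast hm
      linarith
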